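/- arXiv:1810.10849 — 4 statements merged into one kernel-verified Lean document; each statement's English description precedes it below -/
import Mathlib

section
/- There is a constant C = C(d) > 0 with the following property: for every u₀ ∈ L²(ℝ^d) with ∫_{ℝ^d} (1+|x|)² |u₀(x)|² dx < ∞, and for every T > 0, N > 0 and r ≥ 1, there exists R ∈ L²(ℝ^d) with ‖R‖ ≤ C (1 + (TN²)^{-d/4}) ( e^{-TN²} + (1 + T^{d/2})(1 + T^{-1/2}) r^{-1} ) (∫_{ℝ^d} (1+|x|)² |u₀(x)|² dx)^{1/2} such that u(T,·) = Σ_{n∈ℤ^d, |n/N| < r} u(T, n/N) f_{N,n} + R in L²(ℝ^d), where u is the heat solution with initial datum u₀ and the sum ranges over the finitely many n ∈ ℤ^d with |n/N| < r. -/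
open MeasureTheory Filter Topology Metric ENNReal NNReal

noncomputable section

/-- `sinc` with value 1 at 0. -/
def sinc' (x : ℝ) : ℝ := if x = 0 then 1 else Real.sin x / x

/-- The function `f_{N,n}(x) = ∏_j sin (π (N x_j - n_j)) / (π (N x_j - n_j))`. -/
def fN (d : ℕ) (N : ℝ) (n : Fin d → ℤ) (x : EuclideanSpace ℝ (Fin d)) : ℝ :=
  ∏ j, sinc' (Real.pi * (N * x j - n j))

/-- The lattice point `n / N` in `ℝ^d`. -/
def latticePt (d : ℕ) (N : ℝ) (n : Fin d → ℤ) : EuclideanSpace ℝ (Fin d) :=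
  WithLp.toLp 2 fun j => (n j : ℝ) / N

/-- The heat solution at time `t > 0` with initial datum `u₀ ∈ L²(ℝ^d)`:
`u(t,x) = (4πt)^{-d/2} ∫ e^{-|x-y|²/(4t)} u₀(y) dy`. -/
def heatSol (d : ℕ) (u₀ : EuclideanSpace ℝ (Fin d) → ℝ) (t : ℝ)
    (x : EuclideanSpace ℝ (Fin d)) : ℝ :=
  (4 * Real.pi * t) ^ (-(d : ℝ) / 2) * ∫ y, Real.exp (-‖x - y‖ ^ 2 / (4 * t)) * u₀ y

/-- The family `F` is summable in `L²(ℝ^d)` with sum `g`: the finite partial sums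
converge to `g` in the `L²` norm along the filter of finite subsets of `ℤ^d`. -/
def HasSumL2 (d : ℕ) {V : Type} [NormedAddCommGroup V]
    (F : (Fin d → ℤ) → EuclideanSpace ℝ (Fin d) → V)
    (g : EuclideanSpace ℝ (Fin d) → V) : Prop :=
  Tendsto (fun s : Finset (Fin d → ℤ) =>
    eLpNorm (fun x => g x - ∑ n ∈ s, F n x) 2 volume) atTop (𝓝 0)

/-- The closed cube `Q_r(0)` in `ℝ^d`, centered at the origin, of side length `2r`. -/
def Qcube (d : ℕ) (r : ℝ) : Set (EuclideanSpace ℝ (Fin d)) := {ξ | ∀ j, |ξ j| ≤ r}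

/-- The truncated Fourier integral, with the paper's normalization
`(2π)^{-d/2} ∫_{|x| ≤ R} e^{-i x·ξ} f(x) dx`. -/
def truncFT (d : ℕ) (f : EuclideanSpace ℝ (Fin d) → ℂ) (R : ℝ)
    (ξ : EuclideanSpace ℝ (Fin d)) : ℂ :=
  (((2 * Real.pi) ^ (-(d : ℝ) / 2) : ℝ) : ℂ) *
    ∫ x in closedBall (0 : EuclideanSpace ℝ (Fin d)) R,
      Complex.exp (-(Complex.I * ((inner ℝ x ξ : ℝ) : ℂ))) * f x

/-- `fhat` is the Fourier transform of `f ∈ L²(ℝ^d)` in the `L²` (Plancherel) sense: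
`fhat ∈ L²` and the Fourier integrals of the truncations of `f` converge to `fhat`
in the `L²` norm. -/
def IsL2Fourier (d : ℕ) (f fhat : EuclideanSpace ℝ (Fin d) → ℂ) : Prop :=
  MemLp fhat 2 volume ∧
    Tendsto (fun R : ℝ => eLpNorm (fun ξ => fhat ξ - truncFT d f R ξ) 2 volume)
      atTop (𝓝 0)

/-- The `L²(ℝ^d)` norm of a function, as a real number. -/
def l2norm (d : ℕ) {V : Type} [NormedAddCommGroup V]
    (f : EuclideanSpace ℝ (Fin d) → V) : ℝ :=
  (eLpNorm f 2 volume).toReal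

open scoped FourierTransform in
lemma fourier_L2_ae {d : ℕ} {g : EuclideanSpace ℝ (Fin d) → ℂ} (h1 : Integrable g)
    (h2 : MemLp g 2 volume) :
    ((𝓕 (h2.toLp g) : Lp ℂ 2 (volume : Measure (EuclideanSpace ℝ (Fin d)))) :
      EuclideanSpace ℝ (Fin d) → ℂ) =ᵐ[volume] 𝓕 g := by
  have hcont : Continuous (𝓕 g) := by
    exact VectorFourier.fourierIntegral_continuous Real.continuous_fourierChar
      (by exact continuous_inner) h1
  have hl1 : LocallyIntegrable (𝓕 (h2.toLp g) : Lp ℂ 2 (volume : Measure (EuclideanSpace ℝ (Fin d)))) volume :=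
    (Lp.memLp _).locallyIntegrable (by norm_num)
  apply ae_eq_of_integral_contDiff_smul_eq hl1 hcont.locallyIntegrable
  intro φ hφ hc
  have hg₁ : HasCompactSupport (Complex.ofRealCLM ∘ φ) := hc.comp_left rfl
  let ψ : SchwartzMap (EuclideanSpace ℝ (Fin d)) ℂ := hg₁.toSchwartzMap (by fun_prop)
  have hψ : ∀ x, ψ x = (φ x : ℂ) := fun x => rfl
  have h := congrArg (fun T => T ψ) (MeasureTheory.Lp.fourier_toTemperedDistribution_eq (h2.toLp g))
  simp only [TemperedDistribution.fourier_apply, MeasureTheory.Lp.toTemperedDistribution_apply] at h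
  have e1 : ∫ x, (𝓕 ψ) x • (h2.toLp g) x = ∫ x, (𝓕 (ψ : EuclideanSpace ℝ (Fin d) → ℂ)) x • g x := by
    apply integral_congr_ae
    filter_upwards [h2.coeFn_toLp] with x hx
    rw [hx]; rfl
  have e2 : ∫ x, (𝓕 (ψ : EuclideanSpace ℝ (Fin d) → ℂ)) x • g x = ∫ x, ψ x • 𝓕 g x := by
    have := VectorFourier.integral_fourierIntegral_smul_eq_flip (μ := volume) (ν := volume)
      (L := innerₗ (EuclideanSpace ℝ (Fin d))) (f := (ψ : EuclideanSpace ℝ (Fin d) → ℂ)) (g := g)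
      Real.continuous_fourierChar (by exact continuous_inner) ψ.integrable h1
    rw [flip_innerₗ] at this
    exact this
  rw [e1, e2] at h
  simp only [hψ] at h
  simpa using h.symm

lemma exp_neg_norm_sq_integrable {d : ℕ} {b : ℝ} (hb : 0 < b) :
    Integrable (fun v : EuclideanSpace ℝ (Fin d) => Real.exp (-(b * ‖v‖ ^ 2))) := by
  have := GaussianFourier.integrable_cexp_neg_mul_sq_norm_add (V := EuclideanSpace ℝ (Fin d))
    (b := (b : ℂ)) (by simpa using hb) 0 0
  have h2 := this.norm
  refine h2.congr (Eventually.of_forall fun v => ?_)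
  simp only [zero_mul, add_zero, Complex.norm_exp]
  congr 1
  rw [← Complex.ofReal_pow, ← Complex.ofReal_neg, ← Complex.ofReal_mul, Complex.ofReal_re]
  ring

open scoped FourierTransform in
lemma heat_fourier {d : ℕ} {u₀ : EuclideanSpace ℝ (Fin d) → ℝ} (hu : MemLp u₀ 2 volume) :
    ∃ v : EuclideanSpace ℝ (Fin d) → ℂ, StronglyMeasurable v ∧ MemLp v 2 volume ∧
      eLpNorm v 2 volume = eLpNorm u₀ 2 volume ∧ ∀ τ : ℝ, 0 < τ → ∀ x,
        (heatSol d u₀ τ x : ℂ) =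
          𝓕 (fun ξ => (Real.exp (-(4 * Real.pi ^ 2 * τ * ‖ξ‖ ^ 2)) : ℂ) * v ξ) x := by
  have huc : MemLp (fun x => (u₀ x : ℂ)) 2 volume := hu.ofReal
  set U := huc.toLp _ with hU
  set V : Lp ℂ 2 (volume : Measure (EuclideanSpace ℝ (Fin d))) := 𝓕⁻ U with hV
  have hFV : 𝓕 V = U := FourierTransform.fourier_fourierInv_eq U
  refine ⟨V, Lp.stronglyMeasurable V, Lp.memLp V, ?_, ?_⟩
  · have h1 : ‖V‖ = ‖U‖ := by rw [← hFV, Lp.norm_fourier_eq]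
    have h2 : eLpNorm V 2 volume = eLpNorm U 2 volume := by
      rw [Lp.norm_def, Lp.norm_def] at h1
      exact (ENNReal.toReal_eq_toReal_iff' (Lp.eLpNorm_ne_top _) (Lp.eLpNorm_ne_top _)).1 h1
    rw [h2, eLpNorm_congr_ae huc.coeFn_toLp]
    apply eLpNorm_congr_norm_ae
    exact Eventually.of_forall fun x => by simp
  · intro τ hτ x
    set b : ℝ := 4 * Real.pi ^ 2 * τ with hb
    have hbp : 0 < b := by positivity
    let h : EuclideanSpace ℝ (Fin d) → ℂ := fun v =>
      Complex.exp (-(b : ℂ) * ‖v‖ ^ 2 + 2 * Real.pi * Complex.I * (inner ℝ x v : ℝ))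
    have hnorm : ∀ v, ‖h v‖ = Real.exp (-(b * ‖v‖ ^ 2)) := by
      intro v
      simp only [h, Complex.norm_exp]
      congr 1
      simp [← Complex.ofReal_pow]
    have hcont : Continuous h := by fun_prop
    have h1 : Integrable h := by
      refine (exp_neg_norm_sq_integrable (d := d) hbp).mono' hcont.aestronglyMeasurable ?_
      exact Eventually.of_forall fun v => (hnorm v).le
    have h2 : MemLp h 2 volume := by
      rw [memLp_two_iff_integrable_sq_norm hcont.aestronglyMeasurable]
      refine (exp_neg_norm_sq_integrable (d := d) (b := 2 * b) (by positivity)).congr ?_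
      refine Eventually.of_forall fun v => ?_
      simp only [hnorm, ← Real.exp_nat_mul]
      congr 1; push_cast; ring
    have hin := Lp.inner_fourier_eq (h2.toLp h) V
    rw [hFV, L2.inner_def, L2.inner_def] at hin
    have e1 : ∫ a, inner ℂ ((h2.toLp h) a) (V a) =
        𝓕 (fun ξ => (Real.exp (-(b * ‖ξ‖ ^ 2)) : ℂ) * V ξ) x := by
      rw [Real.fourier_eq']
      apply integral_congr_ae
      filter_upwards [h2.coeFn_toLp] with a ha
      rw [ha]
      simp only [h, RCLike.inner_apply, smul_eq_mul, ← Complex.exp_conj]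
      rw [← mul_assoc, Complex.ofReal_exp, ← Complex.exp_add, mul_comm]
      congr 2
      simp only [map_add, map_mul, map_neg, map_pow, Complex.conj_ofReal, Complex.conj_I, map_ofNat]
      rw [real_inner_comm]
      push_cast
      ring
    have e2 : ∫ a, inner ℂ ((𝓕 (h2.toLp h) : Lp ℂ 2 (volume : Measure (EuclideanSpace ℝ (Fin d)))) a)
        (U a) = (heatSol d u₀ τ x : ℂ) := by
      rw [heatSol, Complex.ofReal_mul, ← integral_complex_ofReal, ← integral_const_mul]
      apply integral_congr_ae
      filter_upwards [fourier_L2_ae h1 h2, huc.coeFn_toLp] with a ha hb'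
      rw [ha, hb', fourier_gaussian_innerProductSpace' (by simpa using hbp)]
      have e3 : ((Real.pi / b : ℂ)) ^ ((Module.finrank ℝ (EuclideanSpace ℝ (Fin d)) : ℂ) / 2)
          = ((4 * Real.pi * τ) ^ (-(d : ℝ) / 2) : ℝ) := by
        rw [finrank_euclideanSpace_fin]
        have : (Real.pi / b : ℂ) = (((4 * Real.pi * τ)⁻¹ : ℝ) : ℂ) := by
          rw [← Complex.ofReal_div]
          congr 1
          rw [hb]; field_simp
        rw [this, neg_div, Real.rpow_neg (by positivity), ← Real.inv_rpow (by positivity),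
          Complex.ofReal_cpow (by positivity)]
        push_cast; rfl
      have e4 : Complex.exp (-(Real.pi : ℂ) ^ 2 * (‖x - a‖ : ℂ) ^ 2 / (b : ℂ))
          = (Real.exp (-‖x - a‖ ^ 2 / (4 * τ)) : ℝ) := by
        rw [Complex.ofReal_exp]
        congr 1
        have : (Real.pi : ℂ) ≠ 0 := by simp [Real.pi_ne_zero]
        have : (τ : ℂ) ≠ 0 := by simp [hτ.ne']
        rw [hb]; push_cast; field_simp
      rw [e3, e4, ← Complex.ofReal_mul, RCLike.inner_apply]
      simp only [map_mul, Complex.conj_ofReal, Complex.ofReal_mul]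
      ring
    rw [← e2, hin, e1]
/-- integer point -/
def zpt {d : ℕ} (n : Fin d → ℤ) : EuclideanSpace ℝ (Fin d) :=
  WithLp.toLp 2 fun j => (n j : ℝ)

/-- half-open unit cube -/
def QQ (d : ℕ) : Set (EuclideanSpace ℝ (Fin d)) :=
  {x | ∀ j, x j ∈ Set.Ioc (-(1/2) : ℝ) (-(1/2) + 1)}

lemma zpt_apply {d : ℕ} (n : Fin d → ℤ) (j : Fin d) : zpt n j = (n j : ℝ) := rfl

lemma QQ_meas (d : ℕ) : MeasurableSet (QQ d) := by
  rw [QQ, Set.ofPred_forall]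
  refine MeasurableSet.iInter fun j => ?_
  have : Measurable (fun x : EuclideanSpace ℝ (Fin d) => x j) := by fun_prop
  exact this measurableSet_Ioc

lemma QQ_exists {d : ℕ} (x : EuclideanSpace ℝ (Fin d)) : ∃! n : Fin d → ℤ, x - zpt n ∈ QQ d := by
  have h : ∀ j, ∃! m : ℤ, x j - m ∈ Set.Ioc (-(1/2) : ℝ) (-(1/2) + 1) := by
    intro j
    have := existsUnique_sub_zsmul_mem_Ioc (zero_lt_one (α := ℝ)) (x j) (-(1/2))
    simpa using this
  choose m hm hm' using h
  refine ⟨m, fun j => by simpa [zpt] using hm j, ?_⟩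
  intro y hy
  funext j
  exact hm' j (y j) (by simpa [zpt] using hy j)

/-- translate of cube -/
def QT {d : ℕ} (n : Fin d → ℤ) : Set (EuclideanSpace ℝ (Fin d)) := {x | x - zpt n ∈ QQ d}

lemma QT_meas {d : ℕ} (n : Fin d → ℤ) : MeasurableSet (QT n) := by
  have : Measurable (fun x : EuclideanSpace ℝ (Fin d) => x - zpt n) := by fun_prop
  exact this (QQ_meas d)

lemma QT_disj {d : ℕ} : Pairwise (Function.onFun Disjoint (QT (d := d))) := by
  intro n m hnm
  rw [Function.onFun, Set.disjoint_left]
  intro x hx hx'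
  exact hnm ((QQ_exists x).unique hx hx')

lemma QT_union {d : ℕ} : (⋃ n, QT (d := d) n) = Set.univ := by
  ext x
  simp only [Set.mem_iUnion, Set.mem_univ, iff_true]
  exact (QQ_exists x).exists

lemma QT_mp {d : ℕ} (n : Fin d → ℤ) :
    MeasurePreserving (fun x : EuclideanSpace ℝ (Fin d) => x + zpt n)
      (volume.restrict (QQ d)) (volume.restrict (QT n)) := by
  have := (measurePreserving_add_right (volume : Measure (EuclideanSpace ℝ (Fin d))) (zpt n)).restrict_preimage (QT_meas n)
  convert this using 2
  ext x
  simp [QT]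

lemma add_emb {d : ℕ} (n : Fin d → ℤ) :
    MeasurableEmbedding (fun x : EuclideanSpace ℝ (Fin d) => x + zpt n) :=
  measurableEmbedding_addRight _

lemma tile_lintegral {d : ℕ} (f : EuclideanSpace ℝ (Fin d) → ℝ≥0∞) :
    ∑' n : Fin d → ℤ, ∫⁻ x in QQ d, f (x + zpt n) = ∫⁻ x, f x := by
  rw [← setLIntegral_univ, ← QT_union, lintegral_iUnion QT_meas QT_disj]
  congr 1; funext n
  exact (QT_mp n).lintegral_comp_emb (add_emb n) f

lemma tile_integral {d : ℕ} {f : EuclideanSpace ℝ (Fin d) → ℂ} (hf : Integrable f) :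
    HasSum (fun n : Fin d → ℤ => ∫ x in QQ d, f (x + zpt n)) (∫ x, f x) := by
  rw [← setIntegral_univ, ← QT_union]
  have := hasSum_integral_iUnion QT_meas QT_disj (f := f) (μ := volume) hf.integrableOn
  have h2 : (fun n : Fin d → ℤ => ∫ x in QQ d, f (x + zpt n)) = fun n => ∫ x in QT n, f x := by
    funext n
    exact (QT_mp n).integral_comp (add_emb n) f
  rw [h2]; exact this

lemma tile_integrable {d : ℕ} {f : EuclideanSpace ℝ (Fin d) → ℂ} (hf : Integrable f)
    (n : Fin d → ℤ) : Integrable (fun x => f (x + zpt n)) (volume.restrict (QQ d)) :=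
  (hf.comp_add_right (zpt n)).integrableOn

lemma QQ_vol (d : ℕ) : volume (QQ d) = 1 := by
  have h : QQ d = (MeasurableEquiv.toLp 2 (Fin d → ℝ)).symm ⁻¹'
      (Set.univ.pi fun _ => Set.Ioc (-(1/2) : ℝ) (-(1/2) + 1)) := by
    ext x; simp [QQ]
  rw [h, (EuclideanSpace.volume_preserving_symm_measurableEquiv_toLp (Fin d)).measure_preimage
    (MeasurableSet.univ_pi fun _ => measurableSet_Ioc).nullMeasurableSet, Real.volume_pi_Ioc]
  simp

lemma QQ_norm {d : ℕ} {x : EuclideanSpace ℝ (Fin d)} (hx : x ∈ QQ d) : ‖x‖ ^ 2 ≤ d := by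
  rw [EuclideanSpace.norm_sq_eq]
  calc ∑ i, ‖x i‖ ^ 2 ≤ ∑ i : Fin d, (1 : ℝ) := by
        refine Finset.sum_le_sum fun i _ => ?_
        have := hx i
        rw [Real.norm_eq_abs, sq_abs]
        obtain ⟨h1, h2⟩ := this
        nlinarith
    _ = d := by simp

lemma QQ_far {d : ℕ} {x : EuclideanSpace ℝ (Fin d)} (hx : x ∉ QQ d) : 1 / 4 ≤ ‖x‖ ^ 2 := by
  simp only [QQ, Set.mem_ofPred_eq, not_forall] at hx
  obtain ⟨j, hj⟩ := hx
  have h1 : ‖x j‖ ^ 2 ≤ ‖x‖ ^ 2 := by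
    have := PiLp.norm_apply_le x j
    gcongr
  refine le_trans ?_ h1
  rw [Real.norm_eq_abs, sq_abs]
  simp only [Set.mem_Ioc, not_and_or, not_lt, not_le] at hj
  rcases hj with h | h <;> nlinarith

lemma lattice_gauss_small {d : ℕ} {σ : ℝ} (hσ : 0 < σ) (hσ1 : σ ≤ 1) (y : EuclideanSpace ℝ (Fin d)) :
    ∑' n : Fin d → ℤ, ENNReal.ofReal (Real.exp (-(σ * ‖zpt n - y‖ ^ 2))) ≤
      ENNReal.ofReal (Real.exp d * (2 * Real.pi) ^ ((d : ℝ) / 2) * σ ^ (-(d : ℝ) / 2)) := by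
  have key : ∀ n : Fin d → ℤ, ENNReal.ofReal (Real.exp (-(σ * ‖zpt n - y‖ ^ 2))) ≤
      ∫⁻ x in QQ d, ENNReal.ofReal (Real.exp d * Real.exp (-(σ / 2 * ‖(x + zpt n) - y‖ ^ 2))) := by
    intro n
    calc ENNReal.ofReal (Real.exp (-(σ * ‖zpt n - y‖ ^ 2)))
        = ∫⁻ x in QQ d, ENNReal.ofReal (Real.exp (-(σ * ‖zpt n - y‖ ^ 2))) := by
          rw [setLIntegral_const, QQ_vol, mul_one]
      _ ≤ _ := by
          refine setLIntegral_mono' (QQ_meas d) fun x hx => ?_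
          apply ENNReal.ofReal_le_ofReal
          rw [← Real.exp_add]
          apply Real.exp_le_exp.2
          have h1 : ‖(x + zpt n) - y‖ ^ 2 ≤ 2 * ‖x‖ ^ 2 + 2 * ‖zpt n - y‖ ^ 2 := by
            have : x + zpt n - y = x + (zpt n - y) := by abel
            rw [this]
            have := norm_add_le x (zpt n - y)
            nlinarith [norm_nonneg (x + (zpt n - y)), sq_nonneg (‖x‖ - ‖zpt n - y‖)]
          have h2 := QQ_norm hx
          nlinarith [norm_nonneg x, sq_nonneg ‖x‖]
  calc _ ≤ ∑' n : Fin d → ℤ, ∫⁻ x in QQ d, ENNReal.ofReal (Real.exp d * Real.exp (-(σ / 2 * ‖(x + zpt n) - y‖ ^ 2))) := ENNReal.tsum_le_tsum key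
    _ = ∫⁻ x : EuclideanSpace ℝ (Fin d), ENNReal.ofReal (Real.exp d * Real.exp (-(σ / 2 * ‖x - y‖ ^ 2))) :=
        tile_lintegral (fun x => ENNReal.ofReal (Real.exp d * Real.exp (-(σ / 2 * ‖x - y‖ ^ 2))))
    _ = ∫⁻ x : EuclideanSpace ℝ (Fin d), ENNReal.ofReal (Real.exp d * Real.exp (-(σ / 2 * ‖x‖ ^ 2))) :=
        lintegral_sub_right_eq_self (fun x : EuclideanSpace ℝ (Fin d) => ENNReal.ofReal (Real.exp d * Real.exp (-(σ / 2 * ‖x‖ ^ 2)))) y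
    _ ≤ _ := by
        rw [← ofReal_integral_eq_lintegral_ofReal
          ((exp_neg_norm_sq_integrable (by positivity)).const_mul _) (Eventually.of_forall fun x => by positivity)]
        apply ENNReal.ofReal_le_ofReal
        rw [integral_const_mul]
        have := GaussianFourier.integral_rexp_neg_mul_sq_norm (V := EuclideanSpace ℝ (Fin d)) (b := σ / 2) (by positivity)
        simp only [neg_mul] at this
        rw [this, finrank_euclideanSpace_fin, mul_assoc]
        have : Real.pi / (σ / 2) = (2 * Real.pi) * σ⁻¹ := by field_simp
        rw [this, Real.mul_rpow (by positivity) (by positivity), Real.inv_rpow hσ.le, ← Real.rpow_neg hσ.le, neg_div]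

lemma lattice_gauss (d : ℕ) : ∃ K : ℝ, 1 ≤ K ∧ ∀ σ : ℝ, 0 < σ → ∀ y : EuclideanSpace ℝ (Fin d),
    ∑' n : Fin d → ℤ, ENNReal.ofReal (Real.exp (-(σ * ‖zpt n - y‖ ^ 2))) ≤
      ENNReal.ofReal (K * (1 + σ ^ (-(d : ℝ) / 2))) := by
  have hK : 1 ≤ Real.exp d * (2 * Real.pi) ^ ((d : ℝ) / 2) := by
    have h1 : 1 ≤ Real.exp d := Real.one_le_exp (by positivity)
    have h2 : 1 ≤ (2 * Real.pi) ^ ((d : ℝ) / 2) :=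
      Real.one_le_rpow (by nlinarith [Real.pi_gt_three]) (by positivity)
    nlinarith
  refine ⟨Real.exp d * (2 * Real.pi) ^ ((d : ℝ) / 2), hK, fun σ hσ y => ?_⟩
  have hp : 0 < σ ^ (-(d : ℝ) / 2) := by positivity
  rcases le_total σ 1 with h | h
  · refine (lattice_gauss_small hσ h y).trans (ENNReal.ofReal_le_ofReal ?_)
    nlinarith
  · calc _ ≤ ∑' n : Fin d → ℤ, ENNReal.ofReal (Real.exp (-(1 * ‖zpt n - y‖ ^ 2))) := by
          refine ENNReal.tsum_le_tsum fun n => ENNReal.ofReal_le_ofReal (Real.exp_le_exp.2 ?_)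
          gcongr
      _ ≤ _ := (lattice_gauss_small one_pos le_rfl y).trans (ENNReal.ofReal_le_ofReal (by
          rw [Real.one_rpow]; nlinarith))
lemma eLpNorm_two_sq {α F : Type*} [MeasurableSpace α] [NormedAddCommGroup F] (f : α → F)
    (μ : Measure α) : eLpNorm f 2 μ ^ 2 = ∫⁻ x, ‖f x‖ₑ ^ 2 ∂μ := by
  have := eLpNorm_nnreal_pow_eq_lintegral (f := f) (μ := μ) (p := 2) (by norm_num)
  simpa using this

/-- character -/
def ee {d : ℕ} (n : Fin d → ℤ) (x : EuclideanSpace ℝ (Fin d)) : ℂ :=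
  Complex.exp (2 * Real.pi * Complex.I * (inner ℝ x (zpt n) : ℝ))

lemma ee_cont {d : ℕ} (n : Fin d → ℤ) : Continuous (ee n) := by
  unfold ee; fun_prop

lemma ee_norm {d : ℕ} (n : Fin d → ℤ) (x : EuclideanSpace ℝ (Fin d)) : ‖ee n x‖ = 1 := by
  rw [ee, Complex.norm_exp]; simp

lemma ee_prod {d : ℕ} (n : Fin d → ℤ) (x : EuclideanSpace ℝ (Fin d)) :
    ee n x = ∏ j, Complex.exp (2 * Real.pi * Complex.I * n j * x j) := by
  rw [ee, ← Complex.exp_sum]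
  congr 1
  rw [PiLp.inner_apply]
  simp only [zpt_apply, RCLike.inner_apply, conj_trivial]
  push_cast
  rw [Finset.mul_sum]
  refine Finset.sum_congr rfl fun j _ => by ring

section torus
attribute [local instance] instMeasureSpaceUnitAddCircle

/-- section of the torus projection -/
def gmap (d : ℕ) (z : UnitAddTorus (Fin d)) : EuclideanSpace ℝ (Fin d) :=
  WithLp.toLp 2 (UnitAddTorus.measurableEquivPiIoc (fun _ => -(1/2)) z).1

lemma gmap_mp (d : ℕ) : MeasurePreserving (gmap d) volume (volume.restrict (QQ d)) := by
  have h1 := UnitAddTorus.measurePreserving_equivPiIoc (d := Fin d) (fun _ => -(1/2))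
  have hm : MeasurableSet {x : Fin d → ℝ | ∀ i, x i ∈ Set.Ioc (-(1/2) : ℝ) (-(1/2) + 1)} :=
    MeasurableSet.univ_pi' (fun i => measurableSet_Ioc)
  have h2 := measurePreserving_subtype_coe (μa := volume) hm
  have h3 := (PiLp.volume_preserving_toLp (Fin d)).restrict_preimage (QQ_meas d)
  exact h3.comp (h2.comp h1)

lemma mFourier_gmap {d : ℕ} (n : Fin d → ℤ) (z : UnitAddTorus (Fin d)) :
    UnitAddTorus.mFourier n z = ee n (gmap d z) := by
  rw [ee_prod]
  simp only [UnitAddTorus.mFourier, ContinuousMap.coe_mk]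
  refine Finset.prod_congr rfl fun j _ => ?_
  have : z j = ((gmap d z j : ℝ) : UnitAddCircle) := by
    simp only [gmap, UnitAddTorus.coe_measurableEquivPiIoc_apply]
    exact ((AddCircle.equivIoc 1 (-(1/2))).symm_apply_apply (z j)).symm
  rw [this, fourier_coe_apply]
  simp

lemma parseval_tail {d : ℕ} {A : EuclideanSpace ℝ (Fin d) → ℂ}
    (hA : MemLp A 2 (volume.restrict (QQ d))) {c : (Fin d → ℤ) → ℂ}
    (hc : ∀ n, c n = ∫ θ in QQ d, ee (-n) θ * A θ) (s : Finset (Fin d → ℤ)) :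
    ∫⁻ θ in QQ d, ‖A θ - ∑ n ∈ s, c n * ee n θ‖ₑ ^ 2 =
      ∑' n, if n ∈ s then 0 else ‖c n‖ₑ ^ 2 := by
  classical
  have hF : MemLp (A ∘ gmap d) 2 volume := hA.comp_measurePreserving (gmap_mp d)
  set F := hF.toLp _ with hFdef
  have hcoef : ∀ n, UnitAddTorus.mFourierBasis.repr F n = c n := by
    intro n
    rw [UnitAddTorus.mFourierBasis_repr, UnitAddTorus.mFourierCoeff, hc, ← (gmap_mp d).map_eq,
      integral_map (gmap_mp d).aemeasurable]
    · apply integral_congr_ae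
      filter_upwards [hF.coeFn_toLp] with z hz
      rw [hz, mFourier_gmap]; rfl
    · rw [(gmap_mp d).map_eq]
      exact (ee_cont _).aestronglyMeasurable.mul hA.1
  set G := F - ∑ n ∈ s, c n • UnitAddTorus.mFourierBasis n with hG
  have hGrep : ∀ n, UnitAddTorus.mFourierBasis.repr G n = if n ∈ s then 0 else c n := by
    intro n
    rw [hG, map_sub, map_sum]
    simp only [map_smul, HilbertBasis.repr_self, lp.coeFn_sub, Pi.sub_apply, hcoef, lp.coeFn_sum,
      Finset.sum_apply, lp.coeFn_smul, Pi.smul_apply, lp.single_apply, Pi.single_apply, smul_eq_mul,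
      mul_ite, mul_one, mul_zero, Finset.sum_ite_eq]
    split_ifs <;> simp
  have hsum := UnitAddTorus.hasSum_sq_mFourierCoeff G
  simp only [← UnitAddTorus.mFourierBasis_repr, hGrep] at hsum
  have hGae : ∀ᵐ z, G z = A (gmap d z) - ∑ n ∈ s, c n * ee n (gmap d z) := by
    have h1 : ∀ᵐ z, ∀ n, (UnitAddTorus.mFourierLp 2 n : UnitAddTorus (Fin d) → ℂ) z
        = UnitAddTorus.mFourier n z :=
      ae_all_iff.2 fun n => UnitAddTorus.coeFn_mFourierLp 2 n
    have h2 : ∀ᵐ z, ∀ n, ((c n • UnitAddTorus.mFourierBasis n : Lp ℂ 2 (volume : Measure (UnitAddTorus (Fin d)))) : UnitAddTorus (Fin d) → ℂ) z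
        = c n • (UnitAddTorus.mFourierBasis n : UnitAddTorus (Fin d) → ℂ) z :=
      ae_all_iff.2 fun n => Lp.coeFn_smul _ _
    filter_upwards [hF.coeFn_toLp, Lp.coeFn_sub F (∑ n ∈ s, c n • UnitAddTorus.mFourierBasis n),
      Lp.coeFn_finsetSum s (fun n => c n • UnitAddTorus.mFourierBasis n), h1, h2] with z a1 a2 a3 a4 a5
    rw [hG, a2, Pi.sub_apply, a3, a1]
    simp only [Finset.sum_apply, a5]
    simp only [UnitAddTorus.coe_mFourierBasis, a4, mFourier_gmap, smul_eq_mul, Function.comp]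
  have hmeas : AEStronglyMeasurable (fun θ => A θ - ∑ n ∈ s, c n * ee n θ)
      (volume.restrict (QQ d)) := by
    have : Continuous fun θ : EuclideanSpace ℝ (Fin d) => ∑ n ∈ s, c n * ee n θ :=
      continuous_finsetSum _ fun n _ => continuous_const.mul (ee_cont n)
    exact hA.1.sub this.aestronglyMeasurable
  rw [← (gmap_mp d).map_eq, lintegral_map' _ (gmap_mp d).aemeasurable]
  · have e1 : ∫⁻ z, ‖A (gmap d z) - ∑ n ∈ s, c n * ee n (gmap d z)‖ₑ ^ 2 = ∫⁻ z, ‖G z‖ₑ ^ 2 := by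
      apply lintegral_congr_ae
      filter_upwards [hGae] with z hz
      rw [hz]
    rw [e1]
    have e2 : ∫⁻ z, ‖G z‖ₑ ^ 2 = ENNReal.ofReal (∫ z, ‖G z‖ ^ 2) := by
      rw [ofReal_integral_eq_lintegral_ofReal _ (Eventually.of_forall fun z => by positivity)]
      · refine lintegral_congr fun z => ?_
        rw [ENNReal.ofReal_pow (norm_nonneg _), ofReal_norm]
      · exact (memLp_two_iff_integrable_sq_norm (Lp.aestronglyMeasurable _)).1 (Lp.memLp _)
    rw [e2, ← hsum.tsum_eq, ENNReal.ofReal_tsum_of_nonneg (fun n => by positivity) hsum.summable]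
    refine tsum_congr fun n => ?_
    split_ifs
    · simp
    · rw [ENNReal.ofReal_pow (norm_nonneg _), ofReal_norm]
  · rw [(gmap_mp d).map_eq]
    exact hmeas.enorm.pow_const 2
end torus
lemma sinc_integral (a : ℝ) :
    ∫ t in Set.Ioc (-(1/2) : ℝ) (-(1/2) + 1), Complex.exp (2 * Real.pi * Complex.I * (-a) * t) =
      (sinc' (Real.pi * a) : ℂ) := by
  rw [← intervalIntegral.integral_of_le (by norm_num)]
  by_cases ha : a = 0
  · subst ha
    simp [sinc']
  · have hc : 2 * Real.pi * Complex.I * (-a : ℂ) ≠ 0 := by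
      simp [ha, Real.pi_ne_zero]
    rw [integral_exp_mul_complex hc, sinc', if_neg (mul_ne_zero Real.pi_ne_zero ha)]
    push_cast
    rw [Complex.sin]
    have hpi : (Real.pi : ℂ) ≠ 0 := by simp [Real.pi_ne_zero]
    have ha' : (a : ℂ) ≠ 0 := by simp [ha]
    have e1 : 2 * (Real.pi : ℂ) * Complex.I * (-a : ℂ) * (-(1/2) + 1) = -(Real.pi * a) * Complex.I := by ring
    have e2 : 2 * (Real.pi : ℂ) * Complex.I * (-a : ℂ) * (-(1/2)) = (Real.pi * a) * Complex.I := by ring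
    rw [e1, e2]
    have hI : Complex.I ≠ 0 := Complex.I_ne_zero
    field_simp
    rw [Complex.I_sq]
    ring

open scoped FourierTransform in
lemma fourier_QQ_ee {d : ℕ} (n : Fin d → ℤ) (x : EuclideanSpace ℝ (Fin d)) :
    𝓕 ((QQ d).indicator (ee n)) x = (fN d 1 n x : ℂ) := by
  rw [Real.fourier_eq']
  have hmp := EuclideanSpace.volume_preserving_symm_measurableEquiv_toLp (Fin d)
  have e1 : ∀ v : EuclideanSpace ℝ (Fin d),
      Complex.exp (↑(-2 * Real.pi * inner ℝ v x) * Complex.I) • (QQ d).indicator (ee n) v =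
      (fun w : Fin d → ℝ => ∏ j, (Set.Ioc (-(1/2) : ℝ) (-(1/2) + 1)).indicator
        (fun t : ℝ => Complex.exp (2 * Real.pi * Complex.I * (-((x j - n j : ℝ) : ℂ)) * t)) (w j))
        ((MeasurableEquiv.toLp 2 (Fin d → ℝ)).symm v) := by
    intro v
    have hv : ∀ j, ((MeasurableEquiv.toLp 2 (Fin d → ℝ)).symm v) j = v j := fun j => rfl
    simp only [hv]
    by_cases h : v ∈ QQ d
    · rw [Set.indicator_of_mem h, ee_prod, smul_eq_mul]
      have : Complex.exp (↑(-2 * Real.pi * inner ℝ v x) * Complex.I) =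
          ∏ j, Complex.exp (-2 * Real.pi * Complex.I * x j * v j) := by
        rw [← Complex.exp_sum]
        congr 1
        rw [PiLp.inner_apply]
        simp only [RCLike.inner_apply, conj_trivial]
        push_cast
        rw [Finset.mul_sum, Finset.sum_mul]
        refine Finset.sum_congr rfl fun j _ => by ring
      rw [this, ← Finset.prod_mul_distrib]
      refine Finset.prod_congr rfl fun j _ => ?_
      rw [Set.indicator_of_mem (h j), ← Complex.exp_add]
      congr 1
      push_cast; ring
    · rw [Set.indicator_of_notMem h, smul_zero]
      simp only [QQ, Set.mem_ofPred_eq, not_forall] at h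
      obtain ⟨j, hj⟩ := h
      exact (Finset.prod_eq_zero (Finset.mem_univ j) (Set.indicator_of_notMem hj _)).symm
  simp_rw [e1]
  rw [hmp.integral_comp (MeasurableEquiv.measurableEmbedding _)
    (fun w : Fin d → ℝ => ∏ j, (Set.Ioc (-(1/2) : ℝ) (-(1/2) + 1)).indicator
        (fun t : ℝ => Complex.exp (2 * Real.pi * Complex.I * (-((x j - n j : ℝ) : ℂ)) * t)) (w j)),
    integral_fintype_prod_volume_eq_prod (fun j => (Set.Ioc (-(1/2) : ℝ) (-(1/2) + 1)).indicator
        (fun t : ℝ => Complex.exp (2 * Real.pi * Complex.I * (-((x j - n j : ℝ) : ℂ)) * t))), fN]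
  push_cast
  refine Finset.prod_congr rfl fun j _ => ?_
  rw [integral_indicator measurableSet_Ioc]
  have := sinc_integral (x j - n j)
  push_cast at this
  rw [this, one_mul]
lemma lint_cs {α : Type*} [MeasurableSpace α] {μ : Measure α} {f g : α → ℝ≥0∞}
    (hf : AEMeasurable f μ) (hg : AEMeasurable g μ) :
    (∫⁻ x, f x * g x ∂μ) ^ 2 ≤ (∫⁻ x, f x ^ 2 ∂μ) * ∫⁻ x, g x ^ 2 ∂μ := by
  have h := ENNReal.lintegral_mul_le_Lp_mul_Lq μ (p := 2) (q := 2)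
    (Real.HolderConjugate.two_two) hf hg
  simp only [Pi.mul_apply, ENNReal.rpow_two] at h
  calc (∫⁻ x, f x * g x ∂μ) ^ 2 ≤ ((∫⁻ x, f x ^ 2 ∂μ) ^ (1 / 2 : ℝ) * (∫⁻ x, g x ^ 2 ∂μ) ^ (1 / 2 : ℝ)) ^ 2 := by
        gcongr
    _ = _ := by
      rw [mul_pow, ← ENNReal.rpow_natCast, ← ENNReal.rpow_natCast, ← ENNReal.rpow_mul,
        ← ENNReal.rpow_mul]
      norm_num

lemma tsum_cs {ι : Type*} (f g : ι → ℝ≥0∞) :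
    (∑' i, f i * g i) ^ 2 ≤ (∑' i, f i ^ 2) * ∑' i, g i ^ 2 := by
  let _ : MeasurableSpace ι := ⊤
  have h := lint_cs (μ := Measure.count) (f := f) (g := g)
    (measurable_from_top).aemeasurable (measurable_from_top).aemeasurable
  simpa only [lintegral_count] using h

lemma gauss_mul_L2 {d : ℕ} {τ : ℝ} (hτ : 0 < τ) {v : EuclideanSpace ℝ (Fin d) → ℂ}
    (hv : MemLp v 2 volume) :
    Integrable (fun ξ => (Real.exp (-(4 * Real.pi ^ 2 * τ * ‖ξ‖ ^ 2)) : ℂ) * v ξ) ∧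
    MemLp (fun ξ => (Real.exp (-(4 * Real.pi ^ 2 * τ * ‖ξ‖ ^ 2)) : ℂ) * v ξ) 2 volume := by
  have hc : Continuous fun ξ : EuclideanSpace ℝ (Fin d) =>
      (Real.exp (-(4 * Real.pi ^ 2 * τ * ‖ξ‖ ^ 2)) : ℂ) := by fun_prop
  have hg : MemLp (fun ξ : EuclideanSpace ℝ (Fin d) =>
      (Real.exp (-(4 * Real.pi ^ 2 * τ * ‖ξ‖ ^ 2)) : ℂ)) 2 volume := by
    rw [memLp_two_iff_integrable_sq_norm hc.aestronglyMeasurable]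
    refine (exp_neg_norm_sq_integrable (d := d) (b := 8 * Real.pi ^ 2 * τ) (by positivity)).congr
      (Eventually.of_forall fun ξ => ?_)
    simp only [Complex.norm_real, Real.norm_eq_abs, sq_abs]
    rw [← Real.exp_nat_mul]
    congr 1; push_cast; ring
  refine ⟨hg.integrable_mul hv, ?_⟩
  refine hv.mono (hc.aestronglyMeasurable.mul hv.1) (Eventually.of_forall fun ξ => ?_)
  rw [norm_mul, Complex.norm_real, Real.norm_eq_abs, Real.abs_exp]
  have : Real.exp (-(4 * Real.pi ^ 2 * τ * ‖ξ‖ ^ 2)) ≤ 1 := Real.exp_le_one_iff.2 (by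
    have : 0 ≤ 4 * Real.pi ^ 2 * τ * ‖ξ‖ ^ 2 := by positivity
    linarith)
  nlinarith [norm_nonneg (v ξ)]

lemma ee_per {d : ℕ} (n k : Fin d → ℤ) (x : EuclideanSpace ℝ (Fin d)) :
    ee n (x + zpt k) = ee n x := by
  have : inner ℝ (zpt k) (zpt n) = ((∑ j, k j * n j : ℤ) : ℝ) := by
    rw [PiLp.inner_apply]
    push_cast
    refine Finset.sum_congr rfl fun j _ => ?_
    simp [zpt_apply, mul_comm]
  rw [ee, ee, inner_add_left, this]
  rw [Complex.exp_eq_exp_iff_exists_int]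
  refine ⟨∑ j, k j * n j, ?_⟩
  push_cast; ring

lemma zpt_zero {d : ℕ} : zpt (0 : Fin d → ℤ) = 0 := by
  ext j; simp [zpt]

lemma QQ_shift {d : ℕ} {x : EuclideanSpace ℝ (Fin d)} (hx : x ∈ QQ d) {k : Fin d → ℤ} (hk : k ≠ 0) :
    x + zpt k ∉ QQ d := by
  intro h
  apply hk
  have h1 := (QQ_exists (x + zpt k)).unique (y₁ := k) (y₂ := 0) (by simpa using hx)
    (by simpa [zpt_zero] using h)
  exact h1

lemma tile_norm_summable {d : ℕ} {b : EuclideanSpace ℝ (Fin d) → ℂ} (hb : Integrable b) :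
    Summable (fun k : Fin d → ℤ => ∫ x in QQ d, ‖b (x + zpt k)‖) := by
  have := tile_integral (d := d) (f := fun x => (‖b x‖ : ℂ)) (hb.norm.ofReal)
  have h := this.summable
  have e : (fun k : Fin d → ℤ => ∫ x in QQ d, ((‖b (x + zpt k)‖ : ℝ) : ℂ)) =
    fun k => ((∫ x in QQ d, ‖b (x + zpt k)‖ : ℝ) : ℂ) := by
    funext k; exact integral_ofReal
  rw [e] at h
  exact Complex.summable_ofReal.1 h

lemma tile_ae_summable {d : ℕ} {b : EuclideanSpace ℝ (Fin d) → ℂ} (hb : Integrable b) :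
    ∀ᵐ θ ∂(volume.restrict (QQ d)), Summable fun k : Fin d → ℤ => b (θ + zpt k) := by
  have h1 : ∫⁻ θ in QQ d, ∑' k : Fin d → ℤ, ‖b (θ + zpt k)‖ₑ ≠ ∞ := by
    rw [lintegral_tsum fun k => (tile_integrable hb k).1.enorm]
    rw [tile_lintegral (fun x => ‖b x‖ₑ)]
    exact hb.2.ne
  have h2 := ae_lt_top' (AEMeasurable.tsum fun k => (tile_integrable hb k).1.enorm) h1
  filter_upwards [h2] with θ hθ
  have : Summable fun k : Fin d → ℤ => ‖b (θ + zpt k)‖₊ := by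
    rw [← ENNReal.tsum_coe_ne_top_iff_summable]
    exact hθ.ne
  exact Summable.of_nnnorm this

lemma period_meas {d : ℕ} {b : EuclideanSpace ℝ (Fin d) → ℂ} (hb : Integrable b) :
    AEStronglyMeasurable (fun θ => ∑' k : Fin d → ℤ, b (θ + zpt k)) (volume.restrict (QQ d)) := by
  refine aestronglyMeasurable_of_tendsto_ae (u := (atTop : Filter (Finset (Fin d → ℤ))))
    (f := fun s θ => ∑ k ∈ s, b (θ + zpt k)) ?_ ?_
  · intro s
    exact Finset.aestronglyMeasurable_fun_sum s fun k _ => (tile_integrable hb k).1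
  · filter_upwards [tile_ae_summable hb] with θ hθ
    exact hθ.hasSum

open scoped FourierTransform in
lemma period_coef {d : ℕ} {b : EuclideanSpace ℝ (Fin d) → ℂ} (hb : Integrable b) (n : Fin d → ℤ) :
    𝓕 b (zpt n) = ∫ θ in QQ d, ee (-n) θ * ∑' k : Fin d → ℤ, b (θ + zpt k) := by
  have hn : zpt (-n) = - zpt n := by ext j; simp [zpt]
  have hb' : Integrable (fun x => ee (-n) x * b x) := by
    refine hb.mono ((ee_cont _).aestronglyMeasurable.mul hb.1) (Eventually.of_forall fun x => ?_)
    rw [norm_mul, ee_norm, one_mul]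
  have e1 : 𝓕 b (zpt n) = ∫ x, ee (-n) x * b x := by
    rw [Real.fourier_eq']
    refine integral_congr_ae (Eventually.of_forall fun x => ?_)
    simp only [ee, smul_eq_mul, hn, inner_neg_right]
    congr 2; push_cast; ring
  have e3 : ∫ θ in QQ d, ee (-n) θ * ∑' k : Fin d → ℤ, b (θ + zpt k) =
      ∫ θ in QQ d, ∑' k : Fin d → ℤ, (fun x => ee (-n) x * b x) (θ + zpt k) := by
    congr 1; funext x
    refine (tsum_mul_left (a := ee (-n) x) (f := fun k : Fin d → ℤ => b (x + zpt k))).symm.trans ?_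
    refine tsum_congr fun k => ?_
    show _ = ee (-n) (x + zpt k) * b (x + zpt k)
    rw [ee_per]
  rw [e1, e3]
  generalize (fun x => ee (-n) x * b x) = g at hb' ⊢
  have h2 := hasSum_integral_of_summable_integral_norm (μ := volume.restrict (QQ d))
    (F := fun (k : Fin d → ℤ) x => g (x + zpt k))
    (fun k => tile_integrable hb' k) (tile_norm_summable hb')
  exact (tile_integral hb').unique h2

lemma period_bound (d : ℕ) : ∃ K : ℝ, 1 ≤ K ∧ ∀ τ : ℝ, 0 < τ →
    ∀ v : EuclideanSpace ℝ (Fin d) → ℂ, MemLp v 2 volume → StronglyMeasurable v →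
    ∀ b : EuclideanSpace ℝ (Fin d) → ℂ,
    (b = fun ξ => (Real.exp (-(4 * Real.pi ^ 2 * τ * ‖ξ‖ ^ 2)) : ℂ) * v ξ) →
    (∫⁻ θ in QQ d, ‖(∑' k : Fin d → ℤ, b (θ + zpt k)) - b θ‖ₑ ^ 2 ≤
      ENNReal.ofReal (K * (1 + τ ^ (-(d : ℝ) / 2)) * Real.exp (-(2 * τ))) * ∫⁻ ξ, ‖v ξ‖ₑ ^ 2) ∧
    ∫⁻ ξ in (QQ d)ᶜ, ‖b ξ‖ₑ ^ 2 ≤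
      ENNReal.ofReal (K * (1 + τ ^ (-(d : ℝ) / 2)) * Real.exp (-(2 * τ))) * ∫⁻ ξ, ‖v ξ‖ₑ ^ 2 := by
  obtain ⟨K, hK, hKG⟩ := lattice_gauss d
  refine ⟨K, hK, fun τ hτ v hv hvm b hb => ?_⟩
  have hpi : (9:ℝ) ≤ Real.pi ^ 2 := by nlinarith [Real.pi_gt_three]
  have hbint : Integrable b := by rw [hb]; exact (gauss_mul_L2 hτ hv).1
  have hw : ∀ ξ, ξ ∉ QQ d → (Real.exp (-(4 * Real.pi ^ 2 * τ * ‖ξ‖ ^ 2))) ^ 2 ≤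
      Real.exp (-(2 * τ)) * Real.exp (-((4 * Real.pi ^ 2 * τ) * ‖ξ‖ ^ 2)) := by
    intro ξ hξ
    have := QQ_far hξ
    rw [← Real.exp_nat_mul, ← Real.exp_add]
    apply Real.exp_le_exp.2
    have h1 : 4 * Real.pi ^ 2 * τ * (1/4) ≤ 4 * Real.pi ^ 2 * τ * ‖ξ‖ ^ 2 := by gcongr
    have h2 : 9 * τ ≤ Real.pi ^ 2 * τ := by gcongr
    push_cast
    linarith
  have hen : ∀ ξ, ‖b ξ‖ₑ = ENNReal.ofReal (Real.exp (-(4 * Real.pi ^ 2 * τ * ‖ξ‖ ^ 2))) * ‖v ξ‖ₑ := by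
    intro ξ
    rw [hb]
    simp only [enorm_mul]
    congr 1
    rw [← ofReal_norm, Complex.norm_real, Real.norm_eq_abs, Real.abs_exp]
  have hσ : (4 * Real.pi ^ 2 * τ) ^ (-(d : ℝ) / 2) ≤ τ ^ (-(d : ℝ) / 2) := by
    apply Real.rpow_le_rpow_of_nonpos hτ
    · nlinarith
    · have : (0:ℝ) ≤ d := by positivity
      linarith
  constructor
  · have hae : ∀ᵐ θ ∂(volume.restrict (QQ d)), ‖(∑' k : Fin d → ℤ, b (θ + zpt k)) - b θ‖ₑ ^ 2 ≤
        ENNReal.ofReal (K * (1 + τ ^ (-(d : ℝ) / 2)) * Real.exp (-(2 * τ))) *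
          ∑' k : Fin d → ℤ, ‖v (θ + zpt k)‖ₑ ^ 2 := by
      filter_upwards [tile_ae_summable hbint, ae_restrict_mem (QQ_meas d)] with θ hθ hθQ
      have e1 := hθ.tsum_eq_add_tsum_ite 0
      rw [zpt_zero, add_zero] at e1
      rw [e1, add_sub_cancel_left]
      calc ‖∑' k : Fin d → ℤ, (if k = 0 then 0 else b (θ + zpt k))‖ₑ ^ 2
          ≤ (∑' k : Fin d → ℤ, ‖(if k = 0 then 0 else b (θ + zpt k))‖ₑ) ^ 2 := by
            gcongr; exact enorm_tsum_le_tsum_enorm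
        _ = (∑' k : Fin d → ℤ, (if k = 0 then 0 else
              ENNReal.ofReal (Real.exp (-(4 * Real.pi ^ 2 * τ * ‖θ + zpt k‖ ^ 2)))) *
                ‖v (θ + zpt k)‖ₑ) ^ 2 := by
            congr 2; funext k
            split_ifs
            · simp
            · exact hen _
        _ ≤ _ := tsum_cs _ _
        _ ≤ _ := by
            gcongr
            calc ∑' k : Fin d → ℤ, (if k = 0 then 0 else
                ENNReal.ofReal (Real.exp (-(4 * Real.pi ^ 2 * τ * ‖θ + zpt k‖ ^ 2)))) ^ 2
                ≤ ∑' k : Fin d → ℤ, ENNReal.ofReal (Real.exp (-(2 * τ))) *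
                  ENNReal.ofReal (Real.exp (-((4 * Real.pi ^ 2 * τ) * ‖zpt k - (-θ)‖ ^ 2))) := by
                  refine ENNReal.tsum_le_tsum fun k => ?_
                  split_ifs with hk
                  · simp
                  · rw [← ENNReal.ofReal_pow (Real.exp_pos _).le,
                      ← ENNReal.ofReal_mul (Real.exp_pos _).le, sub_neg_eq_add, add_comm (zpt k)]
                    exact ENNReal.ofReal_le_ofReal (hw _ (QQ_shift hθQ hk))
              _ ≤ ENNReal.ofReal (Real.exp (-(2 * τ))) * ENNReal.ofReal
                  (K * (1 + (4 * Real.pi ^ 2 * τ) ^ (-(d : ℝ) / 2))) := by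
                  rw [ENNReal.tsum_mul_left]
                  gcongr
                  exact hKG _ (by positivity) _
              _ ≤ _ := by
                  rw [← ENNReal.ofReal_mul (Real.exp_pos _).le, mul_comm]
                  apply ENNReal.ofReal_le_ofReal
                  gcongr
    refine (lintegral_mono_ae hae).trans ?_
    have hvk : ∀ k : Fin d → ℤ, Measurable fun θ => ‖v (θ + zpt k)‖ₑ ^ 2 := fun k =>
      ((hvm.measurable.comp (measurable_add_const (zpt k))).enorm).pow_const 2
    rw [lintegral_const_mul _ (Measurable.tsum hvk), lintegral_tsum fun k => (hvk k).aemeasurable,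
      tile_lintegral (fun x => ‖v x‖ₑ ^ 2)]
  · calc ∫⁻ ξ in (QQ d)ᶜ, ‖b ξ‖ₑ ^ 2 ≤ ∫⁻ ξ in (QQ d)ᶜ,
          ENNReal.ofReal (K * (1 + τ ^ (-(d : ℝ) / 2)) * Real.exp (-(2 * τ))) * ‖v ξ‖ₑ ^ 2 := by
          refine setLIntegral_mono' (QQ_meas d).compl fun ξ hξ => ?_
          rw [hen, mul_pow]
          gcongr
          rw [← ENNReal.ofReal_pow (Real.exp_pos _).le]
          apply ENNReal.ofReal_le_ofReal
          refine (hw ξ hξ).trans ?_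
          have h1 : Real.exp (-((4 * Real.pi ^ 2 * τ) * ‖ξ‖ ^ 2)) ≤ 1 := Real.exp_le_one_iff.2 (by
            have : 0 ≤ 4 * Real.pi ^ 2 * τ * ‖ξ‖ ^ 2 := by positivity
            linarith)
          have h2 : 1 ≤ K * (1 + τ ^ (-(d : ℝ) / 2)) := by
            have : 0 ≤ τ ^ (-(d : ℝ) / 2) := by positivity
            nlinarith
          nlinarith [Real.exp_pos (-(2*τ))]
      _ ≤ ∫⁻ ξ, ENNReal.ofReal (K * (1 + τ ^ (-(d : ℝ) / 2)) * Real.exp (-(2 * τ))) * ‖v ξ‖ₑ ^ 2 :=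
          setLIntegral_le_lintegral _ _
      _ = _ := lintegral_const_mul _ (hvm.measurable.enorm.pow_const 2)
open scoped FourierTransform in
lemma plancherel {d : ℕ} {g : EuclideanSpace ℝ (Fin d) → ℂ} (h1 : Integrable g)
    (h2 : MemLp g 2 volume) :
    MemLp (𝓕 g) 2 volume ∧ eLpNorm (𝓕 g) 2 volume = eLpNorm g 2 volume := by
  have h := fourier_L2_ae h1 h2
  refine ⟨(memLp_congr_ae h).1 (Lp.memLp _), ?_⟩
  rw [← eLpNorm_congr_ae h, ← Lp.enorm_def, ← ofReal_norm, Lp.norm_fourier_eq, ofReal_norm,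
    Lp.enorm_toLp]

lemma ind_mem {d : ℕ} (n : Fin d → ℤ) (c : ℂ) :
    Integrable (fun ξ => c * (QQ d).indicator (ee n) ξ) ∧
      MemLp (fun ξ => c * (QQ d).indicator (ee n) ξ) 2 volume := by
  have h : ∀ p : ℝ≥0∞, MemLp (fun ξ => c * (QQ d).indicator (ee n) ξ) p volume := by
    intro p
    apply MemLp.const_mul
    rw [memLp_indicator_iff_restrict (QQ_meas d)]
    have : IsFiniteMeasure (volume.restrict (QQ d)) := ⟨by
      rw [Measure.restrict_apply_univ, QQ_vol]; simp⟩
    exact MemLp.of_bound (ee_cont n).aestronglyMeasurable 1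
      (Eventually.of_forall fun x => (ee_norm n x).le)
  exact ⟨memLp_one_iff_integrable.1 (h 1), h 2⟩

lemma enorm_add_sq_le (a b : ℂ) : ‖a + b‖ₑ ^ 2 ≤ 2 * ‖a‖ₑ ^ 2 + 2 * ‖b‖ₑ ^ 2 := by
  have h : ‖a + b‖ ^ 2 ≤ 2 * ‖a‖ ^ 2 + 2 * ‖b‖ ^ 2 := by
    have := norm_add_le a b
    have h0 := norm_nonneg (a + b)
    nlinarith [sq_nonneg (‖a‖ - ‖b‖)]
  rw [← ofReal_norm, ← ofReal_norm, ← ofReal_norm]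
  have h2 : (2 : ℝ≥0∞) = ENNReal.ofReal 2 := by simp
  rw [h2, ← ENNReal.ofReal_pow (norm_nonneg _), ← ENNReal.ofReal_pow (norm_nonneg _),
    ← ENNReal.ofReal_pow (norm_nonneg _), ← ENNReal.ofReal_mul (by norm_num),
    ← ENNReal.ofReal_mul (by norm_num), ← ENNReal.ofReal_add (by positivity) (by positivity)]
  exact ENNReal.ofReal_le_ofReal h

open scoped FourierTransform in
lemma sampling (d : ℕ) : ∃ K : ℝ, 1 ≤ K ∧ ∀ τ : ℝ, 0 < τ →
    ∀ u₀ : EuclideanSpace ℝ (Fin d) → ℝ, MemLp u₀ 2 volume → ∀ s : Finset (Fin d → ℤ),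
    MemLp (fun x => heatSol d u₀ τ x - ∑ n ∈ s, heatSol d u₀ τ (zpt n) * fN d 1 n x) 2 volume ∧
    eLpNorm (fun x => heatSol d u₀ τ x - ∑ n ∈ s, heatSol d u₀ τ (zpt n) * fN d 1 n x) 2 volume ^ 2 ≤
      ENNReal.ofReal (3 * (K * (1 + τ ^ (-(d : ℝ) / 2)) * Real.exp (-(2 * τ)))) *
        eLpNorm u₀ 2 volume ^ 2 +
      2 * ∑' n, if n ∈ s then 0 else ‖heatSol d u₀ τ (zpt n)‖ₑ ^ 2 := by
  obtain ⟨K, hK, hKP⟩ := period_bound d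
  refine ⟨K, hK, fun τ hτ u₀ hu s => ?_⟩
  obtain ⟨v, hvm, hv, hve, hvF⟩ := heat_fourier hu
  have hvF := hvF τ hτ
  have hbb := gauss_mul_L2 hτ hv
  set b : EuclideanSpace ℝ (Fin d) → ℂ :=
    fun ξ => (Real.exp (-(4 * Real.pi ^ 2 * τ * ‖ξ‖ ^ 2)) : ℂ) * v ξ with hb
  clear_value b
  have hKP := hKP τ hτ v hv hvm b hb
  obtain ⟨hb1, hb2⟩ := hbb
  obtain ⟨hP1, hP2⟩ := hKP
  set A : EuclideanSpace ℝ (Fin d) → ℂ := fun θ => ∑' k : Fin d → ℤ, b (θ + zpt k) with hA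
  have hAm : AEStronglyMeasurable A (volume.restrict (QQ d)) := period_meas hb1
  have hAc : ∀ n : Fin d → ℤ, (heatSol d u₀ τ (zpt n) : ℂ) = ∫ θ in QQ d, ee (-n) θ * A θ := by
    intro n
    rw [hvF, period_coef hb1]
  have hP1' : ∫⁻ θ in QQ d, ‖A θ - b θ‖ₑ ^ 2 ≤
      ENNReal.ofReal (K * (1 + τ ^ (-(d : ℝ) / 2)) * Real.exp (-(2 * τ))) * ∫⁻ ξ, ‖v ξ‖ₑ ^ 2 := by
    rw [hA]; exact hP1
  clear_value A
  set M := K * (1 + τ ^ (-(d : ℝ) / 2)) * Real.exp (-(2 * τ)) with hM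
  have hM0 : 0 ≤ M := by positivity
  have hvfin : ∫⁻ ξ, ‖v ξ‖ₑ ^ 2 ≠ ∞ := by
    rw [← eLpNorm_two_sq]
    exact ENNReal.pow_ne_top hv.2.ne
  have hAb : MemLp (fun θ => A θ - b θ) 2 (volume.restrict (QQ d)) := by
    refine ⟨hAm.sub hb1.1.restrict, ?_⟩
    have h : eLpNorm (fun θ => A θ - b θ) 2 (volume.restrict (QQ d)) ^ 2 < ∞ := by
      rw [eLpNorm_two_sq]
      exact hP1'.trans_lt (ENNReal.mul_lt_top ENNReal.ofReal_lt_top hvfin.lt_top)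
    simpa using h
  have hAL : MemLp A 2 (volume.restrict (QQ d)) := by
    have := hAb.add (hb2.restrict (QQ d))
    refine this.ae_eq (Eventually.of_forall fun θ => ?_)
    simp
  have hpar := parseval_tail hAL hAc s
  set g : EuclideanSpace ℝ (Fin d) → ℂ := fun ξ => b ξ - ∑ n ∈ s,
    (heatSol d u₀ τ (zpt n) : ℂ) * (QQ d).indicator (ee n) ξ with hg
  have hg1 : Integrable g := hb1.sub (integrable_finsetSum s fun n _ => (ind_mem n _).1)
  have hg2 : MemLp g 2 volume := hb2.sub (memLp_finsetSum s fun n _ => (ind_mem n _).2)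
  have hFg : ∀ x, ((heatSol d u₀ τ x - ∑ n ∈ s, heatSol d u₀ τ (zpt n) * fN d 1 n x : ℝ) : ℂ)
      = 𝓕 g x := by
    intro x
    have hF : ∀ f : EuclideanSpace ℝ (Fin d) → ℂ, Integrable f →
        Integrable (fun v => Complex.exp (↑(-2 * Real.pi * inner ℝ v x) * Complex.I) • f v) := by
      intro f hf
      refine hf.mono ((by fun_prop : Continuous fun v : EuclideanSpace ℝ (Fin d) =>
        Complex.exp (↑(-2 * Real.pi * inner ℝ v x) * Complex.I)).aestronglyMeasurable.smul hf.1)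
        (Eventually.of_forall fun y => ?_)
      rw [norm_smul, Complex.norm_exp_ofReal_mul_I, one_mul]
    have e1 : 𝓕 g x = 𝓕 b x - ∑ n ∈ s, (heatSol d u₀ τ (zpt n) : ℂ) * 𝓕 ((QQ d).indicator (ee n)) x := by
      rw [Real.fourier_eq', Real.fourier_eq']
      simp only [hg, smul_sub, Finset.smul_sum]
      rw [integral_sub (hF b hb1) (integrable_finsetSum s fun n _ => hF _ (ind_mem n _).1),
        integral_finsetSum s fun n _ => hF _ (ind_mem n _).1]
      congr 1
      refine Finset.sum_congr rfl fun n _ => ?_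
      rw [Real.fourier_eq', ← integral_const_mul]
      congr 1; funext y
      simp only [smul_eq_mul]; ring
    rw [e1, ← hvF]
    simp only [fourier_QQ_ee]
    push_cast
    rfl
  obtain ⟨hp1, hp2⟩ := plancherel hg1 hg2
  have hnorm : ∀ x, ‖heatSol d u₀ τ x - ∑ n ∈ s, heatSol d u₀ τ (zpt n) * fN d 1 n x‖ = ‖𝓕 g x‖ := by
    intro x
    rw [← hFg, Complex.norm_real]
  have hRe : (fun x => heatSol d u₀ τ x - ∑ n ∈ s, heatSol d u₀ τ (zpt n) * fN d 1 n x) =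
      fun x => Complex.reCLM (𝓕 g x) := by
    funext x
    rw [← hFg]; simp only [Complex.reCLM_apply, Complex.ofReal_re]
  refine ⟨?_, ?_⟩
  · rw [hRe]
    exact hp1.re
  · rw [eLpNorm_congr_norm_ae (Eventually.of_forall hnorm), hp2, eLpNorm_two_sq,
      ← lintegral_add_compl _ (QQ_meas d)]
    have e1 : ∫⁻ ξ in (QQ d)ᶜ, ‖g ξ‖ₑ ^ 2 = ∫⁻ ξ in (QQ d)ᶜ, ‖b ξ‖ₑ ^ 2 := by
      refine setLIntegral_congr_fun (QQ_meas d).compl fun ξ hξ => ?_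
      simp [hg, Set.indicator_of_notMem hξ]
    have e2 : ∫⁻ ξ in QQ d, ‖g ξ‖ₑ ^ 2 ≤ 2 * (∫⁻ θ in QQ d, ‖A θ - b θ‖ₑ ^ 2) +
        2 * ∫⁻ θ in QQ d, ‖A θ - ∑ n ∈ s, (heatSol d u₀ τ (zpt n) : ℂ) * ee n θ‖ₑ ^ 2 := by
      rw [← lintegral_const_mul' _ _ (by simp), ← lintegral_const_mul' _ _ (by simp),
        ← lintegral_add_left' ((hAb.1.enorm.pow_const 2).const_mul 2)]
      refine setLIntegral_mono' (QQ_meas d) fun ξ hξ => ?_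
      have : g ξ = -(A ξ - b ξ) + (A ξ - ∑ n ∈ s, (heatSol d u₀ τ (zpt n) : ℂ) * ee n ξ) := by
        simp only [hg, Set.indicator_of_mem hξ]; ring
      rw [this]
      refine (enorm_add_sq_le _ _).trans ?_
      rw [enorm_neg]
    rw [e1]
    rw [hpar] at e2
    have hvu : ∫⁻ ξ, ‖v ξ‖ₑ ^ 2 = eLpNorm u₀ 2 volume ^ 2 := by rw [← eLpNorm_two_sq, hve]
    rw [hvu] at hP1' hP2
    have e3 : ∀ n, ‖((heatSol d u₀ τ (zpt n) : ℝ) : ℂ)‖ₑ = ‖heatSol d u₀ τ (zpt n)‖ₑ := by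
      intro n; rw [← ofReal_norm, ← ofReal_norm, Complex.norm_real]
    simp only [e3] at e2
    have e4 : ENNReal.ofReal (3 * M) = 3 * ENNReal.ofReal M := by
      rw [ENNReal.ofReal_mul (by norm_num)]; simp
    rw [e4]
    calc _ ≤ (2 * (ENNReal.ofReal M * eLpNorm u₀ 2 volume ^ 2) +
        2 * ∑' n, if n ∈ s then 0 else ‖heatSol d u₀ τ (zpt n)‖ₑ ^ 2) +
          ENNReal.ofReal M * eLpNorm u₀ 2 volume ^ 2 := by
          refine add_le_add (e2.trans ?_) hP2
          gcongr
      _ = _ := by ring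
lemma gauss_lint {d : ℕ} {τ : ℝ} (hτ : 0 < τ) (x : EuclideanSpace ℝ (Fin d)) :
    ∫⁻ y, ENNReal.ofReal (Real.exp (-‖x - y‖ ^ 2 / (4 * τ))) =
      ENNReal.ofReal ((4 * Real.pi * τ) ^ ((d : ℝ) / 2)) := by
  have h1 : ∫⁻ y, ENNReal.ofReal (Real.exp (-‖x - y‖ ^ 2 / (4 * τ))) =
      ∫⁻ y : EuclideanSpace ℝ (Fin d), ENNReal.ofReal (Real.exp (-((1 / (4 * τ)) * ‖y‖ ^ 2))) := by
    rw [← lintegral_sub_left_eq_self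
      (fun y : EuclideanSpace ℝ (Fin d) => ENNReal.ofReal (Real.exp (-((1 / (4 * τ)) * ‖y‖ ^ 2)))) x]
    refine lintegral_congr fun y => ?_
    congr 2; ring
  rw [h1, ← ofReal_integral_eq_lintegral_ofReal (exp_neg_norm_sq_integrable (by positivity))
    (Eventually.of_forall fun y => (Real.exp_pos _).le)]
  congr 1
  have := GaussianFourier.integral_rexp_neg_mul_sq_norm (V := EuclideanSpace ℝ (Fin d))
    (b := 1 / (4 * τ)) (by positivity)
  simp only [finrank_euclideanSpace, Fintype.card_fin, neg_mul] at this
  rw [this]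
  congr 1; field_simp

lemma heat_pt {d : ℕ} {τ : ℝ} (hτ : 0 < τ) {u₀ : EuclideanSpace ℝ (Fin d) → ℝ}
    (hu : AEStronglyMeasurable u₀ volume) (x : EuclideanSpace ℝ (Fin d)) :
    ‖heatSol d u₀ τ x‖ₑ ^ 2 ≤ ENNReal.ofReal ((4 * Real.pi * τ) ^ (-(d : ℝ) / 2)) *
      ∫⁻ y, ENNReal.ofReal (Real.exp (-‖x - y‖ ^ 2 / (4 * τ))) * ‖u₀ y‖ₑ ^ 2 := by
  have hc : 0 < (4 * Real.pi * τ) ^ (-(d : ℝ) / 2) := by positivity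
  have hpp : ∀ y, ENNReal.ofReal (Real.exp (-‖x - y‖ ^ 2 / (8 * τ))) ^ 2 =
      ENNReal.ofReal (Real.exp (-‖x - y‖ ^ 2 / (4 * τ))) := by
    intro y
    rw [← ENNReal.ofReal_pow (Real.exp_pos _).le, ← Real.exp_nat_mul]
    congr 2; push_cast; field_simp; ring
  have h1 : ‖∫ y, Real.exp (-‖x - y‖ ^ 2 / (4 * τ)) * u₀ y‖ₑ ≤
      ∫⁻ y, ENNReal.ofReal (Real.exp (-‖x - y‖ ^ 2 / (8 * τ))) *
        (ENNReal.ofReal (Real.exp (-‖x - y‖ ^ 2 / (8 * τ))) * ‖u₀ y‖ₑ) := by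
    refine (enorm_integral_le_lintegral_enorm _).trans (le_of_eq ?_)
    refine lintegral_congr fun y => ?_
    rw [enorm_mul, Real.enorm_of_nonneg (Real.exp_pos _).le, ← hpp, sq, mul_assoc]
  have hm : Measurable fun y : EuclideanSpace ℝ (Fin d) =>
      ENNReal.ofReal (Real.exp (-‖x - y‖ ^ 2 / (8 * τ))) := by fun_prop
  have h2 := lint_cs (μ := volume) hm.aemeasurable (hm.aemeasurable.mul hu.enorm)
  simp only [Pi.mul_apply, mul_pow, hpp] at h2
  rw [gauss_lint hτ] at h2
  rw [heatSol, enorm_mul, mul_pow, Real.enorm_of_nonneg hc.le]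
  calc ENNReal.ofReal ((4 * Real.pi * τ) ^ (-(d : ℝ) / 2)) ^ 2 *
      ‖∫ y, Real.exp (-‖x - y‖ ^ 2 / (4 * τ)) * u₀ y‖ₑ ^ 2
      ≤ ENNReal.ofReal ((4 * Real.pi * τ) ^ (-(d : ℝ) / 2)) ^ 2 *
        (ENNReal.ofReal ((4 * Real.pi * τ) ^ ((d : ℝ) / 2)) *
          ∫⁻ y, ENNReal.ofReal (Real.exp (-‖x - y‖ ^ 2 / (4 * τ))) * ‖u₀ y‖ₑ ^ 2) := by
        gcongr
        exact (pow_le_pow_left' h1 2).trans h2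
    _ = _ := by
        rw [← mul_assoc]
        congr 1
        rw [← ENNReal.ofReal_pow hc.le, ← ENNReal.ofReal_mul (by positivity), sq, mul_assoc,
          ← Real.rpow_add (by positivity)]
        congr 1
        rw [show -(d : ℝ) / 2 + d / 2 = 0 by ring, Real.rpow_zero, mul_one]

lemma tail_bound (d : ℕ) : ∃ K : ℝ, 1 ≤ K ∧ ∀ τ : ℝ, 0 < τ →
    ∀ u₀ : EuclideanSpace ℝ (Fin d) → ℝ, MemLp u₀ 2 volume → ∀ s : Finset (Fin d → ℤ),
    ∀ ρ : ℝ, 0 < ρ → (∀ n ∉ s, ρ ≤ ‖zpt n‖) →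
    (∑' n, if n ∈ s then 0 else ‖heatSol d u₀ τ (zpt n)‖ₑ ^ 2) ≤
      ENNReal.ofReal (K * (1 + τ ^ (-(d : ℝ) / 2)) * (ρ ^ 2)⁻¹) *
        ∫⁻ y, ENNReal.ofReal (‖y‖ ^ 2 + τ) * ‖u₀ y‖ₑ ^ 2 := by
  obtain ⟨K, hK, hKG⟩ := lattice_gauss d
  refine ⟨16 * K, by linarith, fun τ hτ u₀ hu s ρ hρ hs => ?_⟩
  set c := (4 * Real.pi * τ) ^ (-(d : ℝ) / 2) with hc
  have hc0 : 0 < c := by positivity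
  have hpt : ∀ (n : Fin d → ℤ) (y : EuclideanSpace ℝ (Fin d)), n ∉ s →
      Real.exp (-‖zpt n - y‖ ^ 2 / (4 * τ)) ≤
      (ρ ^ 2)⁻¹ * 16 * (‖y‖ ^ 2 + τ) * Real.exp (-(1 / (8 * τ) * ‖zpt n - y‖ ^ 2)) := by
    intro n y hn
    set t := 1 / (8 * τ) * ‖zpt n - y‖ ^ 2 with ht
    have ht0 : 0 ≤ t := by positivity
    have e1 : -‖zpt n - y‖ ^ 2 / (4 * τ) = -t + -t := by rw [ht]; field_simp; ring
    have e2 : ‖zpt n - y‖ ^ 2 = 8 * τ * t := by rw [ht]; field_simp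
    have h1 : ρ ^ 2 ≤ 2 * (8 * τ * t) + 2 * ‖y‖ ^ 2 := by
      have h2 : ‖zpt n‖ ≤ ‖zpt n - y‖ + ‖y‖ := by
        simpa using norm_add_le (zpt n - y) y
      have h3 := hs n hn
      rw [← e2]
      have : ρ ^ 2 ≤ (‖zpt n - y‖ + ‖y‖) ^ 2 := by
        have := h3.trans h2
        gcongr
      nlinarith [sq_nonneg (‖zpt n - y‖ - ‖y‖)]
    have h4 : t * Real.exp (-t) ≤ 1 := by
      have := Real.add_one_le_exp t
      rw [Real.exp_neg, ← div_eq_mul_inv, div_le_one (Real.exp_pos _)]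
      linarith
    have h5 : Real.exp (-t) ≤ 1 := Real.exp_le_one_iff.2 (by linarith)
    have h6 : ρ ^ 2 * Real.exp (-t) ≤ 16 * (‖y‖ ^ 2 + τ) := by
      calc ρ ^ 2 * Real.exp (-t) ≤ (2 * (8 * τ * t) + 2 * ‖y‖ ^ 2) * Real.exp (-t) := by gcongr
        _ = 16 * τ * (t * Real.exp (-t)) + 2 * ‖y‖ ^ 2 * Real.exp (-t) := by ring
        _ ≤ 16 * τ * 1 + 2 * ‖y‖ ^ 2 * 1 := by gcongr
        _ ≤ _ := by nlinarith [sq_nonneg ‖y‖]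
    rw [e1, Real.exp_add]
    gcongr
    rw [mul_assoc, inv_mul_eq_div, le_div_iff₀ (by positivity), mul_comm]
    exact h6
  have hmeas : ∀ n : Fin d → ℤ, Measurable fun y : EuclideanSpace ℝ (Fin d) =>
      ENNReal.ofReal (Real.exp (-(1 / (8 * τ) * ‖zpt n - y‖ ^ 2))) := fun n => by fun_prop
  set B : EuclideanSpace ℝ (Fin d) → ℝ≥0∞ := fun y => ENNReal.ofReal (‖y‖ ^ 2 + τ) * ‖u₀ y‖ₑ ^ 2 with hB
  have hBm : AEMeasurable B := by
    refine AEMeasurable.mul (by fun_prop) (hu.1.enorm.pow_const 2)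
  have hconst : c * (1 + (1 / (8 * τ)) ^ (-(d : ℝ) / 2)) ≤ 1 + τ ^ (-(d : ℝ) / 2) := by
    have hd0 : -(d : ℝ) / 2 ≤ 0 := by
      have : (0:ℝ) ≤ d := by positivity
      linarith
    have h1 : c ≤ τ ^ (-(d : ℝ) / 2) :=
      Real.rpow_le_rpow_of_nonpos hτ (by nlinarith [Real.pi_gt_three]) hd0
    have h2 : c * (1 / (8 * τ)) ^ (-(d : ℝ) / 2) ≤ 1 := by
      rw [hc, ← Real.mul_rpow (by positivity) (by positivity)]
      apply Real.rpow_le_one_of_one_le_of_nonpos _ hd0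
      rw [show 4 * Real.pi * τ * (1 / (8 * τ)) = Real.pi / 2 by field_simp; norm_num]
      linarith [Real.pi_gt_three]
    linarith
  calc (∑' n, if n ∈ s then 0 else ‖heatSol d u₀ τ (zpt n)‖ₑ ^ 2)
      ≤ ∑' n : Fin d → ℤ, ENNReal.ofReal (c * ((ρ ^ 2)⁻¹ * 16)) *
        ∫⁻ y, ENNReal.ofReal (Real.exp (-(1 / (8 * τ) * ‖zpt n - y‖ ^ 2))) * B y := by
        refine ENNReal.tsum_le_tsum fun n => ?_
        split_ifs with hn
        · simp
        · refine (heat_pt hτ hu.1 _).trans ?_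
          rw [ENNReal.ofReal_mul hc0.le, mul_assoc (ENNReal.ofReal c), ← hc]
          gcongr
          rw [← lintegral_const_mul' _ _ (by simp)]
          refine lintegral_mono fun y => ?_
          simp only [hB]
          rw [← mul_assoc, ← mul_assoc, ← ENNReal.ofReal_mul (by positivity),
            ← ENNReal.ofReal_mul (by positivity)]
          gcongr
          refine (hpt n y hn).trans (le_of_eq ?_)
          ring
    _ = ENNReal.ofReal (c * ((ρ ^ 2)⁻¹ * 16)) * ∫⁻ y,
        (∑' n : Fin d → ℤ, ENNReal.ofReal (Real.exp (-(1 / (8 * τ) * ‖zpt n - y‖ ^ 2)))) * B y := by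
        rw [ENNReal.tsum_mul_left]
        congr 1
        refine (lintegral_tsum fun n => (hmeas n).aemeasurable.mul hBm).symm.trans ?_
        refine lintegral_congr fun y => ?_
        exact ENNReal.tsum_mul_right
    _ ≤ ENNReal.ofReal (c * ((ρ ^ 2)⁻¹ * 16)) * ∫⁻ y,
        ENNReal.ofReal (K * (1 + (1 / (8 * τ)) ^ (-(d : ℝ) / 2))) * B y := by
        gcongr with y
        exact hKG _ (by positivity) _
    _ ≤ _ := by
        rw [lintegral_const_mul' _ _ (by simp), ← mul_assoc, ← ENNReal.ofReal_mul (by positivity)]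
        gcongr ENNReal.ofReal ?_ * _
        calc _ = (16 * K * (ρ ^ 2)⁻¹) * (c * (1 + (1 / (8 * τ)) ^ (-(d : ℝ) / 2))) := by ring
          _ ≤ (16 * K * (ρ ^ 2)⁻¹) * (1 + τ ^ (-(d : ℝ) / 2)) := by gcongr
          _ = _ := by ring
lemma lint_scale {d : ℕ} {N : ℝ} (hN : 0 < N) (F : EuclideanSpace ℝ (Fin d) → ℝ≥0∞) :
    ∫⁻ x, F (N • x) = ENNReal.ofReal ((N ^ d)⁻¹) * ∫⁻ x, F x := by
  have h := Measure.map_addHaar_smul (volume : Measure (EuclideanSpace ℝ (Fin d))) hN.ne'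
  have he : MeasurableEmbedding (fun x : EuclideanSpace ℝ (Fin d) => N • x) :=
    (Homeomorph.smulOfNeZero N hN.ne').measurableEmbedding
  rw [← he.lintegral_map, h, lintegral_smul_measure, finrank_euclideanSpace_fin,
    abs_of_pos (by positivity), smul_eq_mul]

lemma scale_qmp {d : ℕ} {N : ℝ} (hN : 0 < N) :
    Measure.QuasiMeasurePreserving (fun x : EuclideanSpace ℝ (Fin d) => N • x) volume volume := by
  refine ⟨by fun_prop, ?_⟩
  rw [Measure.map_addHaar_smul _ hN.ne']
  exact Measure.smul_absolutelyContinuous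

lemma scale_sq {d : ℕ} {N : ℝ} (hN : 0 < N) (f : EuclideanSpace ℝ (Fin d) → ℝ) :
    eLpNorm (fun x => f (N • x)) 2 volume ^ 2 =
      ENNReal.ofReal ((N ^ d)⁻¹) * eLpNorm f 2 volume ^ 2 := by
  rw [eLpNorm_two_sq, eLpNorm_two_sq, ← lint_scale hN (fun x => ‖f x‖ₑ ^ 2)]

lemma scale_memLp {d : ℕ} {N : ℝ} (hN : 0 < N) {f : EuclideanSpace ℝ (Fin d) → ℝ}
    (hf : MemLp f 2 volume) : MemLp (fun x => f (N • x)) 2 volume := by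
  refine ⟨hf.1.comp_quasiMeasurePreserving (scale_qmp hN), ?_⟩
  have h : eLpNorm (fun x => f (N • x)) 2 volume ^ 2 < ∞ := by
    rw [scale_sq hN]
    exact ENNReal.mul_lt_top ENNReal.ofReal_lt_top (ENNReal.pow_lt_top hf.2)
  simpa using h

lemma heat_scale {d : ℕ} {N T : ℝ} (hN : 0 < N) (hT : 0 < T) (u₀ : EuclideanSpace ℝ (Fin d) → ℝ)
    (x : EuclideanSpace ℝ (Fin d)) :
    heatSol d u₀ T x = heatSol d (fun y => u₀ (N⁻¹ • y)) (T * N ^ 2) (N • x) := by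
  rw [heatSol, heatSol]
  have h := Measure.integral_comp_inv_smul (volume : Measure (EuclideanSpace ℝ (Fin d)))
    (fun y => Real.exp (-‖x - y‖ ^ 2 / (4 * T)) * u₀ y) N
  have e : ∀ y : EuclideanSpace ℝ (Fin d), -‖N • x - y‖ ^ 2 / (4 * (T * N ^ 2)) =
      -‖x - N⁻¹ • y‖ ^ 2 / (4 * T) := by
    intro y
    have : N • x - y = N • (x - N⁻¹ • y) := by
      rw [smul_sub, smul_smul, mul_inv_cancel₀ hN.ne', one_smul]
    rw [this, norm_smul, Real.norm_eq_abs, abs_of_pos hN]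
    field_simp
  simp only [e]
  rw [h, finrank_euclideanSpace_fin, abs_of_pos (by positivity), smul_eq_mul, ← mul_assoc]
  congr 1
  rw [show 4 * Real.pi * (T * N ^ 2) = 4 * Real.pi * T * N ^ 2 by ring,
    Real.mul_rpow (x := 4 * Real.pi * T) (y := N ^ 2) (by positivity) (by positivity), mul_assoc (_ ^ _)]
  have : (N ^ 2) ^ (-(d : ℝ) / 2) * N ^ d = 1 := by
    rw [← Real.rpow_natCast N d, ← Real.rpow_natCast N 2, ← Real.rpow_mul hN.le,
      ← Real.rpow_add hN]
    rw [show ((2:ℕ):ℝ) * (-(d : ℝ) / 2) + d = 0 by push_cast; ring, Real.rpow_zero]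
  rw [this, mul_one]

lemma lattice_zpt {d : ℕ} {N : ℝ} (hN : 0 < N) (n : Fin d → ℤ) :
    N • latticePt d N n = zpt n := by
  ext j
  simp only [latticePt, zpt, PiLp.smul_apply, smul_eq_mul]
  field_simp

lemma T_bound {d : ℕ} (hd : 0 < d) {T : ℝ} (hT : 0 < T) :
    1 + T ≤ ((1 + T ^ ((d : ℝ) / 2)) * (1 + T ^ (-(1 : ℝ) / 2))) ^ 2 := by
  have ha : 0 < T ^ ((d : ℝ) / 2) := by positivity
  have hq : 0 < T ^ (-(1 : ℝ) / 2) := by positivity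
  have h1 : (1:ℝ) ≤ d := by exact_mod_cast hd
  rcases le_total T 1 with h | h
  · have e : (1:ℝ) ≤ T ^ (-(1 : ℝ) / 2) := Real.one_le_rpow_of_pos_of_le_one_of_nonpos hT h (by norm_num)
    have : (2:ℝ) ≤ (1 + T ^ ((d : ℝ) / 2)) * (1 + T ^ (-(1 : ℝ) / 2)) := by nlinarith
    nlinarith
  · have e : T ≤ (T ^ ((d : ℝ) / 2)) ^ 2 := by
      rw [← Real.rpow_natCast, ← Real.rpow_mul hT.le]
      calc T = T ^ (1:ℝ) := (Real.rpow_one T).symm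
        _ ≤ _ := Real.rpow_le_rpow_of_exponent_le h (by push_cast; linarith)
    have : 1 + T ^ ((d : ℝ) / 2) ≤ (1 + T ^ ((d : ℝ) / 2)) * (1 + T ^ (-(1 : ℝ) / 2)) := by nlinarith
    calc 1 + T ≤ (1 + T ^ ((d : ℝ) / 2)) ^ 2 := by nlinarith
      _ ≤ _ := by gcongr

lemma main_est (d : ℕ) : ∃ C : ℝ, 1 ≤ C ∧
    ∀ u₀ : EuclideanSpace ℝ (Fin d) → ℝ, MemLp u₀ 2 volume →
      ∀ T N r : ℝ, 0 < T → 0 < N → 1 ≤ r →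
      ∀ s : Finset (Fin d → ℤ), (∀ n : Fin d → ℤ, n ∈ s ↔ ‖latticePt d N n‖ < r) →
      MemLp (fun x => heatSol d u₀ T x - ∑ n ∈ s, heatSol d u₀ T (latticePt d N n) * fN d N n x) 2
        volume ∧
      eLpNorm (fun x => heatSol d u₀ T x - ∑ n ∈ s, heatSol d u₀ T (latticePt d N n) * fN d N n x) 2
        volume ^ 2 ≤
      ENNReal.ofReal (C * (1 + (T * N ^ 2) ^ (-(d : ℝ) / 2)) *
        (Real.exp (-(2 * (T * N ^ 2))) + (1 + T) * (r⁻¹) ^ 2)) *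
        ∫⁻ x, ENNReal.ofReal ((1 + ‖x‖) ^ 2) * ‖u₀ x‖ₑ ^ 2 := by
  obtain ⟨K₁, hK₁, hS⟩ := sampling d
  obtain ⟨K₂, hK₂, hA⟩ := tail_bound d
  refine ⟨3 * K₁ + 2 * K₂, by linarith, fun u₀ hu T N r hT hN hr s hs => ?_⟩
  have hτ : 0 < T * N ^ 2 := by positivity
  have hN' : 0 < N⁻¹ := by positivity
  have hr0 : 0 < r := by linarith
  have hu₁ := scale_memLp hN' hu
  have hs' : ∀ n ∉ s, r * N ≤ ‖zpt n‖ := by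
    intro n hn
    rw [hs, not_lt] at hn
    rw [← lattice_zpt hN, norm_smul, Real.norm_eq_abs, abs_of_pos hN, mul_comm]
    gcongr
  obtain ⟨hS1, hS2⟩ := hS _ hτ _ hu₁ s
  have hA2 := hA _ hτ _ hu₁ s (r * N) (by positivity) hs'
  have hR : (fun x => heatSol d u₀ T x - ∑ n ∈ s, heatSol d u₀ T (latticePt d N n) * fN d N n x) =
      fun x => (fun x => heatSol d (fun y => u₀ (N⁻¹ • y)) (T * N ^ 2) x -
        ∑ n ∈ s, heatSol d (fun y => u₀ (N⁻¹ • y)) (T * N ^ 2) (zpt n) * fN d 1 n x) (N • x) := by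
    funext x
    simp only [heat_scale hN hT u₀, lattice_zpt hN]
    congr 1
    refine Finset.sum_congr rfl fun n _ => ?_
    simp [fN]
  rw [hR]
  generalize (fun x => heatSol d (fun y => u₀ (N⁻¹ • y)) (T * N ^ 2) x -
        ∑ n ∈ s, heatSol d (fun y => u₀ (N⁻¹ • y)) (T * N ^ 2) (zpt n) * fN d 1 n x) = G at hS1 hS2 ⊢
  refine ⟨scale_memLp hN hS1, ?_⟩
  rw [scale_sq hN]
  generalize eLpNorm G 2 volume = Z at hS2 ⊢
  rw [scale_sq hN'] at hS2
  have e1 : ∫⁻ y, ENNReal.ofReal (‖y‖ ^ 2 + T * N ^ 2) * ‖u₀ (N⁻¹ • y)‖ₑ ^ 2 ≤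
      ENNReal.ofReal (((N⁻¹) ^ d)⁻¹) * (ENNReal.ofReal (N ^ 2 * (1 + T)) *
        ∫⁻ x, ENNReal.ofReal ((1 + ‖x‖) ^ 2) * ‖u₀ x‖ₑ ^ 2) := by
    rw [← lintegral_const_mul' _ _ (by simp), ← lint_scale hN']
    refine lintegral_mono fun y => ?_
    rw [← mul_assoc, ← ENNReal.ofReal_mul (by positivity)]
    gcongr
    rw [norm_smul, Real.norm_eq_abs, abs_of_pos hN']
    have hy := norm_nonneg y
    have : ‖y‖ ^ 2 = N ^ 2 * (N⁻¹ * ‖y‖) ^ 2 := by field_simp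
    rw [this]
    have h0 : 0 ≤ N⁻¹ * ‖y‖ := by positivity
    generalize N⁻¹ * ‖y‖ = z at h0
    have : z ^ 2 + T ≤ (1 + T) * (1 + z) ^ 2 := by nlinarith [mul_nonneg hT.le h0, mul_nonneg hT.le (sq_nonneg z)]
    calc _ = N ^ 2 * (z ^ 2 + T) := by ring
      _ ≤ N ^ 2 * ((1 + T) * (1 + z) ^ 2) := by gcongr
      _ = _ := by ring
  have e2 : eLpNorm u₀ 2 volume ^ 2 ≤ ∫⁻ x, ENNReal.ofReal ((1 + ‖x‖) ^ 2) * ‖u₀ x‖ₑ ^ 2 := by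
    rw [eLpNorm_two_sq]
    refine lintegral_mono fun y => ?_
    refine le_mul_of_one_le_left' ?_
    rw [ENNReal.one_le_ofReal]
    nlinarith [norm_nonneg y]
  generalize (∫⁻ x, ENNReal.ofReal ((1 + ‖x‖) ^ 2) * ‖u₀ x‖ₑ ^ 2) = J at e1 e2 ⊢
  have hA3 := hA2.trans (mul_le_mul_right e1 _)
  generalize (∑' n, if n ∈ s then 0 else
    ‖heatSol d (fun y => u₀ (N⁻¹ • y)) (T * N ^ 2) (zpt n)‖ₑ ^ 2) = W at hA3 hS2
  set P := 1 + (T * N ^ 2) ^ (-(d : ℝ) / 2) with hP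
  have hP0 : 0 < P := by positivity
  set E := Real.exp (-(2 * (T * N ^ 2))) with hE
  have hE0 : 0 < E := Real.exp_pos _
  calc ENNReal.ofReal ((N ^ d)⁻¹) * Z ^ 2 ≤ ENNReal.ofReal ((N ^ d)⁻¹) *
      (ENNReal.ofReal (3 * (K₁ * P * E)) * (ENNReal.ofReal (((N⁻¹) ^ d)⁻¹) * J) +
        2 * (ENNReal.ofReal (K₂ * P * ((r * N) ^ 2)⁻¹) * (ENNReal.ofReal (((N⁻¹) ^ d)⁻¹) *
          (ENNReal.ofReal (N ^ 2 * (1 + T)) * J)))) := by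
        gcongr
        refine hS2.trans ?_
        gcongr
    _ = ENNReal.ofReal (3 * K₁ * P * E + 2 * K₂ * P * ((1 + T) * (r⁻¹) ^ 2)) * J := by
        have h2 : (2 : ℝ≥0∞) = ENNReal.ofReal 2 := by simp
        rw [h2]
        simp only [← mul_assoc]
        rw [← ENNReal.ofReal_mul (by positivity), ← ENNReal.ofReal_mul (by positivity),
          ← ENNReal.ofReal_mul (by positivity), ← ENNReal.ofReal_mul (by positivity), ← add_mul,
          ← ENNReal.ofReal_add (by positivity) (by positivity), ← mul_assoc,
          ← ENNReal.ofReal_mul (by positivity)]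
        congr 2
        rw [inv_pow]
        field_simp
    _ ≤ _ := by
        gcongr
        have h1 : 0 ≤ P * E := by positivity
        have h2 : 0 ≤ P * ((1 + T) * (r⁻¹) ^ 2) := by positivity
        have h3 : 0 ≤ K₁ * (P * ((1 + T) * (r⁻¹) ^ 2)) := by positivity
        have h4 : 0 ≤ K₂ * (P * E) := by positivity
        nlinarith
/-- Weak asymptotic observability identity: there is `C = C(d) > 0` such that for every
`u₀ ∈ L²(ℝ^d)` with `∫ (1+|x|)² |u₀(x)|² dx < ∞`, every `T > 0`, `N > 0`, `r ≥ 1`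
(where `s` is the finite set of `n ∈ ℤ^d` with `|n/N| < r`), there is `R ∈ L²(ℝ^d)` with
`‖R‖ ≤ C (1 + (TN²)^{-d/4}) (e^{-TN²} + (1+T^{d/2})(1+T^{-1/2}) r^{-1}) (∫ (1+|x|)²|u₀|²)^{1/2}`
and `u(T,·) = Σ_{|n/N| < r} u(T,n/N) f_{N,n} + R` in `L²(ℝ^d)`. -/
theorem statement14 (d : ℕ) (hd : 0 < d) :
    ∃ C : ℝ, 0 < C ∧
      ∀ u₀ : EuclideanSpace ℝ (Fin d) → ℝ, MemLp u₀ 2 volume →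
        Integrable (fun x => (1 + ‖x‖) ^ 2 * (u₀ x) ^ 2) volume →
      ∀ T N r : ℝ, 0 < T → 0 < N → 1 ≤ r →
      ∀ s : Finset (Fin d → ℤ), (∀ n : Fin d → ℤ, n ∈ s ↔ ‖latticePt d N n‖ < r) →
        ∃ R : EuclideanSpace ℝ (Fin d) → ℝ, MemLp R 2 volume ∧
          l2norm d R ≤
            C * (1 + (T * N ^ 2) ^ (-(d : ℝ) / 4)) *
              (Real.exp (-(T * N ^ 2)) +
                (1 + T ^ ((d : ℝ) / 2)) * (1 + T ^ (-(1 : ℝ) / 2)) * r⁻¹) *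
              Real.sqrt (∫ x, (1 + ‖x‖) ^ 2 * (u₀ x) ^ 2) ∧
          ∀ᵐ x ∂(volume : Measure (EuclideanSpace ℝ (Fin d))),
            heatSol d u₀ T x =
              (∑ n ∈ s, heatSol d u₀ T (latticePt d N n) * fN d N n x) + R x := by
  obtain ⟨C, hC, hm⟩ := main_est d
  refine ⟨C, by linarith, fun u₀ hu hint T N r hT hN hr s hs => ?_⟩
  obtain ⟨h1, h2⟩ := hm u₀ hu T N r hT hN hr s hs
  refine ⟨_, h1, ?_, Eventually.of_forall fun x => by ring⟩
  have hr0 : 0 < r := by linarith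
  have hτ : 0 < T * N ^ 2 := by positivity
  have e1 : ∫⁻ x, ENNReal.ofReal ((1 + ‖x‖) ^ 2) * ‖u₀ x‖ₑ ^ 2 =
      ENNReal.ofReal (∫ x, (1 + ‖x‖) ^ 2 * (u₀ x) ^ 2) := by
    rw [ofReal_integral_eq_lintegral_ofReal hint (Eventually.of_forall fun x => by positivity)]
    refine lintegral_congr fun x => ?_
    rw [ENNReal.ofReal_mul (by positivity), ← ofReal_norm, ← ENNReal.ofReal_pow (norm_nonneg _),
      Real.norm_eq_abs, sq_abs]
  have hI : 0 ≤ ∫ x, (1 + ‖x‖) ^ 2 * (u₀ x) ^ 2 := integral_nonneg fun x => by positivity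
  rw [e1] at h2
  generalize (∫ x, (1 + ‖x‖) ^ 2 * (u₀ x) ^ 2) = I at h2 hI ⊢
  rw [← ENNReal.ofReal_mul (by positivity)] at h2
  have h3 : l2norm d (fun x => heatSol d u₀ T x -
      ∑ n ∈ s, heatSol d u₀ T (latticePt d N n) * fN d N n x) ^ 2 ≤
      C * (1 + (T * N ^ 2) ^ (-(d : ℝ) / 2)) *
        (Real.exp (-(2 * (T * N ^ 2))) + (1 + T) * (r⁻¹) ^ 2) * I := by
    rw [l2norm, ← ENNReal.toReal_pow]
    exact ENNReal.toReal_le_of_le_ofReal (by positivity) h2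
  have hTb := T_bound hd hT
  set a := (T * N ^ 2) ^ (-(d : ℝ) / 4) with ha
  have ha2 : (T * N ^ 2) ^ (-(d : ℝ) / 2) = a ^ 2 := by
    rw [ha, ← Real.rpow_natCast (_ ^ _) 2, ← Real.rpow_mul hτ.le]
    congr 1; push_cast; ring
  have ha0 : 0 ≤ a := by positivity
  have hE2 : Real.exp (-(2 * (T * N ^ 2))) = Real.exp (-(T * N ^ 2)) ^ 2 := by
    rw [← Real.exp_nat_mul]; congr 1; push_cast; ring
  rw [ha2, hE2] at h3
  have hE0 := Real.exp_pos (-(T * N ^ 2))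
  set E := Real.exp (-(T * N ^ 2))
  have hB0 : 0 ≤ (1 + T ^ ((d : ℝ) / 2)) * (1 + T ^ (-(1 : ℝ) / 2)) := by positivity
  set B := (1 + T ^ ((d : ℝ) / 2)) * (1 + T ^ (-(1 : ℝ) / 2))
  have hri : 0 ≤ r⁻¹ := by positivity
  refine le_of_sq_le_sq ?_ (by positivity)
  refine h3.trans ?_
  rw [mul_pow, Real.sq_sqrt hI, mul_pow, mul_pow]
  have f1 : C ≤ C ^ 2 := by nlinarith
  have f2 : 1 + a ^ 2 ≤ (1 + a) ^ 2 := by nlinarith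
  have f3 : E ^ 2 + (1 + T) * r⁻¹ ^ 2 ≤ (E + B * r⁻¹) ^ 2 := by
    have : (1 + T) * r⁻¹ ^ 2 ≤ B ^ 2 * r⁻¹ ^ 2 := by gcongr
    have h0 : 0 ≤ E * (B * r⁻¹) := by positivity
    nlinarith
  gcongr
end
end

section
/- Let T > 0, let α ∈ ℕ^d be a multi-index and let k ∈ ℕ. For every u₀ ∈ L²(ℝ^d) with ∫_{ℝ^d} (1+|x|)^{2k} |u₀(x)|² dx < ∞, the heat solution u with initial datum u₀ (which is smooth in x for t>0) satisfies ∫_{ℝ^d} (1+|x|)^{2k} |D_x^α u(T,x)|² dx ≤ (2d)^{k+1} (6^k (|α|+k)!)² (1+T)^k T^{−|α|} ∫_{ℝ^d} (1+|x|)^{2k} |u₀(x)|² dx, where D_x^α denotes the partial derivative of multi-order α in the space variable and |α| = α₁+⋯+α_d. -/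
open MeasureTheory Filter Topology Metric ENNReal NNReal

noncomputable section

/-- Partial derivative in the `j`-th coordinate direction. -/
def pderiv' (d : ℕ) (j : Fin d) (f : EuclideanSpace ℝ (Fin d) → ℝ) :
    EuclideanSpace ℝ (Fin d) → ℝ :=
  fun x => fderiv ℝ f x (EuclideanSpace.single j 1)

/-- The partial derivative `D^α` of multi-order `α ∈ ℕ^d`. -/
def mderiv (d : ℕ) (α : Fin d → ℕ) (f : EuclideanSpace ℝ (Fin d) → ℝ) :
    EuclideanSpace ℝ (Fin d) → ℝ :=
  ((List.finRange d).map (fun j => (pderiv' d j)^[α j])).foldr (· ∘ ·) id f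

/-! ### One dimensional Hermite-type polynomials -/

open Polynomial in
def HQ (b : ℝ) : ℕ → ℝ[X]
  | 0 => 1
  | n + 1 => derivative (HQ b n) - C (2 * b) * X * HQ b n

def hh (b : ℝ) (n : ℕ) (s : ℝ) : ℝ := (HQ b n).eval s * Real.exp (-b * s ^ 2)

open Polynomial in
theorem HQ_deriv (b : ℝ) (n : ℕ) :
    derivative (HQ b (n + 1)) = C (-(2 * b * (n + 1))) * HQ b n := by
  induction n with
  | zero => simp [HQ]
  | succ n ih =>
    have h : HQ b (n + 1 + 1) = derivative (HQ b (n + 1)) - C (2 * b) * X * HQ b (n + 1) := rfl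
    have h2 : HQ b (n + 1) = derivative (HQ b n) - C (2 * b) * X * HQ b n := rfl
    rw [h, derivative_sub, ih, derivative_mul, derivative_mul, ih]
    simp only [derivative_mul, derivative_C, derivative_X, zero_mul, zero_add, mul_one]
    have h3 : derivative (HQ b n) = HQ b (n + 1) + C (2 * b) * X * HQ b n := by rw [h2]; ring
    rw [h3]
    push_cast
    simp only [map_neg, map_mul, map_add, map_one]
    ring

theorem hh_hasDerivAt (b : ℝ) (n : ℕ) (s : ℝ) : HasDerivAt (hh b n) (hh b (n + 1) s) s := by
  have h1 := (HQ b n).hasDerivAt s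
  have h2 : HasDerivAt (fun s : ℝ => Real.exp (-b * s ^ 2))
      (Real.exp (-b * s ^ 2) * (-b * (2 * s))) s := by
    have := ((hasDerivAt_pow 2 s).const_mul (-b)).exp
    simpa using this
  have := h1.mul h2
  refine this.congr_deriv ?_
  simp [hh, HQ]
  ring

theorem hh_continuous (b : ℝ) (n : ℕ) : Continuous (hh b n) := by
  unfold hh
  have := (HQ b n).continuous
  fun_prop

theorem poly_bound (p : Polynomial ℝ) (c : ℝ) (hc : 0 < c) :
    ∃ C : ℝ, 0 ≤ C ∧ ∀ s : ℝ, |p.eval s| ≤ C * Real.exp (c * s ^ 2) := by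
  induction p using Polynomial.induction_on' with
  | add p q hp hq =>
    obtain ⟨C1, h1, h1'⟩ := hp
    obtain ⟨C2, h2, h2'⟩ := hq
    refine ⟨C1 + C2, by positivity, fun s => ?_⟩
    rw [Polynomial.eval_add, add_mul]
    exact (abs_add_le _ _).trans (add_le_add (h1' s) (h2' s))
  | monomial m a =>
    refine ⟨|a| * (m.factorial * Real.exp (1 / (4 * c))), by positivity, fun s => ?_⟩
    rw [Polynomial.eval_monomial, abs_mul, abs_pow, mul_assoc]
    refine mul_le_mul_of_nonneg_left ?_ (abs_nonneg _)
    have h := Real.pow_div_factorial_le_exp _ (abs_nonneg s) m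
    rw [div_le_iff₀ (by positivity)] at h
    refine h.trans ?_
    rw [mul_comm, mul_assoc, ← Real.exp_add]
    refine mul_le_mul_of_nonneg_left ?_ (by positivity)
    apply Real.exp_le_exp.mpr
    have : 1 / (4 * c) + c * s ^ 2 - |s| = c * (|s| - 1 / (2 * c)) ^ 2 := by
      rw [sub_sq, sq_abs]; field_simp; ring
    have : 0 ≤ c * (|s| - 1 / (2 * c)) ^ 2 := by positivity
    linarith

theorem poly_gauss_integrable (p : Polynomial ℝ) (b : ℝ) (hb : 0 < b) :
    Integrable (fun s : ℝ => p.eval s * Real.exp (-b * s ^ 2)) := by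
  obtain ⟨C, hC, h⟩ := poly_bound p (b / 2) (by positivity)
  refine Integrable.mono' ((integrable_exp_neg_mul_sq (half_pos hb)).const_mul C) ?_ ?_
  · have := p.continuous
    exact Continuous.aestronglyMeasurable (by fun_prop)
  · refine ae_of_all _ fun s => ?_
    rw [Real.norm_eq_abs, abs_mul, Real.abs_exp]
    calc _ ≤ C * Real.exp (b / 2 * s ^ 2) * Real.exp (-b * s ^ 2) := by
          gcongr; exact h s
      _ = _ := by rw [mul_assoc, ← Real.exp_add]; congr 2; ring

theorem HQ_sq_integrable (b : ℝ) (hb : 0 < b) (n : ℕ) :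
    Integrable (fun s : ℝ => (HQ b n).eval s ^ 2 * Real.exp (-b * s ^ 2)) := by
  have h := poly_gauss_integrable (HQ b n ^ 2) b hb
  refine h.congr (ae_of_all _ fun s => ?_)
  simp only [Polynomial.eval_pow]

theorem HQ_sq_integral (b : ℝ) (hb : 0 < b) (n : ℕ) :
    ∫ s : ℝ, (HQ b n).eval s ^ 2 * Real.exp (-b * s ^ 2)
      = n.factorial * (2 * b) ^ n * √(Real.pi / b) := by
  induction n with
  | zero => simpa [HQ] using integral_gaussian b
  | succ n ih =>
    have key := integral_mul_deriv_eq_deriv_mul_of_integrable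
      (u := fun s => (HQ b (n + 1)).eval s) (v := hh b n)
      (u' := fun s => (Polynomial.derivative (HQ b (n + 1))).eval s) (v' := hh b (n + 1))
      (fun s _ => (HQ b (n + 1)).hasDerivAt s) (fun s _ => hh_hasDerivAt b n s)
      (by
        convert! poly_gauss_integrable (HQ b (n + 1) * HQ b (n + 1)) b hb using 2 with s
        simp [hh, mul_assoc])
      (by
        convert! poly_gauss_integrable (Polynomial.derivative (HQ b (n + 1)) * HQ b n) b hb
          using 2 with s
        simp [hh, mul_assoc])
      (by
        convert! poly_gauss_integrable (HQ b (n + 1) * HQ b n) b hb using 2 with s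
        simp [hh, mul_assoc])
    have e1 : ∀ s : ℝ, (HQ b (n + 1)).eval s ^ 2 * Real.exp (-b * s ^ 2)
        = (HQ b (n + 1)).eval s * hh b (n + 1) s := fun s => by rw [hh]; ring
    have e2 : ∀ s : ℝ, (Polynomial.derivative (HQ b (n + 1))).eval s * hh b n s
        = (-(2 * b * (n + 1))) * ((HQ b n).eval s ^ 2 * Real.exp (-b * s ^ 2)) := fun s => by
      rw [HQ_deriv, hh, Polynomial.eval_mul, Polynomial.eval_C]; ring
    simp_rw [e1]
    rw [key]
    simp_rw [e2]
    rw [integral_const_mul, ih, Nat.factorial_succ]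
    push_cast
    ring

/-! ### The product kernels and differentiation under the integral -/

def KK (d : ℕ) (b : ℝ) (n : Fin d → ℕ) (z : EuclideanSpace ℝ (Fin d)) : ℝ :=
  ∏ j, hh b (n j) (z j)

def KU (d : ℕ) (b : ℝ) (u₀ : EuclideanSpace ℝ (Fin d) → ℝ) (n : Fin d → ℕ)
    (x : EuclideanSpace ℝ (Fin d)) : ℝ :=
  ∫ y, KK d b n (x - y) * u₀ y

theorem KK_eq (d : ℕ) (b : ℝ) (n : Fin d → ℕ) (z : EuclideanSpace ℝ (Fin d)) :
    KK d b n z = (∏ j, (HQ b (n j)).eval (z j)) * Real.exp (-b * ‖z‖ ^ 2) := by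
  simp only [KK, hh]
  rw [Finset.prod_mul_distrib, ← Real.exp_sum, EuclideanSpace.real_norm_sq_eq, Finset.mul_sum]

theorem KK_continuous (d : ℕ) (b : ℝ) (n : Fin d → ℕ) : Continuous (KK d b n) := by
  unfold KK
  refine continuous_finsetProd _ fun j _ => ?_
  have := hh_continuous b (n j)
  fun_prop

theorem KK_bound (d : ℕ) (b : ℝ) (hb : 0 < b) (n : Fin d → ℕ) :
    ∃ C : ℝ, 0 ≤ C ∧ ∀ z, |KK d b n z| ≤ C * Real.exp (-(b / 2) * ‖z‖ ^ 2) := by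
  choose C hC h using fun j => poly_bound (HQ b (n j)) (b / 2) (half_pos hb)
  refine ⟨∏ j, C j, Finset.prod_nonneg fun j _ => hC j, fun z => ?_⟩
  rw [KK_eq, abs_mul, Finset.abs_prod, Real.abs_exp]
  calc _ ≤ (∏ j, (C j * Real.exp (b / 2 * (z j) ^ 2))) * Real.exp (-b * ‖z‖ ^ 2) := by
        gcongr with j
        exact h j _
    _ = _ := by
      rw [Finset.prod_mul_distrib, ← Real.exp_sum, ← Finset.mul_sum,
        ← EuclideanSpace.real_norm_sq_eq, mul_assoc, ← Real.exp_add]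
      congr 2; ring

theorem KK_hasFDerivAt (d : ℕ) (b : ℝ) (n : Fin d → ℕ) (z : EuclideanSpace ℝ (Fin d)) :
    HasFDerivAt (KK d b n)
      (∑ i, KK d b (n + Pi.single i 1) z •
        (EuclideanSpace.proj i : EuclideanSpace ℝ (Fin d) →L[ℝ] ℝ)) z := by
  have h : ∀ j ∈ (Finset.univ : Finset (Fin d)),
      HasFDerivAt (fun z : EuclideanSpace ℝ (Fin d) => hh b (n j) (z j))
      (hh b (n j + 1) (z j) • (EuclideanSpace.proj j : EuclideanSpace ℝ (Fin d) →L[ℝ] ℝ)) z :=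
    fun j _ => by
      have h1 : HasFDerivAt (fun z : EuclideanSpace ℝ (Fin d) => z j)
          (EuclideanSpace.proj j : EuclideanSpace ℝ (Fin d) →L[ℝ] ℝ) z :=
        (EuclideanSpace.proj j : EuclideanSpace ℝ (Fin d) →L[ℝ] ℝ).hasFDerivAt
      exact (hh_hasDerivAt b (n j) (z j)).comp_hasFDerivAt z h1
  have := HasFDerivAt.finsetProd h
  refine this.congr_fderiv ?_
  refine Finset.sum_congr rfl fun i _ => ?_
  rw [smul_smul]
  congr 1
  rw [KK, ← Finset.prod_erase_mul _ _ (Finset.mem_univ i)]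
  congr 1
  · refine Finset.prod_congr rfl fun j hj => ?_
    have : j ≠ i := Finset.ne_of_mem_erase hj
    simp [this]
  · simp

theorem gauss_integrable (d : ℕ) (b : ℝ) (hb : 0 < b) :
    Integrable (fun z : EuclideanSpace ℝ (Fin d) => Real.exp (-b * ‖z‖ ^ 2)) := by
  by_contra h
  have h1 := GaussianFourier.integral_rexp_neg_mul_sq_norm (V := EuclideanSpace ℝ (Fin d)) hb
  rw [integral_undef h] at h1
  have : 0 < (Real.pi / b) ^ (Module.finrank ℝ (EuclideanSpace ℝ (Fin d)) / 2 : ℝ) := by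
    have := Real.pi_pos
    positivity
  linarith

theorem gauss_mul_integrable (d : ℕ) (b : ℝ) (hb : 0 < b) (x : EuclideanSpace ℝ (Fin d))
    (u₀ : EuclideanSpace ℝ (Fin d) → ℝ) (hmem : MemLp u₀ 2 volume) :
    Integrable (fun y => Real.exp (-b * ‖x - y‖ ^ 2) * u₀ y) := by
  have h : MemLp (fun y : EuclideanSpace ℝ (Fin d) => Real.exp (-b * ‖x - y‖ ^ 2)) 2 volume := by
    rw [memLp_two_iff_integrable_sq
      (Continuous.aestronglyMeasurable (by fun_prop))]
    have := (gauss_integrable d (2 * b) (by positivity)).comp_sub_left x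
    refine this.congr (ae_of_all _ fun y => ?_)
    simp only
    rw [sq (Real.exp _), ← Real.exp_add]
    congr 1; ring
  exact h.integrable_mul hmem

theorem KU_hasFDerivAt (d : ℕ) (b : ℝ) (hb : 0 < b) (u₀ : EuclideanSpace ℝ (Fin d) → ℝ)
    (hmem : MemLp u₀ 2 volume) (n : Fin d → ℕ) (x₀ : EuclideanSpace ℝ (Fin d)) :
    ∃ L : EuclideanSpace ℝ (Fin d) →L[ℝ] ℝ, HasFDerivAt (KU d b u₀ n) L x₀ ∧
      ∀ i, L (EuclideanSpace.single i 1) = KU d b u₀ (n + Pi.single i 1) x₀ := by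
  let P : Fin d → (EuclideanSpace ℝ (Fin d) →L[ℝ] ℝ) := fun i => EuclideanSpace.proj i
  let F' : EuclideanSpace ℝ (Fin d) → EuclideanSpace ℝ (Fin d) →
      (EuclideanSpace ℝ (Fin d) →L[ℝ] ℝ) :=
    fun x y => u₀ y • ∑ i, KK d b (n + Pi.single i 1) (x - y) • P i
  choose C hC hCb using fun i => KK_bound d b hb (n + Pi.single i 1)
  let D : ℝ := ∑ i, C i * ‖P i‖
  have hD : 0 ≤ D := Finset.sum_nonneg fun i _ => mul_nonneg (hC i) (norm_nonneg _)
  let bound : EuclideanSpace ℝ (Fin d) → ℝ := fun y =>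
    D * Real.exp (b / 2) * |Real.exp (-(b / 4) * ‖x₀ - y‖ ^ 2) * u₀ y|
  have hum : AEStronglyMeasurable u₀ volume := hmem.1
  have hKm : ∀ m x, AEStronglyMeasurable (fun y => KK d b m (x - y)) volume := fun m x => by
    have := KK_continuous d b m
    exact Continuous.aestronglyMeasurable (by fun_prop)
  have hbi : Integrable bound :=
    ((gauss_mul_integrable d (b / 4) (by positivity) x₀ u₀ hmem).abs).const_mul _
  have hF'm : AEStronglyMeasurable (F' x₀) volume := by
    refine hum.smul ?_
    refine Finset.aestronglyMeasurable_fun_sum _ fun i _ => ?_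
    exact (hKm _ _).smul_const _
  have hbd : ∀ y, ∀ x ∈ ball x₀ 1, ‖F' x y‖ ≤ bound y := by
    intro y x hx
    have e1 : ‖∑ i, KK d b (n + Pi.single i 1) (x - y) • P i‖
        ≤ D * Real.exp (-(b / 2) * ‖x - y‖ ^ 2) := by
      refine (norm_sum_le _ _).trans ?_
      rw [Finset.sum_mul]
      refine Finset.sum_le_sum fun i _ => ?_
      rw [norm_smul, Real.norm_eq_abs]
      calc _ ≤ (C i * Real.exp (-(b / 2) * ‖x - y‖ ^ 2)) * ‖P i‖ := by
            gcongr; exact hCb i _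
        _ = _ := by ring
    have e2 : -(b / 2) * ‖x - y‖ ^ 2 ≤ b / 2 + -(b / 4) * ‖x₀ - y‖ ^ 2 := by
      have h1 : ‖x₀ - y‖ ≤ ‖x - y‖ + 1 := by
        have h2 : ‖x₀ - x‖ < 1 := by rw [← dist_eq_norm, dist_comm]; exact hx
        have h3 : ‖x₀ - y‖ ≤ ‖x₀ - x‖ + ‖x - y‖ := by
          have := norm_add_le (x₀ - x) (x - y)
          rwa [sub_add_sub_cancel] at this
        linarith
      have h4 : ‖x₀ - y‖ ^ 2 ≤ 2 * ‖x - y‖ ^ 2 + 2 := by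
        nlinarith [norm_nonneg (x₀ - y), norm_nonneg (x - y), sq_nonneg (‖x - y‖ - 1)]
      nlinarith
    calc ‖F' x y‖ = |u₀ y| * ‖∑ i, KK d b (n + Pi.single i 1) (x - y) • P i‖ := by
          rw [norm_smul, Real.norm_eq_abs]
      _ ≤ |u₀ y| * (D * Real.exp (b / 2 + -(b / 4) * ‖x₀ - y‖ ^ 2)) := by
          refine mul_le_mul_of_nonneg_left (e1.trans ?_) (abs_nonneg _)
          exact mul_le_mul_of_nonneg_left (Real.exp_le_exp.mpr e2) hD
      _ = bound y := by
          simp only [bound]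
          rw [abs_mul, Real.abs_exp, Real.exp_add]; ring
  have hF'i : Integrable (F' x₀) :=
    hbi.mono' hF'm (ae_of_all _ fun y => hbd y x₀ (mem_ball_self one_pos))
  refine ⟨∫ y, F' x₀ y, ?_, fun i => ?_⟩
  · refine hasFDerivAt_integral_of_dominated_of_fderiv_le (bound := bound)
      (ball_mem_nhds x₀ one_pos) (Eventually.of_forall fun x => (hKm n x).mul hum) ?_ hF'm
      (ae_of_all _ hbd) hbi (ae_of_all _ fun y x _ => ?_)
    · obtain ⟨C', hC', hb'⟩ := KK_bound d b hb n
      refine Integrable.mono'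
        (((gauss_mul_integrable d (b / 2) (by positivity) x₀ u₀ hmem).abs).const_mul C')
        ((hKm n x₀).mul hum) (ae_of_all _ fun y => ?_)
      rw [Real.norm_eq_abs, abs_mul, abs_mul, Real.abs_exp, ← mul_assoc]
      exact mul_le_mul_of_nonneg_right (hb' _) (abs_nonneg _)
    · have h1 : HasFDerivAt (fun x => KK d b n (x - y))
          (∑ i, KK d b (n + Pi.single i 1) (x - y) • P i) x := by
        have := (KK_hasFDerivAt d b n (x - y)).comp x ((hasFDerivAt_id x).sub_const y)
        simpa [Function.comp_def] using this
      exact h1.mul_const (u₀ y)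
  · rw [ContinuousLinearMap.integral_apply hF'i]
    unfold KU
    congr 1
    funext y
    simp [F', P]
    ring

theorem KU_pderiv (d : ℕ) (b : ℝ) (hb : 0 < b) (u₀ : EuclideanSpace ℝ (Fin d) → ℝ)
    (hmem : MemLp u₀ 2 volume) (n : Fin d → ℕ) (i : Fin d) (c : ℝ) :
    pderiv' d i (fun x => c * KU d b u₀ n x) = fun x => c * KU d b u₀ (n + Pi.single i 1) x := by
  funext x
  obtain ⟨L, hL, hL'⟩ := KU_hasFDerivAt d b hb u₀ hmem n x
  rw [pderiv', (hL.const_mul c).fderiv]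
  simp [hL']

theorem KU_pderiv_iter (d : ℕ) (b : ℝ) (hb : 0 < b) (u₀ : EuclideanSpace ℝ (Fin d) → ℝ)
    (hmem : MemLp u₀ 2 volume) (n : Fin d → ℕ) (i : Fin d) (c : ℝ) (m : ℕ) :
    (pderiv' d i)^[m] (fun x => c * KU d b u₀ n x)
      = fun x => c * KU d b u₀ (n + Pi.single i m) x := by
  induction m with
  | zero => simp
  | succ m ih =>
    rw [Function.iterate_succ_apply', ih, KU_pderiv d b hb u₀ hmem, add_assoc, ← Pi.single_add]

theorem KU_mderiv (d : ℕ) (b : ℝ) (hb : 0 < b) (u₀ : EuclideanSpace ℝ (Fin d) → ℝ)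
    (hmem : MemLp u₀ 2 volume) (α : Fin d → ℕ) (c : ℝ) :
    mderiv d α (fun x => c * KU d b u₀ 0 x) = fun x => c * KU d b u₀ α x := by
  have key : ∀ l : List (Fin d),
      (l.map (fun j => (pderiv' d j)^[α j])).foldr (· ∘ ·) id (fun x => c * KU d b u₀ 0 x)
      = fun x => c * KU d b u₀ (l.map (fun j => (Pi.single j (α j) : Fin d → ℕ))).sum x := by
    intro l
    induction l with
    | nil => simp
    | cons j l ih =>
      simp only [List.map_cons, List.foldr_cons, Function.comp_apply, List.sum_cons]
      rw [ih, KU_pderiv_iter d b hb u₀ hmem, add_comm]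
  rw [mderiv, key, ← List.ofFn_eq_map, List.sum_ofFn, Finset.univ_sum_single]

theorem heatSol_eq (d : ℕ) (T : ℝ) (u₀ : EuclideanSpace ℝ (Fin d) → ℝ) :
    heatSol d u₀ T = fun x => (4 * Real.pi * T) ^ (-(d : ℝ) / 2) * KU d (1 / (4 * T)) u₀ 0 x := by
  funext x
  rw [heatSol, KU]
  congr 2
  funext y
  rw [KK_eq]
  simp [HQ]
  left
  ring

/-! ### Cauchy-Schwarz and the weighted estimates -/

theorem lintegral_cs {X : Type*} [MeasurableSpace X] (μ : Measure X) (f g : X → ℝ≥0∞)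
    (hf : AEMeasurable f μ) (hg : AEMeasurable g μ) :
    (∫⁻ x, f x * g x ∂μ) ^ 2 ≤ (∫⁻ x, f x ^ 2 ∂μ) * ∫⁻ x, g x ^ 2 ∂μ := by
  have h := ENNReal.lintegral_mul_le_Lp_mul_Lq μ Real.HolderConjugate.two_two hf hg
  have h2 : ∀ a : ℝ≥0∞, (a ^ (1 / (2 : ℝ))) ^ 2 = a := fun a => by
    rw [← ENNReal.rpow_natCast, ← ENNReal.rpow_mul]; norm_num
  calc _ ≤ _ := pow_le_pow_left' h 2
    _ = _ := by
      rw [mul_pow, h2, h2]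
      simp only [ENNReal.rpow_two]

theorem A_eq (d : ℕ) (b : ℝ) (hb : 0 < b) (n : Fin d → ℕ) :
    ∫⁻ z : EuclideanSpace ℝ (Fin d),
      ENNReal.ofReal ((∏ j, (HQ b (n j)).eval (z j)) ^ 2 * Real.exp (-b * ‖z‖ ^ 2))
      = ENNReal.ofReal (∏ j, ((n j).factorial * (2 * b) ^ (n j) * √(Real.pi / b))) := by
  have e : ∀ z : EuclideanSpace ℝ (Fin d),
      (∏ j, (HQ b (n j)).eval (z j)) ^ 2 * Real.exp (-b * ‖z‖ ^ 2)
      = ∏ j, ((HQ b (n j)).eval (z j) ^ 2 * Real.exp (-b * (z j) ^ 2)) := fun z => by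
    rw [Finset.prod_mul_distrib, ← Real.exp_sum, EuclideanSpace.real_norm_sq_eq, Finset.mul_sum,
      Finset.prod_pow]
  simp_rw [e]
  have mp := PiLp.volume_preserving_toLp (Fin d)
  have me : MeasurableEmbedding (WithLp.toLp 2 : (Fin d → ℝ) → EuclideanSpace ℝ (Fin d)) :=
    (MeasurableEquiv.toLp 2 (Fin d → ℝ)).measurableEmbedding
  have hi : Integrable (fun z : Fin d → ℝ =>
      ∏ j, ((HQ b (n j)).eval (z j) ^ 2 * Real.exp (-b * (z j) ^ 2))) volume :=
    Integrable.fintype_prod (f := fun j s => (HQ b (n j)).eval s ^ 2 * Real.exp (-b * s ^ 2))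
      fun j => HQ_sq_integrable b hb (n j)
  rw [← mp.lintegral_comp_emb me]
  simp only
  rw [← ofReal_integral_eq_lintegral_ofReal hi
    (ae_of_all _ fun z => Finset.prod_nonneg fun j _ => by positivity),
    integral_fintype_prod_volume_eq_prod
      (f := fun j s => (HQ b (n j)).eval s ^ 2 * Real.exp (-b * s ^ 2))]
  simp_rw [HQ_sq_integral b hb]

theorem B_pt (d : ℕ) (hd : 0 < d) (T : ℝ) (hT : 0 < T) (k : ℕ) (r : ℝ) :
    (1 + r) ^ (2 * k) * Real.exp (-(1 / (4 * T)) * r ^ 2)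
      ≤ (1 + T) ^ k * (k.factorial * (32 * d) ^ k) * Real.exp (1 / 32) *
        Real.exp (-(1 / (4 * T) * (1 - 1 / (8 * d))) * r ^ 2) := by
  have hd' : (1 : ℝ) ≤ d := by exact_mod_cast hd
  have h1 : (1 + r) ^ 2 ≤ (1 + T) * (1 + r ^ 2 / T) := by
    have : (1 + T) * (1 + r ^ 2 / T) - (1 + r) ^ 2 = (T - r) ^ 2 / T := by field_simp; ring
    have : 0 ≤ (T - r) ^ 2 / T := by positivity
    linarith
  set s : ℝ := (1 + r ^ 2 / T) / (32 * d) with hs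
  have hs0 : 0 ≤ s := by positivity
  have h2 := Real.pow_div_factorial_le_exp s hs0 k
  rw [div_le_iff₀ (by positivity)] at h2
  have h3 : (1 + r) ^ (2 * k) ≤ (1 + T) ^ k * ((32 * d) ^ k * (Real.exp s * k.factorial)) := by
    rw [pow_mul]
    calc ((1 + r) ^ 2) ^ k ≤ ((1 + T) * ((32 * d) * s)) ^ k := by
          refine pow_le_pow_left₀ (sq_nonneg _) (h1.trans (le_of_eq ?_)) k
          rw [hs]; field_simp
      _ = (1 + T) ^ k * ((32 * d) ^ k * s ^ k) := by rw [mul_pow, mul_pow]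
      _ ≤ _ := by gcongr
  calc _ ≤ (1 + T) ^ k * ((32 * d) ^ k * (Real.exp s * k.factorial)) *
        Real.exp (-(1 / (4 * T)) * r ^ 2) := by gcongr
    _ = (1 + T) ^ k * (k.factorial * (32 * d) ^ k) *
        Real.exp (s + -(1 / (4 * T)) * r ^ 2) := by rw [Real.exp_add]; ring
    _ ≤ (1 + T) ^ k * (k.factorial * (32 * d) ^ k) *
        Real.exp (1 / 32 + -(1 / (4 * T) * (1 - 1 / (8 * d))) * r ^ 2) := by
      refine mul_le_mul_of_nonneg_left (Real.exp_le_exp.mpr ?_) (by positivity)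
      have e1 : s = 1 / (32 * d) + r ^ 2 / (32 * d * T) := by rw [hs]; field_simp
      have e2 : -(1 / (4 * T) * (1 - 1 / (8 * d))) * r ^ 2
          = -(1 / (4 * T)) * r ^ 2 + r ^ 2 / (32 * d * T) := by field_simp; ring
      have e3 : 1 / (32 * (d : ℝ)) ≤ 1 / 32 := by
        apply one_div_le_one_div_of_le <;> linarith
      linarith
    _ = _ := by rw [Real.exp_add]; ring

theorem B_const (d : ℕ) (hd : 0 < d) :
    Real.exp (1 / 32) * ((1 - 1 / (8 * (d : ℝ)))⁻¹) ^ ((d : ℝ) / 2) ≤ 2 := by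
  have hd' : (1 : ℝ) ≤ d := by exact_mod_cast hd
  have h8 : 1 / (8 * (d : ℝ)) ≤ 1 / 8 := by
    apply one_div_le_one_div_of_le <;> linarith
  have h80 : 0 < 1 / (8 * (d : ℝ)) := by positivity
  have hp : 0 < 1 - 1 / (8 * (d : ℝ)) := by linarith
  have b1 : 7 / 8 ≤ (1 - 1 / (8 * (d : ℝ))) ^ d := by
    have := one_add_mul_le_pow (a := -(1 / (8 * (d : ℝ)))) (by linarith) d
    have e : 1 + (d : ℝ) * -(1 / (8 * (d : ℝ))) = 7 / 8 := by field_simp; norm_num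
    rw [e, ← sub_eq_add_neg] at this
    exact this
  have b2 : ((1 - 1 / (8 * (d : ℝ)))⁻¹) ^ ((d : ℝ) / 2) ≤ 8 / 7 := by
    calc _ ≤ ((1 - 1 / (8 * (d : ℝ)))⁻¹) ^ (d : ℝ) := by
          apply Real.rpow_le_rpow_of_exponent_le
          · exact (one_le_inv₀ hp).mpr (by linarith)
          · linarith
      _ = ((1 - 1 / (8 * (d : ℝ))) ^ d)⁻¹ := by rw [Real.rpow_natCast, inv_pow]
      _ ≤ (7 / 8)⁻¹ := inv_anti₀ (by norm_num) b1
      _ = 8 / 7 := by norm_num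
  have b3 : Real.exp (1 / 32) ≤ 7 / 4 := by
    have := Real.add_one_le_exp (-(1 / 32 : ℝ))
    rw [Real.exp_neg] at this
    have hpos := Real.exp_pos (1 / 32)
    have h4 : (31 / 32 : ℝ) ≤ (Real.exp (1 / 32))⁻¹ := by linarith
    have h5 := inv_anti₀ (by norm_num) h4
    rw [inv_inv] at h5
    refine h5.trans (by norm_num)
  calc _ ≤ (7 / 4 : ℝ) * (8 / 7) := by gcongr
    _ = 2 := by norm_num

theorem B_le (d : ℕ) (hd : 0 < d) (T : ℝ) (hT : 0 < T) (k : ℕ) :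
    ∫⁻ z : EuclideanSpace ℝ (Fin d),
      ENNReal.ofReal ((1 + ‖z‖) ^ (2 * k) * Real.exp (-(1 / (4 * T)) * ‖z‖ ^ 2))
      ≤ ENNReal.ofReal ((1 + T) ^ k * (k.factorial * (32 * d) ^ k) * 2 *
        (4 * Real.pi * T) ^ ((d : ℝ) / 2)) := by
  have hd' : (1 : ℝ) ≤ d := by exact_mod_cast hd
  have h8 : 1 / (8 * (d : ℝ)) ≤ 1 / 8 := by
    apply one_div_le_one_div_of_le <;> linarith
  have hp : 0 < 1 - 1 / (8 * (d : ℝ)) := by linarith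
  have hb : 0 < 1 / (4 * T) * (1 - 1 / (8 * (d : ℝ))) := by positivity
  have hpi := Real.pi_pos
  calc _ ≤ ∫⁻ z : EuclideanSpace ℝ (Fin d), ENNReal.ofReal
        ((1 + T) ^ k * (k.factorial * (32 * d) ^ k) * Real.exp (1 / 32) *
        Real.exp (-(1 / (4 * T) * (1 - 1 / (8 * d))) * ‖z‖ ^ 2)) :=
        lintegral_mono fun z => ENNReal.ofReal_le_ofReal (B_pt d hd T hT k ‖z‖)
    _ = ENNReal.ofReal ((1 + T) ^ k * (k.factorial * (32 * d) ^ k) * Real.exp (1 / 32) *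
        (Real.pi / (1 / (4 * T) * (1 - 1 / (8 * (d : ℝ))))) ^ ((d : ℝ) / 2)) := by
      rw [← ofReal_integral_eq_lintegral_ofReal ((gauss_integrable d _ hb).const_mul _)
        (ae_of_all _ fun z => by simp only [Pi.zero_apply]; positivity), integral_const_mul,
        GaussianFourier.integral_rexp_neg_mul_sq_norm hb, finrank_euclideanSpace_fin]
    _ ≤ _ := by
      apply ENNReal.ofReal_le_ofReal
      have e : Real.pi / (1 / (4 * T) * (1 - 1 / (8 * (d : ℝ))))
          = (1 - 1 / (8 * (d : ℝ)))⁻¹ * (4 * Real.pi * T) := by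
        generalize 1 - 1 / (8 * (d : ℝ)) = q at hp
        field_simp
      rw [e, Real.mul_rpow (by positivity) (by positivity), mul_assoc (_ * _) (Real.exp _),
        ← mul_assoc (Real.exp _), ← mul_assoc, ← mul_assoc, mul_assoc (_ * _) (Real.exp _)]
      gcongr
      exact B_const d hd

theorem KU_pt (d : ℕ) (b : ℝ) (hb : 0 < b) (n : Fin d → ℕ) (k : ℕ)
    (u₀ : EuclideanSpace ℝ (Fin d) → ℝ) (hmem : MemLp u₀ 2 volume)
    (x : EuclideanSpace ℝ (Fin d)) :
    ENNReal.ofReal ((1 + ‖x‖) ^ (2 * k) * (KU d b u₀ n x) ^ 2)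
      ≤ ENNReal.ofReal (∏ j, ((n j).factorial * (2 * b) ^ (n j) * √(Real.pi / b))) *
        ∫⁻ y, ENNReal.ofReal ((1 + ‖x - y‖) ^ (2 * k) * Real.exp (-b * ‖x - y‖ ^ 2)) *
          ENNReal.ofReal ((1 + ‖y‖) ^ (2 * k) * (u₀ y) ^ 2) := by
  have hum : AEMeasurable u₀ volume := hmem.1.aemeasurable
  have hQ : ∀ j, Continuous fun z : EuclideanSpace ℝ (Fin d) => (HQ b (n j)).eval (z j) :=
    fun j => by
      have := (HQ b (n j)).continuous
      fun_prop
  have hQ' : Continuous fun z : EuclideanSpace ℝ (Fin d) => ∏ j, (HQ b (n j)).eval (z j) :=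
    continuous_finsetProd _ fun j _ => hQ j
  let R : EuclideanSpace ℝ (Fin d) → ℝ := fun z => ∏ j, (HQ b (n j)).eval (z j)
  have hR : Continuous R := hQ'
  have hKR : ∀ z, KK d b n z = R z * Real.exp (-b * ‖z‖ ^ 2) := KK_eq d b n
  let f : EuclideanSpace ℝ (Fin d) → ℝ≥0∞ := fun y =>
    ENNReal.ofReal (|R (x - y)| * Real.exp (-(b / 2) * ‖x - y‖ ^ 2))
  let g : EuclideanSpace ℝ (Fin d) → ℝ≥0∞ := fun y =>
    ENNReal.ofReal ((1 + ‖x - y‖) ^ k * Real.exp (-(b / 2) * ‖x - y‖ ^ 2) *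
      ((1 + ‖y‖) ^ k * |u₀ y|))
  have hf : AEMeasurable f volume := by
    refine AEMeasurable.ennreal_ofReal (Continuous.aemeasurable ?_)
    fun_prop
  have hg : AEMeasurable g volume := by
    refine AEMeasurable.ennreal_ofReal ?_
    refine AEMeasurable.mul (Continuous.aemeasurable (by fun_prop)) ?_
    refine AEMeasurable.mul (Continuous.aemeasurable (by fun_prop)) ?_
    exact hum.norm
  have hexp : ∀ z : EuclideanSpace ℝ (Fin d),
      Real.exp (-(b / 2) * ‖z‖ ^ 2) ^ 2 = Real.exp (-b * ‖z‖ ^ 2) := fun z => by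
    rw [sq, ← Real.exp_add]; congr 1; ring
  have step : ENNReal.ofReal ((1 + ‖x‖) ^ k * |KU d b u₀ n x|) ≤ ∫⁻ y, f y * g y := by
    have e1 : ENNReal.ofReal ((1 + ‖x‖) ^ k * |KU d b u₀ n x|)
        = ‖∫ y, (1 + ‖x‖) ^ k * (KK d b n (x - y) * u₀ y)‖ₑ := by
      rw [integral_const_mul, Real.enorm_eq_ofReal_abs, abs_mul,
        abs_of_nonneg (by positivity : 0 ≤ (1 + ‖x‖) ^ k)]
      rfl
    rw [e1]
    refine (enorm_integral_le_lintegral_enorm _).trans (lintegral_mono fun y => ?_)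
    simp only [f, g]
    rw [Real.enorm_eq_ofReal_abs, ← ENNReal.ofReal_mul (by positivity)]
    apply ENNReal.ofReal_le_ofReal
    have hx : (1 + ‖x‖) ^ k ≤ (1 + ‖x - y‖) ^ k * (1 + ‖y‖) ^ k := by
      rw [← mul_pow]
      refine pow_le_pow_left₀ (by positivity) ?_ k
      have h3 : ‖x‖ ≤ ‖x - y‖ + ‖y‖ := by
        have := norm_add_le (x - y) y
        rwa [sub_add_cancel] at this
      nlinarith [mul_nonneg (norm_nonneg (x - y)) (norm_nonneg y)]
    rw [hKR, ← hexp, abs_mul, abs_mul, abs_mul,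
      abs_of_nonneg (by positivity : 0 ≤ (1 + ‖x‖) ^ k), abs_pow, Real.abs_exp]
    calc _ ≤ ((1 + ‖x - y‖) ^ k * (1 + ‖y‖) ^ k) *
          (|R (x - y)| * Real.exp (-(b / 2) * ‖x - y‖ ^ 2) ^ 2 * |u₀ y|) := by gcongr
      _ = _ := by ring
  have lhs : ENNReal.ofReal ((1 + ‖x‖) ^ (2 * k) * (KU d b u₀ n x) ^ 2)
      = (ENNReal.ofReal ((1 + ‖x‖) ^ k * |KU d b u₀ n x|)) ^ 2 := by
    rw [← ENNReal.ofReal_pow (by positivity), mul_pow, sq_abs, ← pow_mul, mul_comm 2 k]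
  have hf2 : ∫⁻ y, f y ^ 2
      = ENNReal.ofReal (∏ j, ((n j).factorial * (2 * b) ^ (n j) * √(Real.pi / b))) := by
    rw [← A_eq d b hb n, ← lintegral_sub_left_eq_self (fun z : EuclideanSpace ℝ (Fin d) =>
      ENNReal.ofReal ((∏ j, (HQ b (n j)).eval (z j)) ^ 2 * Real.exp (-b * ‖z‖ ^ 2))) x]
    refine lintegral_congr fun y => ?_
    simp only [f]
    rw [← ENNReal.ofReal_pow (by positivity), mul_pow, sq_abs, hexp]
  have hg2 : ∫⁻ y, g y ^ 2 =
      ∫⁻ y, ENNReal.ofReal ((1 + ‖x - y‖) ^ (2 * k) * Real.exp (-b * ‖x - y‖ ^ 2)) *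
          ENNReal.ofReal ((1 + ‖y‖) ^ (2 * k) * (u₀ y) ^ 2) := by
    refine lintegral_congr fun y => ?_
    simp only [g]
    rw [← ENNReal.ofReal_pow (by positivity), ← ENNReal.ofReal_mul (by positivity), mul_pow,
      mul_pow, mul_pow, sq_abs, hexp, ← pow_mul, ← pow_mul, mul_comm k 2]
  rw [lhs, ← hf2, ← hg2]
  exact (pow_le_pow_left' step 2).trans (lintegral_cs volume f g hf hg)

theorem conv_swap (d : ℕ) (H V : EuclideanSpace ℝ (Fin d) → ℝ≥0∞) (hH : Measurable H)
    (hV : AEMeasurable V volume) :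
    ∫⁻ x, ∫⁻ y, H (x - y) * V y = (∫⁻ z, H z) * ∫⁻ y, V y := by
  rw [lintegral_lintegral_swap]
  · rw [← lintegral_const_mul'' _ hV]
    refine lintegral_congr fun y => ?_
    rw [lintegral_mul_const _ (by fun_prop), lintegral_sub_right_eq_self]
  · refine AEMeasurable.mul ?_ ?_
    · exact (hH.comp (measurable_fst.sub measurable_snd)).aemeasurable
    · exact hV.comp_quasiMeasurePreserving Measure.quasiMeasurePreserving_snd

theorem final_const (d : ℕ) (hd : 0 < d) (T : ℝ) (hT : 0 < T) (α : Fin d → ℕ) (k : ℕ) :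
    ((4 * Real.pi * T) ^ (-(d : ℝ) / 2)) ^ 2 *
      ((∏ j, ((α j).factorial * (2 * (1 / (4 * T))) ^ (α j) * √(Real.pi / (1 / (4 * T))))) *
      ((1 + T) ^ k * (k.factorial * (32 * d) ^ k) * 2 * (4 * Real.pi * T) ^ ((d : ℝ) / 2)))
    ≤ ((2 * d : ℝ)) ^ (k + 1) *
            ((6 : ℝ) ^ k * (Nat.factorial ((∑ j, α j) + k) : ℝ)) ^ 2 *
            (1 + T) ^ k / T ^ (∑ j, α j) := by
  have hd' : (1 : ℝ) ≤ d := by exact_mod_cast hd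
  have hpi := Real.pi_pos
  set P : ℝ := 4 * Real.pi * T with hP
  have hP0 : 0 < P := by positivity
  have e1 : Real.pi / (1 / (4 * T)) = P := by rw [hP]; field_simp
  have e2 : 2 * (1 / (4 * T)) = (1 / 2) * T⁻¹ := by field_simp; norm_num
  have e3 : (P ^ (-(d : ℝ) / 2)) ^ 2 * (√P ^ d * P ^ ((d : ℝ) / 2)) = 1 := by
    rw [Real.sqrt_eq_rpow, ← Real.rpow_natCast, ← Real.rpow_natCast, ← Real.rpow_mul hP0.le,
      ← Real.rpow_mul hP0.le, ← Real.rpow_add hP0, ← Real.rpow_add hP0]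
    convert Real.rpow_zero P using 2
    push_cast; ring
  have hprod : (∏ j, (((α j).factorial : ℝ) * (2 * (1 / (4 * T))) ^ (α j) *
        √(Real.pi / (1 / (4 * T)))))
      = (∏ j, ((α j).factorial : ℝ)) * ((1 / 2) ^ (∑ j, α j) * (T ^ (∑ j, α j))⁻¹) * √P ^ d := by
    rw [e1, e2, Finset.prod_mul_distrib, Finset.prod_mul_distrib, Finset.prod_pow_eq_pow_sum,
      Finset.prod_const, Finset.card_univ, Fintype.card_fin, mul_pow, inv_pow]
  rw [hprod]
  set N := ∑ j, α j with hN
  have f1 : (∏ j, ((α j).factorial : ℝ)) ≤ ((N + k).factorial : ℝ) := by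
    rw [← Nat.cast_prod]
    have h1 := Nat.le_of_dvd (Nat.factorial_pos _)
      (Nat.prod_factorial_dvd_factorial_sum Finset.univ α)
    exact_mod_cast h1.trans (Nat.factorial_le (by omega))
  have f2 : (k.factorial : ℝ) ≤ ((N + k).factorial : ℝ) := by
    exact_mod_cast Nat.factorial_le (by omega)
  have f3 : ((1 : ℝ) / 2) ^ N ≤ 1 := pow_le_one₀ (by norm_num) (by norm_num)
  have f0 : 0 ≤ ∏ j, ((α j).factorial : ℝ) := Finset.prod_nonneg fun j _ => by positivity
  calc _ = ((P ^ (-(d : ℝ) / 2)) ^ 2 * (√P ^ d * P ^ ((d : ℝ) / 2))) *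
        ((∏ j, ((α j).factorial : ℝ)) * ((1 / 2) ^ N) * (k.factorial * ((32 * d) ^ k * 2)) *
          ((1 + T) ^ k * (T ^ N)⁻¹)) := by ring
    _ = (∏ j, ((α j).factorial : ℝ)) * ((1 / 2) ^ N) * (k.factorial * ((32 * d) ^ k * 2)) *
          ((1 + T) ^ k * (T ^ N)⁻¹) := by rw [e3, one_mul]
    _ ≤ ((N + k).factorial : ℝ) * 1 * (((N + k).factorial : ℝ) * ((72 * d) ^ k * (2 * d))) *
          ((1 + T) ^ k * (T ^ N)⁻¹) := by
        gcongr
        · norm_num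
        · linarith
    _ = _ := by
      have : (72 * (d : ℝ)) ^ k = (2 * d) ^ k * (6 ^ k) ^ 2 := by
        rw [← pow_mul, mul_comm k 2, pow_mul, ← mul_pow]; congr 1; ring
      rw [this, div_eq_mul_inv, pow_succ]
      ring
/-- Weighted derivative estimate for the heat equation: for `T > 0`, `α ∈ ℕ^d`, `k ∈ ℕ`
and `u₀ ∈ L²(ℝ^d)` with `∫ (1+|x|)^{2k} |u₀|² dx < ∞`,
`∫ (1+|x|)^{2k} |D^α u(T,x)|² dx
  ≤ (2d)^{k+1} (6^k (|α|+k)!)² (1+T)^k T^{-|α|} ∫ (1+|x|)^{2k} |u₀|² dx`. -/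
theorem statement15 (d : ℕ) (hd : 0 < d) (T : ℝ) (hT : 0 < T) (α : Fin d → ℕ) (k : ℕ)
    (u₀ : EuclideanSpace ℝ (Fin d) → ℝ) (hmem : MemLp u₀ 2 volume)
    (hint : Integrable (fun x => (1 + ‖x‖) ^ (2 * k) * (u₀ x) ^ 2) volume) :
    ∫⁻ x, ENNReal.ofReal
        ((1 + ‖x‖) ^ (2 * k) * (mderiv d α (heatSol d u₀ T) x) ^ 2) ∂volume
      ≤ ENNReal.ofReal
          (((2 * d : ℝ)) ^ (k + 1) *
            ((6 : ℝ) ^ k * (Nat.factorial ((∑ j, α j) + k) : ℝ)) ^ 2 *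
            (1 + T) ^ k / T ^ (∑ j, α j) *
            ∫ x, (1 + ‖x‖) ^ (2 * k) * (u₀ x) ^ 2) := by

  have hb : 0 < 1 / (4 * T) := by positivity
  have hpi := Real.pi_pos
  rw [heatSol_eq, KU_mderiv d _ hb u₀ hmem α]
  set c : ℝ := (4 * Real.pi * T) ^ (-(d : ℝ) / 2) with hc
  set A : ℝ := ∏ j, ((α j).factorial * (2 * (1 / (4 * T))) ^ (α j) *
    √(Real.pi / (1 / (4 * T)))) with hA
  set B : ℝ := (1 + T) ^ k * (k.factorial * (32 * d) ^ k) * 2 *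
    (4 * Real.pi * T) ^ ((d : ℝ) / 2) with hB
  have hA0 : 0 ≤ A := Finset.prod_nonneg fun j _ => by positivity
  have hB0 : 0 ≤ B := by positivity
  have hI0 : 0 ≤ ∫ x, (1 + ‖x‖) ^ (2 * k) * (u₀ x) ^ 2 :=
    integral_nonneg fun x => by simp only [Pi.zero_apply]; positivity
  have hV : AEMeasurable (fun y : EuclideanSpace ℝ (Fin d) =>
      ENNReal.ofReal ((1 + ‖y‖) ^ (2 * k) * (u₀ y) ^ 2)) volume :=
    hint.1.aemeasurable.ennreal_ofReal
  have hH : Measurable (fun z : EuclideanSpace ℝ (Fin d) =>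
      ENNReal.ofReal ((1 + ‖z‖) ^ (2 * k) * Real.exp (-(1 / (4 * T)) * ‖z‖ ^ 2))) :=
    (Continuous.measurable (by fun_prop)).ennreal_ofReal
  calc _ ≤ ∫⁻ x, ENNReal.ofReal (c ^ 2) * (ENNReal.ofReal A *
        ∫⁻ y, ENNReal.ofReal ((1 + ‖x - y‖) ^ (2 * k) *
            Real.exp (-(1 / (4 * T)) * ‖x - y‖ ^ 2)) *
          ENNReal.ofReal ((1 + ‖y‖) ^ (2 * k) * (u₀ y) ^ 2)) := by
        refine lintegral_mono fun x => ?_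
        have e : (1 + ‖x‖) ^ (2 * k) * (c * KU d (1 / (4 * T)) u₀ α x) ^ 2
            = c ^ 2 * ((1 + ‖x‖) ^ (2 * k) * (KU d (1 / (4 * T)) u₀ α x) ^ 2) := by ring
        simp only
        rw [e, ENNReal.ofReal_mul (sq_nonneg c)]
        gcongr
        exact KU_pt d _ hb α k u₀ hmem x
    _ = ENNReal.ofReal (c ^ 2) * (ENNReal.ofReal A * ((∫⁻ z : EuclideanSpace ℝ (Fin d),
          ENNReal.ofReal ((1 + ‖z‖) ^ (2 * k) * Real.exp (-(1 / (4 * T)) * ‖z‖ ^ 2))) *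
          ENNReal.ofReal (∫ x, (1 + ‖x‖) ^ (2 * k) * (u₀ x) ^ 2))) := by
        rw [lintegral_const_mul' _ _ ENNReal.ofReal_ne_top,
          lintegral_const_mul' _ _ ENNReal.ofReal_ne_top,
          ofReal_integral_eq_lintegral_ofReal hint
            (ae_of_all _ fun x => by simp only [Pi.zero_apply]; positivity),
          ← conv_swap d _ _ hH hV]
    _ ≤ ENNReal.ofReal (c ^ 2) * (ENNReal.ofReal A * (ENNReal.ofReal B *
          ENNReal.ofReal (∫ x, (1 + ‖x‖) ^ (2 * k) * (u₀ x) ^ 2))) := by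
        gcongr
        exact B_le d hd T hT k
    _ = ENNReal.ofReal (c ^ 2 * (A * B) * ∫ x, (1 + ‖x‖) ^ (2 * k) * (u₀ x) ^ 2) := by
        rw [ENNReal.ofReal_mul (mul_nonneg (sq_nonneg c) (mul_nonneg hA0 hB0)),
          ENNReal.ofReal_mul (p := c ^ 2) (sq_nonneg c), ENNReal.ofReal_mul (p := A) hA0]
        ring
    _ ≤ _ := by
        apply ENNReal.ofReal_le_ofReal
        exact mul_le_mul_of_nonneg_right (final_const d hd T hT α k) hI0
end
end

section
/- Let T > 0, α ∈ ℕ^d a multi-index and β ∈ ℕ^d a multi-index. For every u₀ ∈ L²(ℝ^d) with ∫_{ℝ^d} (1+|x|)^{2|β|} |u₀(x)|² dx < ∞, the heat solution u with initial datum u₀ satisfies ∫_{ℝ^d} |x^β D_x^α u(T,x)|² dx ≤ 2^{|β|+1} (3^{|β|} (|α|+|β|)!)² (1+T)^{|β|} T^{−|α|} ∫_{ℝ^d} (1+|x|)^{2|β|} |u₀(x)|² dx, where x^β = x₁^{β₁}⋯x_d^{β_d}, D_x^α is the spatial partial derivative of multi-order α, and |α|, |β| are the sums of the entries of α, β. 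-/
open MeasureTheory Filter Topology Metric ENNReal NNReal

noncomputable section

namespace HeatAux
open Polynomial

/-- polynomial times Gaussian -/
def G (T : ℝ) (q : ℝ[X]) (t : ℝ) : ℝ := q.eval t * Real.exp (-t ^ 2 / (4 * T))

/-- derivative operator on polynomial factors -/
def D (T : ℝ) (q : ℝ[X]) : ℝ[X] := derivative q - C (1 / (2 * T)) * (X * q)

lemma G_hasDerivAt (T : ℝ) (hT : 0 < T) (q : ℝ[X]) (t : ℝ) :
    HasDerivAt (G T q) (G T (D T q) t) t := by
  have h1 : HasDerivAt (fun t : ℝ => -t ^ 2 / (4 * T)) (-(2 * t) / (4 * T)) t := by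
    have := ((hasDerivAt_pow 2 t).neg).div_const (4 * T)
    simpa using this
  have h2 := (q.hasDerivAt t).mul h1.exp
  refine h2.congr_deriv ?_
  simp only [G, D, eval_sub, eval_mul, eval_C, eval_X]
  field_simp
  ring

lemma poly_bound (c : ℝ) (hc : 0 < c) (q : ℝ[X]) :
    ∃ B : ℝ, 0 ≤ B ∧ ∀ t : ℝ, |q.eval t| ≤ B * Real.exp (c * t ^ 2) := by
  induction q using Polynomial.induction_on' with
  | add p q hp hq =>
    obtain ⟨B1, h1, hp⟩ := hp
    obtain ⟨B2, h2, hq⟩ := hq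
    refine ⟨B1 + B2, by positivity, fun t => ?_⟩
    rw [eval_add, add_mul]
    exact (abs_add_le _ _).trans (add_le_add (hp t) (hq t))
  | monomial n a =>
    refine ⟨|a| * (1 + n.factorial / c ^ n), by positivity, fun t => ?_⟩
    rw [eval_monomial, abs_mul, mul_assoc]
    refine mul_le_mul_of_nonneg_left ?_ (abs_nonneg a)
    have h1 : (c * t ^ 2) ^ n / n.factorial ≤ Real.exp (c * t ^ 2) :=
      Real.pow_div_factorial_le_exp _ (by positivity) n
    have h2 : 1 ≤ Real.exp (c * t ^ 2) := Real.one_le_exp (by positivity)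
    have h3 : |t ^ n| ≤ 1 + (t ^ 2) ^ n := by
      have : (t ^ 2) ^ n = |t ^ n| ^ 2 := by rw [sq_abs]; ring
      rw [this]
      nlinarith [sq_nonneg (|t ^ n| - 1), abs_nonneg (t ^ n)]
    have h4 : (t ^ 2) ^ n ≤ n.factorial / c ^ n * Real.exp (c * t ^ 2) := by
      have h5 : (t ^ 2) ^ n = n.factorial / c ^ n * ((c * t ^ 2) ^ n / n.factorial) := by
        rw [mul_pow]; field_simp
      rw [h5]
      gcongr
    nlinarith

lemma G_bound (T : ℝ) (hT : 0 < T) (q : ℝ[X]) :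
    ∃ B : ℝ, 0 ≤ B ∧ ∀ t : ℝ, |G T q t| ≤ B * Real.exp (-t ^ 2 / (8 * T)) := by
  obtain ⟨B, hB, h⟩ := poly_bound (1 / (8 * T)) (by positivity) q
  refine ⟨B, hB, fun t => ?_⟩
  rw [G, abs_mul, abs_of_pos (Real.exp_pos _)]
  calc _ ≤ B * Real.exp (1 / (8 * T) * t ^ 2) * Real.exp (-t ^ 2 / (4 * T)) := by
        gcongr; exact h t
    _ = _ := by
      rw [mul_assoc, ← Real.exp_add]
      congr 2
      field_simp
      ring

lemma G_continuous (T : ℝ) (q : ℝ[X]) : Continuous (G T q) := by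
  unfold G
  have := q.continuous
  fun_prop

lemma G_integrable (T : ℝ) (hT : 0 < T) (q : ℝ[X]) : Integrable (G T q) := by
  obtain ⟨B, hB, h⟩ := G_bound T hT q
  have h1 : Integrable (fun t : ℝ => B * Real.exp (-t ^ 2 / (8 * T))) := by
    have := (integrable_exp_neg_mul_sq (b := 1 / (8 * T)) (by positivity)).const_mul B
    convert this using 4
    ring
  exact h1.mono' (G_continuous T q).aestronglyMeasurable (Eventually.of_forall h)

/-- Gaussian functional -/
def E (T : ℝ) (q : ℝ[X]) : ℝ := ∫ t, G T q t

lemma E_add (T : ℝ) (hT : 0 < T) (p q : ℝ[X]) : E T (p + q) = E T p + E T q := by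
  unfold E
  rw [← integral_add (G_integrable T hT p) (G_integrable T hT q)]
  congr 1; ext t; simp [G, add_mul]

lemma E_C_mul (T : ℝ) (a : ℝ) (q : ℝ[X]) : E T (C a * q) = a * E T q := by
  unfold E
  rw [← integral_const_mul]
  congr 1; ext t; simp [G, mul_assoc]

lemma E_D (T : ℝ) (hT : 0 < T) (q : ℝ[X]) : E T (D T q) = 0 :=
  integral_eq_zero_of_hasDerivAt_of_integrable (G_hasDerivAt T hT q)
    (G_integrable T hT _) (G_integrable T hT q)

lemma E_mono (T : ℝ) (hT : 0 < T) (p q : ℝ[X]) (h : ∀ t, p.eval t ≤ q.eval t) :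
    E T p ≤ E T q :=
  integral_mono (G_integrable T hT p) (G_integrable T hT q)
    (fun t => mul_le_mul_of_nonneg_right (h t) (Real.exp_pos _).le)

lemma E_one (T : ℝ) (hT : 0 < T) : E T 1 = √(4 * Real.pi * T) := by
  have := integral_gaussian (1 / (4 * T))
  unfold E
  rw [show 4 * Real.pi * T = Real.pi / (1 / (4 * T)) by field_simp, ← this]
  congr 1; ext t; simp only [G, eval_one, one_mul]; congr 1; ring

/-- Hermite-type polynomials -/
def H (T : ℝ) (n : ℕ) : ℝ[X] := (D T)^[n] 1

lemma H_succ (T : ℝ) (n : ℕ) : H T (n + 1) = D T (H T n) := by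
  unfold H; rw [Function.iterate_succ_apply']

lemma H_deriv (T : ℝ) (n : ℕ) :
    derivative (H T (n + 1)) = C (-(n + 1) / (2 * T)) * H T n := by
  induction n with
  | zero =>
    simp [H, D]
    rw [show -1 / (2 * T) = -(T⁻¹ * 2⁻¹) by ring, C_neg, C_mul]
  | succ n ih =>
    rw [H_succ T (n + 1)]
    have : derivative (D T (H T (n + 1))) =
        D T (derivative (H T (n + 1))) - C (1 / (2 * T)) * H T (n + 1) := by
      simp only [D, derivative_sub, derivative_mul, derivative_C, derivative_X]
      ring
    rw [this, ih]
    have h2 : D T (C (-((n : ℝ) + 1) / (2 * T)) * H T n) =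
        C (-((n : ℝ) + 1) / (2 * T)) * H T (n + 1) := by
      rw [H_succ]
      simp only [D, derivative_mul, derivative_C]
      ring
    rw [h2, ← sub_mul, ← C_sub]
    congr 2
    push_cast; ring

lemma E_H_sq (T : ℝ) (hT : 0 < T) (n : ℕ) :
    E T (H T n * H T n) = n.factorial / (2 * T) ^ n * E T 1 := by
  induction n with
  | zero => simp [H]
  | succ n ih =>
    have h1 : H T (n + 1) * H T (n + 1) =
        D T (H T n * H T (n + 1)) + C ((n + 1) / (2 * T)) * (H T n * H T n) := by
      conv_lhs => rw [show H T (n + 1) * H T (n + 1) = D T (H T n) * H T (n + 1) by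
        rw [← H_succ]]
      have := H_deriv T n
      simp only [D, derivative_mul, this]
      rw [neg_div, C_neg]
      ring
    rw [h1, E_add T hT, E_D T hT, E_C_mul, ih, Nat.factorial_succ]
    push_cast
    field_simp
    ring

/-- weight polynomial -/
def V (T : ℝ) : ℝ[X] := 1 + C (1 / (2 * T)) * X ^ 2

lemma E_V (T : ℝ) (hT : 0 < T) (n : ℕ) :
    E T (V T ^ n) ≤ 2 ^ n * n.factorial * E T 1 := by
  induction n with
  | zero => simp
  | succ n ih =>
    have h1 : E T (V T ^ (n + 1)) ≤ 2 * (n + 1) * E T (V T ^ n) := by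
      have h2 : V T ^ (n + 1) = C (-1) * D T (X * V T ^ n) +
          (C 2 * V T ^ n + C (2 * (n : ℝ)) * ((V T - 1) * V T ^ (n - 1))) := by
        simp only [D, V, derivative_mul, derivative_X, derivative_pow, derivative_add,
          derivative_one, derivative_C]
        have e : (C 2 : ℝ[X]) = 2 := rfl
        have e1 : (C 1 : ℝ[X]) = 1 := rfl
        have e2 : C (1 / (2 * T)) * 2 = (C (1 / T) : ℝ[X]) := by
          rw [← e, ← C_mul]; congr 1; field_simp
        simp only [C_mul, C_neg, e, e1]
        push_cast
        simp only [map_natCast, e]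
        ring
      rw [h2, E_add T hT, E_C_mul, E_D T hT, E_add T hT, E_C_mul, E_C_mul]
      have h3 : (n : ℝ) * E T ((V T - 1) * V T ^ (n - 1)) ≤ n * E T (V T ^ n) := by
        rcases n with _ | m
        · simp
        · refine mul_le_mul_of_nonneg_left (E_mono T hT _ _ fun t => ?_) (by positivity)
          have : 0 ≤ (V T).eval t := by simp [V]; positivity
          simp only [eval_mul, eval_sub, eval_one, eval_pow, Nat.add_sub_cancel]
          rw [pow_succ' ((V T).eval t)]
          gcongr
          linarith
      linarith
    refine h1.trans ?_
    rw [Nat.factorial_succ, pow_succ]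
    push_cast
    have : (0:ℝ) ≤ 2 * (n + 1) := by positivity
    nlinarith [mul_le_mul_of_nonneg_left ih this]

lemma E_nonneg (T : ℝ) (hT : 0 < T) (q : ℝ[X]) (h : ∀ t, 0 ≤ q.eval t) : 0 ≤ E T q :=
  integral_nonneg fun t => mul_nonneg (h t) (Real.exp_pos _).le

end HeatAux
namespace HeatAux
open Polynomial

lemma prod_integrable {d : ℕ} (ψ : Fin d → ℝ → ℝ) (h : ∀ i, Integrable (ψ i)) :
    Integrable (fun z : EuclideanSpace ℝ (Fin d) => ∏ i, ψ i (z i)) := by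
  have := Integrable.fintype_prod (f := ψ) (μ := fun _ => volume) h
  exact (PiLp.volume_preserving_ofLp (Fin d)).integrable_comp_of_integrable this

lemma prod_integral {d : ℕ} (ψ : Fin d → ℝ → ℝ) :
    ∫ z : EuclideanSpace ℝ (Fin d), ∏ i, ψ i (z i) = ∏ i, ∫ t, ψ i t := by
  rw [← integral_fintype_prod_volume_eq_prod]
  exact (PiLp.volume_preserving_ofLp (Fin d)).integral_comp
    (MeasurableEquiv.toLp 2 (Fin d → ℝ)).symm.measurableEmbedding (fun x => ∏ i, ψ i (x i))

lemma exp_norm_sq {d : ℕ} (c : ℝ) (z : EuclideanSpace ℝ (Fin d)) :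
    Real.exp (-‖z‖ ^ 2 / c) = ∏ i, Real.exp (-(z i) ^ 2 / c) := by
  rw [← Real.exp_sum, EuclideanSpace.real_norm_sq_eq, ← Finset.sum_div, Finset.sum_neg_distrib]

lemma exp_integrable {d : ℕ} (c : ℝ) (hc : 0 < c) :
    Integrable (fun z : EuclideanSpace ℝ (Fin d) => Real.exp (-‖z‖ ^ 2 / c)) := by
  simp_rw [exp_norm_sq]
  refine prod_integrable (fun _ t => Real.exp (-t ^ 2 / c)) fun i => ?_
  have := integrable_exp_neg_mul_sq (b := 1 / c) (by positivity)
  refine this.congr (Eventually.of_forall fun t => ?_)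
  change Real.exp _ = Real.exp _
  congr 1
  ring

lemma exp_mul_integrable {d : ℕ} (c : ℝ) (hc : 0 < c) (x : EuclideanSpace ℝ (Fin d))
    (u₀ : EuclideanSpace ℝ (Fin d) → ℝ) (hmem : MemLp u₀ 2 volume) :
    Integrable (fun y => Real.exp (-‖x - y‖ ^ 2 / c) * u₀ y) := by
  have h1 : MemLp (fun y : EuclideanSpace ℝ (Fin d) => Real.exp (-‖x - y‖ ^ 2 / c)) 2 volume := by
    rw [memLp_two_iff_integrable_sq (by fun_prop)]
    have := (exp_integrable (d := d) (c / 2) (by positivity)).comp_sub_left x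
    convert this using 2 with y
    rw [← Real.exp_nat_mul]
    congr 1
    push_cast
    field_simp
  exact h1.integrable_mul hmem

/-- product kernel -/
def K {d : ℕ} (T : ℝ) (q : Fin d → ℝ[X]) (z : EuclideanSpace ℝ (Fin d)) : ℝ :=
  ∏ i, G T (q i) (z i)

lemma K_continuous {d : ℕ} (T : ℝ) (q : Fin d → ℝ[X]) : Continuous (K T q) := by
  unfold K
  exact continuous_finsetProd _ fun i _ => (G_continuous T (q i)).comp (by fun_prop)

lemma K_bound {d : ℕ} (T : ℝ) (hT : 0 < T) (q : Fin d → ℝ[X]) :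
    ∃ B : ℝ, 0 ≤ B ∧ ∀ z, |K T q z| ≤ B * Real.exp (-‖z‖ ^ 2 / (8 * T)) := by
  choose B hB h using fun i => G_bound T hT (q i)
  refine ⟨∏ i, B i, Finset.prod_nonneg fun i _ => hB i, fun z => ?_⟩
  rw [exp_norm_sq, ← Finset.prod_mul_distrib, K, Finset.abs_prod]
  exact Finset.prod_le_prod (fun i _ => abs_nonneg _) fun i _ => h i _

lemma K_hasFDerivAt {d : ℕ} (T : ℝ) (hT : 0 < T) (q : Fin d → ℝ[X])
    (z : EuclideanSpace ℝ (Fin d)) :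
    HasFDerivAt (K T q) (∑ j, K T (Function.update q j (D T (q j))) z •
      (EuclideanSpace.proj j : EuclideanSpace ℝ (Fin d) →L[ℝ] ℝ)) z := by
  have h : ∀ i ∈ Finset.univ, HasFDerivAt (fun z : EuclideanSpace ℝ (Fin d) => G T (q i) (z i))
      (G T (D T (q i)) (z i) • (EuclideanSpace.proj i : EuclideanSpace ℝ (Fin d) →L[ℝ] ℝ)) z := by
    intro i _
    have h1 := G_hasDerivAt T hT (q i) (z i)
    exact h1.comp_hasFDerivAt z (EuclideanSpace.proj i : EuclideanSpace ℝ (Fin d) →L[ℝ] ℝ).hasFDerivAt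
  refine (HasFDerivAt.finsetProd h).congr_fderiv ?_
  refine Finset.sum_congr rfl fun j _ => ?_
  rw [smul_smul]
  congr 1
  rw [K, ← Finset.mul_prod_erase Finset.univ _ (Finset.mem_univ j), Function.update_self, mul_comm]
  congr 1
  refine Finset.prod_congr rfl fun i hi => ?_
  rw [Function.update_of_ne (Finset.ne_of_mem_erase hi)]

lemma K_sub_hasFDerivAt {d : ℕ} (T : ℝ) (hT : 0 < T) (q : Fin d → ℝ[X])
    (x y : EuclideanSpace ℝ (Fin d)) (a : ℝ) :
    HasFDerivAt (fun x => K T q (x - y) * a)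
      (∑ j, (K T (Function.update q j (D T (q j))) (x - y) * a) •
      (EuclideanSpace.proj j : EuclideanSpace ℝ (Fin d) →L[ℝ] ℝ)) x := by
  have h1 : HasFDerivAt (fun x => K T q (x - y)) _ x :=
    (hasFDerivAt_comp_sub y).2 (K_hasFDerivAt T hT q (x - y))
  refine (h1.mul_const a).congr_fderiv ?_
  rw [Finset.smul_sum]
  refine Finset.sum_congr rfl fun j _ => ?_
  rw [smul_smul, mul_comm]

lemma K_mul_integrable {d : ℕ} (T : ℝ) (hT : 0 < T) (q : Fin d → ℝ[X])
    (u₀ : EuclideanSpace ℝ (Fin d) → ℝ) (hmem : MemLp u₀ 2 volume)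
    (x : EuclideanSpace ℝ (Fin d)) : Integrable (fun y => K T q (x - y) * u₀ y) := by
  obtain ⟨B, hB, h⟩ := K_bound T hT q
  refine ((exp_mul_integrable (8 * T) (by positivity) x u₀ hmem).norm.const_mul B).mono' ?_ ?_
  · exact ((K_continuous T q).comp (by fun_prop)).aestronglyMeasurable.mul hmem.1
  · refine Eventually.of_forall fun y => ?_
    rw [norm_mul, norm_mul, ← mul_assoc, Real.norm_eq_abs, Real.norm_eq_abs (Real.exp _),
      abs_of_pos (Real.exp_pos _)]
    exact mul_le_mul_of_nonneg_right (h _) (norm_nonneg _)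

/-- convolution with the kernel -/
def F {d : ℕ} (T : ℝ) (u₀ : EuclideanSpace ℝ (Fin d) → ℝ) (q : Fin d → ℝ[X])
    (x : EuclideanSpace ℝ (Fin d)) : ℝ :=
  (4 * Real.pi * T) ^ (-(d : ℝ) / 2) * ∫ y, K T q (x - y) * u₀ y

lemma heatSol_eq {d : ℕ} (T : ℝ) (u₀ : EuclideanSpace ℝ (Fin d) → ℝ) :
    heatSol d u₀ T = F T u₀ (fun _ => 1) := by
  ext x
  simp only [heatSol, F, K, G, eval_one, one_mul, exp_norm_sq]

set_option maxHeartbeats 1600000 in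
lemma pderiv_F {d : ℕ} (T : ℝ) (hT : 0 < T) (u₀ : EuclideanSpace ℝ (Fin d) → ℝ)
    (hmem : MemLp u₀ 2 volume) (q : Fin d → ℝ[X]) (j : Fin d) :
    pderiv' d j (F T u₀ q) = F T u₀ (Function.update q j (D T (q j))) := by
  ext x
  choose B hB h using fun j => K_bound T hT (Function.update q j (D T (q j)))
  let P : Fin d → (EuclideanSpace ℝ (Fin d) →L[ℝ] ℝ) := fun j => EuclideanSpace.proj j
  let F' : EuclideanSpace ℝ (Fin d) → EuclideanSpace ℝ (Fin d) →
      (EuclideanSpace ℝ (Fin d) →L[ℝ] ℝ) := fun x y =>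
    ∑ j, (K T (Function.update q j (D T (q j))) (x - y) * u₀ y) • P j
  let A : ℝ := (∑ j, B j * ‖P j‖) * Real.exp (1 / (8 * T))
  have hF'int : ∀ x, Integrable (F' x) := fun x =>
    integrable_finsetSum _ fun j _ => (K_mul_integrable T hT _ u₀ hmem x).smul_const (P j)
  have key : HasFDerivAt (fun x => ∫ y, K T q (x - y) * u₀ y) (∫ y, F' x y) x := by
    refine hasFDerivAt_integral_of_dominated_of_fderiv_le (s := Metric.ball x 1)
      (bound := fun y => A * ‖Real.exp (-‖x - y‖ ^ 2 / (16 * T)) * u₀ y‖)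
      (Metric.ball_mem_nhds x one_pos) ?_ ?_ ?_ ?_ ?_ ?_
    · exact Eventually.of_forall fun x => (K_mul_integrable T hT _ u₀ hmem x).1
    · exact K_mul_integrable T hT _ u₀ hmem x
    · exact (hF'int x).1
    · refine Eventually.of_forall fun y x' hx' => ?_
      have hexp : Real.exp (-‖x' - y‖ ^ 2 / (8 * T)) ≤
          Real.exp (1 / (8 * T)) * Real.exp (-‖x - y‖ ^ 2 / (16 * T)) := by
        rw [← Real.exp_add]
        refine Real.exp_le_exp.2 ?_
        have h1 : ‖x - y‖ ≤ 1 + ‖x' - y‖ := by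
          have h2 : ‖x - x'‖ < 1 := by rwa [Metric.mem_ball, dist_comm, dist_eq_norm] at hx'
          have := norm_add_le (x - x') (x' - y)
          rw [sub_add_sub_cancel] at this
          linarith
        have h3 : ‖x - y‖ ^ 2 ≤ 2 + 2 * ‖x' - y‖ ^ 2 := by
          nlinarith [norm_nonneg (x - y), norm_nonneg (x' - y), sq_nonneg (1 - ‖x' - y‖)]
        rw [← sub_nonneg]
        have : 1 / (8 * T) + -‖x - y‖ ^ 2 / (16 * T) - -‖x' - y‖ ^ 2 / (8 * T) =
          (2 + 2 * ‖x' - y‖ ^ 2 - ‖x - y‖ ^ 2) / (16 * T) := by field_simp; ring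
        rw [this]
        exact div_nonneg (by linarith) (by positivity)
      calc ‖F' x' y‖ ≤ ∑ j, ‖(K T (Function.update q j (D T (q j))) (x' - y) * u₀ y) • P j‖ :=
            norm_sum_le _ _
        _ ≤ ∑ j, (B j * ‖P j‖) * (Real.exp (1 / (8 * T)) *
              ‖Real.exp (-‖x - y‖ ^ 2 / (16 * T)) * u₀ y‖) := by
            refine Finset.sum_le_sum fun j _ => ?_
            rw [norm_smul, norm_mul, norm_mul, Real.norm_eq_abs, Real.norm_eq_abs (Real.exp _),
              abs_of_pos (Real.exp_pos _)]
            calc _ ≤ (B j * (Real.exp (1 / (8 * T)) * Real.exp (-‖x - y‖ ^ 2 / (16 * T))))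
                  * ‖u₀ y‖ * ‖P j‖ := by
                  gcongr
                  exact (h j _).trans (mul_le_mul_of_nonneg_left hexp (hB j))
              _ = _ := by ring
        _ = _ := by rw [← Finset.sum_mul]; simp only [A]; ring
    · exact (exp_mul_integrable (16 * T) (by positivity) x u₀ hmem).norm.const_mul A
    · refine Eventually.of_forall fun y x' _ => ?_
      exact K_sub_hasFDerivAt T hT q x' y (u₀ y)
  have key2 := (key.const_mul ((4 * Real.pi * T) ^ (-(d : ℝ) / 2))).fderiv
  unfold pderiv'
  change fderiv ℝ (fun x => (4 * Real.pi * T) ^ (-(d : ℝ) / 2) * ∫ y, K T q (x - y) * u₀ y) x _ = _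
  rw [key2, ContinuousLinearMap.smul_apply, ContinuousLinearMap.integral_apply (hF'int x), F,
    smul_eq_mul]
  congr 2
  ext y
  simp only [F', P, ContinuousLinearMap.sum_apply, ContinuousLinearMap.smul_apply,
    smul_eq_mul]
  rw [Finset.sum_eq_single j]
  · simp
  · intro i _ hi
    simp [hi]
  · simp

lemma pderiv_iter_F {d : ℕ} (T : ℝ) (hT : 0 < T) (u₀ : EuclideanSpace ℝ (Fin d) → ℝ)
    (hmem : MemLp u₀ 2 volume) (q : Fin d → ℝ[X]) (j : Fin d) (n : ℕ) :
    (pderiv' d j)^[n] (F T u₀ q) = F T u₀ (Function.update q j ((D T)^[n] (q j))) := by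
  induction n with
  | zero => simp
  | succ n ih =>
    rw [Function.iterate_succ_apply', ih, pderiv_F T hT u₀ hmem, Function.iterate_succ_apply']
    simp

lemma mderiv_F {d : ℕ} (T : ℝ) (hT : 0 < T) (u₀ : EuclideanSpace ℝ (Fin d) → ℝ)
    (hmem : MemLp u₀ 2 volume) (α : Fin d → ℕ) :
    mderiv d α (heatSol d u₀ T) = F T u₀ (fun i => H T (α i)) := by
  have key : ∀ l : List (Fin d), l.Nodup →
      (l.map (fun j => (pderiv' d j)^[α j])).foldr (· ∘ ·) id (F T u₀ (fun _ => 1)) =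
        F T u₀ (fun i => if i ∈ l then H T (α i) else 1) := by
    intro l
    induction l with
    | nil => intro _; simp
    | cons a l ih =>
      intro hl
      rw [List.nodup_cons] at hl
      rw [List.map_cons, List.foldr_cons, Function.comp_apply, ih hl.2,
        pderiv_iter_F T hT u₀ hmem]
      congr 1
      ext1 i
      by_cases hi : i = a
      · subst hi
        simp [hl.1, H]
      · simp [hi]
  rw [mderiv, heatSol_eq, key _ (List.nodup_finRange d)]
  simp

end HeatAux
namespace HeatAux
open Polynomial

lemma K_integrable {d : ℕ} (T : ℝ) (hT : 0 < T) (q : Fin d → ℝ[X]) : Integrable (K T q) :=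
  prod_integrable (fun i => G T (q i)) fun i => G_integrable T hT (q i)

lemma K_integral {d : ℕ} (T : ℝ) (q : Fin d → ℝ[X]) : ∫ z, K T q z = ∏ i, E T (q i) :=
  prod_integral (fun i => G T (q i))

lemma K_nonneg {d : ℕ} (T : ℝ) (q : Fin d → ℝ[X]) (h : ∀ i t, 0 ≤ (q i).eval t)
    (z : EuclideanSpace ℝ (Fin d)) : 0 ≤ K T q z :=
  Finset.prod_nonneg fun i _ => mul_nonneg (h i _) (Real.exp_pos _).le

lemma K_lintegral {d : ℕ} (T : ℝ) (hT : 0 < T) (q : Fin d → ℝ[X])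
    (h : ∀ i t, 0 ≤ (q i).eval t) :
    ∫⁻ z, ENNReal.ofReal (K T q z) = ENNReal.ofReal (∏ i, E T (q i)) := by
  rw [← K_integral, ofReal_integral_eq_lintegral_ofReal (K_integrable T hT q)
    (Eventually.of_forall (K_nonneg T q h))]

/-- first kernel -/
def q1 {d : ℕ} (T : ℝ) (β : Fin d → ℕ) : Fin d → ℝ[X] :=
  fun i => C ((1 + 2 * T) ^ β i) * V T ^ β i

/-- second kernel -/
def q2 {d : ℕ} (T : ℝ) (α : Fin d → ℕ) : Fin d → ℝ[X] := fun i => H T (α i) * H T (α i)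

lemma V_nonneg (T : ℝ) (hT : 0 < T) (t : ℝ) : 0 ≤ (V T).eval t := by simp [V]; positivity

lemma q1_nonneg {d : ℕ} (T : ℝ) (hT : 0 < T) (β : Fin d → ℕ) (i : Fin d) (t : ℝ) :
    0 ≤ (q1 T β i).eval t := by
  have := V_nonneg T hT t
  simp only [q1, eval_mul, eval_C, eval_pow]
  positivity

lemma q2_nonneg {d : ℕ} (T : ℝ) (α : Fin d → ℕ) (i : Fin d) (t : ℝ) :
    0 ≤ (q2 T α i).eval t := by
  simp only [q2, eval_mul]
  exact mul_self_nonneg _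

lemma kernel_le {d : ℕ} (T : ℝ) (hT : 0 < T) (α β : Fin d → ℕ) (z : EuclideanSpace ℝ (Fin d)) :
    (∏ i, (1 + |z i|) ^ β i) * |K T (fun i => H T (α i)) z| ≤
      √(K T (q1 T β) z) * √(K T (q2 T α) z) := by
  rw [← Real.sqrt_mul (K_nonneg T _ (q1_nonneg T hT β) z)]
  refine Real.le_sqrt_of_sq_le ?_
  rw [mul_pow, sq_abs]
  simp only [K]
  rw [← Finset.prod_pow, ← Finset.prod_pow, ← Finset.prod_mul_distrib, ← Finset.prod_mul_distrib]
  refine Finset.prod_le_prod (fun i _ => by positivity) fun i _ => ?_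
  simp only [G, q1, q2, eval_mul, eval_C, eval_pow]
  have h1 : (1 + |z i|) ^ 2 ≤ (1 + 2 * T) * (V T).eval (z i) := by
    simp only [V, eval_add, eval_one, eval_mul, eval_C, eval_pow, eval_X]
    rw [← sq_abs (z i), ← sub_nonneg]
    have : (1 + 2 * T) * (1 + 1 / (2 * T) * |z i| ^ 2) - (1 + |z i|) ^ 2
      = (2 * T - |z i|) ^ 2 / (2 * T) := by field_simp; ring
    rw [this]; positivity
  have h2 : ((1 + |z i|) ^ β i) ^ 2 ≤ (1 + 2 * T) ^ β i * (V T).eval (z i) ^ β i := by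
    rw [← pow_mul, mul_comm (β i) 2, pow_mul, ← mul_pow]
    exact pow_le_pow_left₀ (by positivity) h1 _
  have := mul_le_mul_of_nonneg_right h2
    (sq_nonneg ((H T (α i)).eval (z i) * Real.exp (-z i ^ 2 / (4 * T))))
  refine this.trans (le_of_eq ?_)
  ring

lemma monomial_le {d : ℕ} (β : Fin d → ℕ) (x y : EuclideanSpace ℝ (Fin d)) :
    |∏ i, (x i) ^ β i| ≤ (∏ i, (1 + |(x - y) i|) ^ β i) * (1 + ‖y‖) ^ (∑ i, β i) := by
  rw [Finset.abs_prod, ← Finset.prod_pow_eq_pow_sum, ← Finset.prod_mul_distrib]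
  refine Finset.prod_le_prod (fun i _ => abs_nonneg _) fun i _ => ?_
  rw [abs_pow, ← mul_pow]
  refine pow_le_pow_left₀ (abs_nonneg _) ?_ _
  have h1 : |y i| ≤ ‖y‖ := PiLp.norm_apply_le y i
  have h2 : |x i| ≤ |(x - y) i| + |y i| := by
    have := abs_add_le ((x - y) i) (y i)
    simpa using this
  nlinarith [abs_nonneg ((x - y) i), norm_nonneg y, mul_nonneg (abs_nonneg ((x - y) i)) (norm_nonneg y)]

lemma cs_sq {X : Type*} [MeasurableSpace X] (μ : Measure X) (f g : X → ℝ≥0∞)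
    (hf : AEMeasurable f μ) (hg : AEMeasurable g μ) :
    (∫⁻ a, f a * g a ∂μ) ^ 2 ≤ (∫⁻ a, f a ^ 2 ∂μ) * (∫⁻ a, g a ^ 2 ∂μ) := by
  have h := ENNReal.lintegral_mul_le_Lp_mul_Lq μ Real.HolderConjugate.two_two hf hg
  simp only [Pi.mul_apply] at h
  calc _ ≤ _ := pow_le_pow_left₀ (zero_le) h 2
    _ = _ := by
      rw [mul_pow, ← ENNReal.rpow_natCast, ← ENNReal.rpow_natCast, ← ENNReal.rpow_mul,
        ← ENNReal.rpow_mul]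
      norm_num

lemma pointwise {d : ℕ} (T : ℝ) (hT : 0 < T) (α β : Fin d → ℕ)
    (u₀ : EuclideanSpace ℝ (Fin d) → ℝ) (hmem : MemLp u₀ 2 volume)
    (x : EuclideanSpace ℝ (Fin d)) :
    ENNReal.ofReal ((∏ j, (x j) ^ (β j)) ^ 2 *
      (∫ y, K T (fun i => H T (α i)) (x - y) * u₀ y) ^ 2) ≤
    ENNReal.ofReal (∏ i, E T (q1 T β i)) *
      ∫⁻ y, ENNReal.ofReal (K T (q2 T α) (x - y)) *
        ENNReal.ofReal ((1 + ‖y‖) ^ (2 * ∑ j, β j) * (u₀ y) ^ 2) := by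
  set f : EuclideanSpace ℝ (Fin d) → ℝ≥0∞ := fun y => ENNReal.ofReal √(K T (q1 T β) (x - y))
  set g : EuclideanSpace ℝ (Fin d) → ℝ≥0∞ := fun y => ENNReal.ofReal
    (√(K T (q2 T α) (x - y)) * ((1 + ‖y‖) ^ (∑ j, β j) * |u₀ y|))
  have hc1 : Continuous fun y => √(K T (q1 T β) (x - y)) :=
    ((K_continuous T (q1 T β)).comp (by fun_prop : Continuous fun y => x - y)).sqrt
  have hc2 : Continuous fun y => √(K T (q2 T α) (x - y)) :=
    ((K_continuous T (q2 T α)).comp (by fun_prop : Continuous fun y => x - y)).sqrt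
  have hu : AEMeasurable u₀ volume := hmem.1.aemeasurable
  have hf : AEMeasurable f volume := hc1.measurable.ennreal_ofReal.aemeasurable
  have hg : AEMeasurable g volume := by
    refine AEMeasurable.ennreal_ofReal (hc2.measurable.aemeasurable.mul (AEMeasurable.mul ?_ ?_))
    · exact (by fun_prop : Continuous fun y : EuclideanSpace ℝ (Fin d) =>
        (1 + ‖y‖) ^ (∑ j, β j)).measurable.aemeasurable
    · simpa [Real.norm_eq_abs] using hu.norm
  have h1 : ENNReal.ofReal |(∏ j, (x j) ^ (β j)) *
      (∫ y, K T (fun i => H T (α i)) (x - y) * u₀ y)| ≤ ∫⁻ y, f y * g y := by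
    rw [← integral_const_mul, ← Real.norm_eq_abs, ofReal_norm_eq_enorm]
    refine (enorm_integral_le_lintegral_enorm _).trans (lintegral_mono fun y => ?_)
    simp only [f, g]
    rw [← ENNReal.ofReal_mul (Real.sqrt_nonneg _), ← ofReal_norm_eq_enorm]
    refine ENNReal.ofReal_le_ofReal ?_
    rw [Real.norm_eq_abs, abs_mul, abs_mul]
    have a1 := monomial_le β x y
    have a2 := kernel_le T hT α β (x - y)
    calc _ ≤ ((∏ i, (1 + |(x - y) i|) ^ β i) * (1 + ‖y‖) ^ (∑ i, β i)) *
          (|K T (fun i => H T (α i)) (x - y)| * |u₀ y|) := by gcongr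
      _ = ((∏ i, (1 + |(x - y) i|) ^ β i) * |K T (fun i => H T (α i)) (x - y)|) *
          ((1 + ‖y‖) ^ (∑ i, β i) * |u₀ y|) := by ring
      _ ≤ (√(K T (q1 T β) (x - y)) * √(K T (q2 T α) (x - y))) *
          ((1 + ‖y‖) ^ (∑ i, β i) * |u₀ y|) := by gcongr
      _ = _ := by ring
  have h2 := (pow_le_pow_left₀ (zero_le) h1 2).trans (cs_sq volume f g hf hg)
  rw [← ENNReal.ofReal_pow (abs_nonneg _), sq_abs, mul_pow] at h2
  refine h2.trans (le_of_eq ?_)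
  congr 1
  · rw [← K_lintegral T hT _ (q1_nonneg T hT β),
      ← lintegral_sub_left_eq_self (fun z => ENNReal.ofReal (K T (q1 T β) z)) x]
    refine lintegral_congr fun y => ?_
    simp only [f]
    rw [← ENNReal.ofReal_pow (Real.sqrt_nonneg _),
      Real.sq_sqrt (K_nonneg T _ (q1_nonneg T hT β) _)]
  · refine lintegral_congr fun y => ?_
    simp only [g]
    rw [← ENNReal.ofReal_pow (by positivity),
      ← ENNReal.ofReal_mul (K_nonneg T _ (q2_nonneg T α) _), mul_pow,
      Real.sq_sqrt (K_nonneg T _ (q2_nonneg T α) _), mul_pow, sq_abs, ← pow_mul, mul_comm _ 2]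

lemma E_prod_le {d : ℕ} (T : ℝ) (hT : 0 < T) (α β : Fin d → ℕ) :
    ((4 * Real.pi * T) ^ (-(d : ℝ) / 2)) ^ 2 * ((∏ i, E T (q1 T β i)) * ∏ i, E T (q2 T α i)) ≤
    (2 : ℝ) ^ ((∑ j, β j) + 1) *
      ((3 : ℝ) ^ (∑ j, β j) * (Nat.factorial ((∑ j, α j) + ∑ j, β j) : ℝ)) ^ 2 *
      (1 + T) ^ (∑ j, β j) / T ^ (∑ j, α j) := by
  have hp : 0 < 4 * Real.pi * T := by positivity
  have h1 : ∀ i, E T (q1 T β i) * E T (q2 T α i) ≤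
      (4 * Real.pi * T) * ((4 * (1 + T)) ^ β i * ((α i + β i).factorial : ℝ) * (1 / T) ^ α i) := by
    intro i
    have e1 : 0 ≤ E T (1 : ℝ[X]) := by rw [E_one T hT]; positivity
    rw [q1, q2, E_C_mul, E_H_sq T hT]
    calc _ ≤ (1 + 2 * T) ^ β i * (2 ^ β i * (β i).factorial * E T 1) *
          ((α i).factorial / (2 * T) ^ α i * E T 1) := by
          gcongr
          exact E_V T hT _
      _ = (E T 1) ^ 2 * ((2 * (1 + 2 * T)) ^ β i * ((α i).factorial * (β i).factorial) *
          (1 / (2 * T)) ^ α i) := by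
          rw [mul_pow 2 (1 + 2 * T), one_div, inv_pow]; ring
      _ ≤ _ := by
          rw [E_one T hT, Real.sq_sqrt hp.le]
          gcongr ?_ * (?_ ^ _ * ?_ * ?_ ^ _)
          · linarith
          · exact_mod_cast Nat.le_of_dvd (Nat.factorial_pos _)
              (Nat.factorial_mul_factorial_dvd_factorial_add _ _)
          · exact one_div_le_one_div_of_le hT (by linarith)
  have hc : ((4 * Real.pi * T) ^ (-(d : ℝ) / 2)) ^ 2 * (4 * Real.pi * T) ^ d = 1 := by
    rw [← Real.rpow_natCast, ← Real.rpow_natCast, ← Real.rpow_mul hp.le, ← Real.rpow_add hp]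
    have : -(d : ℝ) / 2 * ((2 : ℕ) : ℝ) + d = 0 := by push_cast; ring
    rw [this, Real.rpow_zero]
  have e1 : ∀ i, 0 ≤ E T (q1 T β i) := fun i => E_nonneg T hT _ (q1_nonneg T hT β i)
  have e2 : ∀ i, 0 ≤ E T (q2 T α i) := fun i => E_nonneg T hT _ (q2_nonneg T α i)
  have hN : (∏ i, ((α i + β i).factorial : ℝ)) ≤ (((∑ j, α j) + ∑ j, β j).factorial : ℝ) := by
    rw [← Finset.sum_add_distrib]
    exact_mod_cast Nat.le_of_dvd (Nat.factorial_pos _)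
      (Nat.prod_factorial_dvd_factorial_sum Finset.univ (fun i => α i + β i))
  set N : ℝ := (((∑ j, α j) + ∑ j, β j).factorial : ℝ) with hNdef
  have hN1 : 1 ≤ N := by
    rw [hNdef]; exact_mod_cast Nat.factorial_pos _
  set a := ∑ j, α j
  set b := ∑ j, β j
  calc _ ≤ ((4 * Real.pi * T) ^ (-(d : ℝ) / 2)) ^ 2 * ∏ i, ((4 * Real.pi * T) *
        ((4 * (1 + T)) ^ β i * ((α i + β i).factorial : ℝ) * (1 / T) ^ α i)) := by
        rw [← Finset.prod_mul_distrib]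
        refine mul_le_mul_of_nonneg_left ?_ (sq_nonneg _)
        exact Finset.prod_le_prod (fun i _ => mul_nonneg (e1 i) (e2 i)) fun i _ => h1 i
    _ = (4 * (1 + T)) ^ b * (∏ i, ((α i + β i).factorial : ℝ)) * (1 / T) ^ a := by
        rw [Finset.prod_mul_distrib, Finset.prod_const, Finset.card_univ, Fintype.card_fin,
          ← mul_assoc, hc, one_mul, Finset.prod_mul_distrib, Finset.prod_mul_distrib,
          Finset.prod_pow_eq_pow_sum, Finset.prod_pow_eq_pow_sum]
    _ ≤ (4 * (1 + T)) ^ b * N * (1 / T) ^ a := by gcongr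
    _ = (4 ^ b * N) * ((1 + T) ^ b * (1 / T) ^ a) := by rw [mul_pow]; ring
    _ ≤ (2 * (18 ^ b * N ^ 2)) * ((1 + T) ^ b * (1 / T) ^ a) := by
        gcongr ?_ * _
        have h4 : (4:ℝ) ^ b ≤ 18 ^ b := by gcongr; norm_num
        have h5 : N ≤ N ^ 2 := by nlinarith
        have h6 : (4:ℝ) ^ b * N ≤ 18 ^ b * N ^ 2 := by gcongr
        have h7 : (0:ℝ) ≤ 18 ^ b * N ^ 2 := by positivity
        linarith
    _ = _ := by
        rw [show (18 : ℝ) = 2 * (3 * 3) by norm_num, mul_pow, mul_pow, one_div, inv_pow, pow_succ]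
        ring

end HeatAux


/-- Weighted monomial-derivative estimate for the heat equation: for `T > 0` and
multi-indices `α, β ∈ ℕ^d`, any `u₀ ∈ L²(ℝ^d)` with `∫ (1+|x|)^{2|β|} |u₀|² dx < ∞`
satisfies `∫ |x^β D^α u(T,x)|² dx
  ≤ 2^{|β|+1} (3^{|β|} (|α|+|β|)!)² (1+T)^{|β|} T^{-|α|} ∫ (1+|x|)^{2|β|} |u₀|² dx`. -/
theorem statement16 (d : ℕ) (hd : 0 < d) (T : ℝ) (hT : 0 < T) (α β : Fin d → ℕ)
    (u₀ : EuclideanSpace ℝ (Fin d) → ℝ) (hmem : MemLp u₀ 2 volume)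
    (hint : Integrable (fun x => (1 + ‖x‖) ^ (2 * ∑ j, β j) * (u₀ x) ^ 2) volume) :
    ∫⁻ x, ENNReal.ofReal
        ((∏ j, (x j) ^ (β j)) ^ 2 * (mderiv d α (heatSol d u₀ T) x) ^ 2) ∂volume
      ≤ ENNReal.ofReal
          ((2 : ℝ) ^ ((∑ j, β j) + 1) *
            ((3 : ℝ) ^ (∑ j, β j) * (Nat.factorial ((∑ j, α j) + ∑ j, β j) : ℝ)) ^ 2 *
            (1 + T) ^ (∑ j, β j) / T ^ (∑ j, α j) *
            ∫ x, (1 + ‖x‖) ^ (2 * ∑ j, β j) * (u₀ x) ^ 2) := by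
  have hp : 0 < 4 * Real.pi * T := by positivity
  set c : ℝ := (4 * Real.pi * T) ^ (-(d : ℝ) / 2) with hc
  have hu : AEMeasurable u₀ volume := hmem.1.aemeasurable
  have hW : AEMeasurable (fun y : EuclideanSpace ℝ (Fin d) =>
      ENNReal.ofReal ((1 + ‖y‖) ^ (2 * ∑ j, β j) * (u₀ y) ^ 2)) volume :=
    hint.1.aemeasurable.ennreal_ofReal
  have hkm : Measurable (fun z : EuclideanSpace ℝ (Fin d) =>
      ENNReal.ofReal (HeatAux.K T (HeatAux.q2 T α) z)) :=
    (HeatAux.K_continuous T _).measurable.ennreal_ofReal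
  have e1 : 0 ≤ ∏ i, HeatAux.E T (HeatAux.q1 T β i) := Finset.prod_nonneg fun i _ =>
    HeatAux.E_nonneg T hT _ (HeatAux.q1_nonneg T hT β i)
  have e2 : 0 ≤ ∏ i, HeatAux.E T (HeatAux.q2 T α i) := Finset.prod_nonneg fun i _ =>
    HeatAux.E_nonneg T hT _ (HeatAux.q2_nonneg T α i)
  have hW0 : 0 ≤ ∫ x : EuclideanSpace ℝ (Fin d), (1 + ‖x‖) ^ (2 * ∑ j, β j) * (u₀ x) ^ 2 :=
    integral_nonneg fun x => by positivity
  rw [HeatAux.mderiv_F T hT u₀ hmem]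
  calc _ ≤ ∫⁻ x, ENNReal.ofReal (c ^ 2 * ∏ i, HeatAux.E T (HeatAux.q1 T β i)) *
        ∫⁻ y, ENNReal.ofReal (HeatAux.K T (HeatAux.q2 T α) (x - y)) *
          ENNReal.ofReal ((1 + ‖y‖) ^ (2 * ∑ j, β j) * (u₀ y) ^ 2) := by
        refine lintegral_mono fun x => ?_
        have := HeatAux.pointwise T hT α β u₀ hmem x
        rw [ENNReal.ofReal_mul (sq_nonneg c), mul_assoc]
        refine le_trans (le_of_eq ?_) (mul_le_mul_right this (ENNReal.ofReal (c ^ 2)))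
        rw [← ENNReal.ofReal_mul (sq_nonneg c)]
        congr 1
        simp only [HeatAux.F, ← hc]
        ring
    _ = ENNReal.ofReal (c ^ 2 * ∏ i, HeatAux.E T (HeatAux.q1 T β i)) *
        (ENNReal.ofReal (∏ i, HeatAux.E T (HeatAux.q2 T α i)) *
        ∫⁻ y : EuclideanSpace ℝ (Fin d),
          ENNReal.ofReal ((1 + ‖y‖) ^ (2 * ∑ j, β j) * (u₀ y) ^ 2)) := by
        rw [lintegral_const_mul' _ _ ENNReal.ofReal_ne_top]
        congr 1
        rw [lintegral_lintegral_swap]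
        · rw [← lintegral_const_mul' _ _ ENNReal.ofReal_ne_top]
          refine lintegral_congr fun y => ?_
          rw [lintegral_mul_const' _ _ ENNReal.ofReal_ne_top,
            lintegral_sub_right_eq_self
              (fun z => ENNReal.ofReal (HeatAux.K T (HeatAux.q2 T α) z)) y,
            HeatAux.K_lintegral T hT _ (HeatAux.q2_nonneg T α)]
        · exact (hkm.comp (measurable_fst.sub measurable_snd)).aemeasurable.mul hW.comp_snd
    _ = ENNReal.ofReal ((c ^ 2 * ((∏ i, HeatAux.E T (HeatAux.q1 T β i)) *
          ∏ i, HeatAux.E T (HeatAux.q2 T α i))) *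
          ∫ x : EuclideanSpace ℝ (Fin d), (1 + ‖x‖) ^ (2 * ∑ j, β j) * (u₀ x) ^ 2) := by
        rw [← ofReal_integral_eq_lintegral_ofReal hint
          (Eventually.of_forall fun x => by positivity), ← ENNReal.ofReal_mul e2,
          ← ENNReal.ofReal_mul (by positivity)]
        congr 1
        ring
    _ ≤ _ := ENNReal.ofReal_le_ofReal
        (mul_le_mul_of_nonneg_right (HeatAux.E_prod_le T hT α β) hW0)
end
end

section
/- Let N > 0 and let K_N : L²(ℝ^d) → ℓ²(ℤ^d) be the bounded linear operator defined by (K_N g)_n := −⟨g, f_{N,n}⟩ for g ∈ L²(ℝ^d) and n ∈ ℤ^d. Then the operator norm of K_N equals N^{−d/2}. -/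
open MeasureTheory Filter Topology Metric ENNReal NNReal

noncomputable section

open FourierTransform in
def bx (k : ℝ) : ℝ → ℂ :=
  Set.indicator (Set.Ioc (-(1/2) : ℝ) (1/2)) (fun t => Complex.exp (2 * Real.pi * Complex.I * k * t))

lemma bx_int (k : ℝ) : Integrable (bx k) := by
  unfold bx
  rw [integrable_indicator_iff measurableSet_Ioc]
  apply Continuous.integrableOn_Ioc
  fun_prop

lemma int_exp (a : ℝ) : ∫ t in (-(1/2) : ℝ)..(1/2), Complex.exp (-2 * Real.pi * Complex.I * a * t)
    = (sinc' (Real.pi * a) : ℂ) := by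
  by_cases ha : a = 0
  · subst ha
    simp [sinc']
    norm_num
  · have hpi := Real.pi_ne_zero
    have hc : (-2 * Real.pi * Complex.I * a : ℂ) ≠ 0 := by
      simp [ha, Real.pi_ne_zero]
    rw [integral_exp_mul_complex hc]
    have : Real.pi * a ≠ 0 := mul_ne_zero hpi ha
    simp only [sinc', this, if_false]
    push_cast
    have hpi' : (Real.pi : ℂ) ≠ 0 := by exact_mod_cast hpi
    have ha' : (a : ℂ) ≠ 0 := by exact_mod_cast ha
    rw [Complex.sin]
    have e1 : (-2 * Real.pi * Complex.I * a * (1 / 2) : ℂ) = -(Real.pi * a) * Complex.I := by ring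
    have e2 : (-2 * Real.pi * Complex.I * a * (-(1 / 2)) : ℂ) = (Real.pi * a) * Complex.I := by ring
    rw [e1, e2]
    field_simp
    ring_nf
    simp only [Complex.I_sq]
    ring

open FourierTransform in
lemma fourier_bx (k w : ℝ) : 𝓕 (bx k) w = (sinc' (Real.pi * (w - k)) : ℂ) := by
  rw [Real.fourier_real_eq_integral_exp_smul, ← int_exp,
    intervalIntegral.integral_of_le (by norm_num), ← integral_indicator measurableSet_Ioc]
  congr 1
  ext t
  unfold bx
  by_cases ht : t ∈ Set.Ioc (-(1/2) : ℝ) (1/2)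
  · simp only [Set.indicator_of_mem ht, smul_eq_mul, ← Complex.exp_add]
    congr 1
    push_cast
    ring
  · simp only [Set.indicator_of_notMem ht, smul_zero]

lemma sinc_eq : sinc' = Real.sinc := rfl

lemma sinc_sq_int (a : ℝ) : Integrable (fun x : ℝ => sinc' (Real.pi * (x - a)) ^ 2) := by
  have h := (integrable_inv_one_add_sq.comp_sub_right a).const_mul 2
  refine h.mono' ?_ ?_
  · rw [sinc_eq]
    exact (Continuous.pow (Real.continuous_sinc.comp (by fun_prop)) 2).aestronglyMeasurable
  · refine Filter.Eventually.of_forall fun x => ?_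
    rw [Real.norm_of_nonneg (sq_nonneg _), ← div_eq_mul_inv, le_div_iff₀ (by positivity)]
    set y := x - a
    have h1 : sinc' (Real.pi * y) ^ 2 ≤ 1 := by
      rw [sinc_eq, sq_le_one_iff_abs_le_one]; exact Real.abs_sinc_le_one _
    have h2 : sinc' (Real.pi * y) ^ 2 * y ^ 2 ≤ 1 := by
      by_cases hy : y = 0
      · simp [hy]
      · have : Real.pi * y ≠ 0 := mul_ne_zero Real.pi_ne_zero hy
        simp only [sinc', this, if_false]
        have hs := Real.sin_sq_le_one (Real.pi * y)
        have hp : 1 ≤ Real.pi ^ 2 := by nlinarith [Real.pi_gt_three]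
        have : (Real.sin (Real.pi * y) / (Real.pi * y)) ^ 2 * y ^ 2
            = Real.sin (Real.pi * y) ^ 2 / Real.pi ^ 2 := by
          field_simp
        rw [this, div_le_one (by positivity)]
        linarith
    nlinarith

lemma sinc_memLp (a : ℝ) : MemLp (fun x : ℝ => sinc' (Real.pi * (x - a))) 2 := by
  rw [memLp_two_iff_integrable_sq]
  · exact sinc_sq_int a
  · rw [sinc_eq]
    exact (Real.continuous_sinc.comp (by fun_prop)).aestronglyMeasurable

lemma sinc_mul_int (a b : ℝ) :
    Integrable (fun x : ℝ => sinc' (Real.pi * (x - a)) * sinc' (Real.pi * (x - b))) :=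
  (sinc_memLp a).integrable_mul (sinc_memLp b)

lemma bx_norm (k t : ℝ) : ‖bx k t‖ ≤ Set.indicator (Set.Ioc (-(1/2) : ℝ) (1/2)) (fun _ => (1:ℝ)) t := by
  unfold bx
  by_cases ht : t ∈ Set.Ioc (-(1/2) : ℝ) (1/2)
  · simp only [Set.indicator_of_mem ht]
    rw [show (2 * Real.pi * Complex.I * k * t : ℂ) = ((2 * Real.pi * k * t : ℝ) : ℂ) * Complex.I by
      push_cast; ring, Complex.norm_exp_ofReal_mul_I]
  · rw [Set.indicator_of_notMem ht, Set.indicator_of_notMem ht, norm_zero]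

lemma bx_norm1 (k t : ℝ) : ‖bx k t‖ ≤ 1 :=
  (bx_norm k t).trans (Set.indicator_le_self' (fun _ _ => zero_le_one) t)

lemma bx_cont (k t : ℝ) (h1 : t ≠ 1/2) (h2 : t ≠ -(1/2)) : ContinuousAt (bx k) t := by
  unfold bx
  rcases lt_or_ge t (-(1/2)) with h | h
  · have : (fun _ => (0:ℂ)) =ᶠ[𝓝 t] (Set.indicator (Set.Ioc (-(1/2) : ℝ) (1/2)) (fun t : ℝ => Complex.exp (2 * Real.pi * Complex.I * k * t))) := by
      filter_upwards [Iio_mem_nhds h] with s hs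
      rw [Set.indicator_of_notMem]
      intro hh
      exact absurd hh.1 (not_lt.2 (le_of_lt hs))
    exact continuousAt_const.congr this
  rcases lt_or_ge (1/2) t with h' | h'
  · have : (fun _ => (0:ℂ)) =ᶠ[𝓝 t] (Set.indicator (Set.Ioc (-(1/2) : ℝ) (1/2)) (fun t : ℝ => Complex.exp (2 * Real.pi * Complex.I * k * t))) := by
      filter_upwards [Ioi_mem_nhds h'] with s hs
      rw [Set.indicator_of_notMem]
      intro hh
      exact absurd hh.2 (not_le.2 hs)
    exact continuousAt_const.congr this
  · have : (fun t : ℝ => Complex.exp (2 * Real.pi * Complex.I * k * t)) =ᶠ[𝓝 t] (Set.indicator (Set.Ioc (-(1/2) : ℝ) (1/2)) (fun t : ℝ => Complex.exp (2 * Real.pi * Complex.I * k * t))) := by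
      filter_upwards [Ioo_mem_nhds (lt_of_le_of_ne h h2.symm) (lt_of_le_of_ne h' h1)] with s hs
      have hs2 : s ∈ Set.Ioc (-(1/2) : ℝ) (1/2) := ⟨hs.1, hs.2.le⟩
      rw [Set.indicator_of_mem hs2]
    refine ContinuousAt.congr ?_ this
    fun_prop

open FourierTransform Convolution in
lemma sinc_orth (a b : ℝ) : ∫ x : ℝ, sinc' (Real.pi * (x - a)) * sinc' (Real.pi * (x - b))
    = sinc' (Real.pi * (b - a)) := by
  set h := (bx a) ⋆[ContinuousLinearMap.mul ℂ ℂ] (bx b) with hh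
  have hF : 𝓕 h = fun w => ((sinc' (Real.pi * (w - a)) * sinc' (Real.pi * (w - b)) : ℝ) : ℂ) := by
    ext w
    rw [hh, Real.fourier_mul_convolution_eq (bx_int a) (bx_int b), fourier_bx, fourier_bx]
    push_cast; rfl
  have hint : Integrable h := (bx_int a).integrable_convolution _ (bx_int b)
  have hFint : Integrable (𝓕 h) := by
    rw [hF]; exact (sinc_mul_int a b).ofReal
  have happ : ∀ x, h x = ∫ t, bx a t * bx b (x - t) := fun x => rfl
  have hc : ContinuousAt h 0 := by
    have : ContinuousAt (fun x => ∫ t, bx a t * bx b (x - t)) 0 := by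
      apply continuousAt_of_dominated (bound := fun t => ‖bx a t‖)
      · refine Filter.Eventually.of_forall fun x => ?_
        exact (bx_int a).aestronglyMeasurable.mul ((bx_int b).comp_sub_left x).aestronglyMeasurable
      · refine Filter.Eventually.of_forall fun x => Filter.Eventually.of_forall fun t => ?_
        rw [norm_mul]
        exact mul_le_of_le_one_right (norm_nonneg _) (bx_norm1 _ _)
      · exact (bx_int a).norm
      · have hne : ∀ᵐ t : ℝ, t ≠ 1/2 := Measure.ae_ne _ _
        have hne2 : ∀ᵐ t : ℝ, t ≠ -(1/2) := Measure.ae_ne _ _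
        filter_upwards [hne, hne2] with t h1 h2
        refine continuousAt_const.mul ?_
        have : ContinuousAt (bx b) (0 - t) := bx_cont b _ (fun h => h2 (by linarith)) (fun h => h1 (by linarith))
        exact ContinuousAt.comp (f := fun x : ℝ => x - t) this (by fun_prop)
    exact this
  have key := hint.fourierInv_fourier_eq hFint hc
  rw [Real.fourierInv_eq, hF, happ] at key
  simp only [inner_zero_right, AddChar.map_zero_eq_one, one_smul, zero_sub] at key
  rw [integral_complex_ofReal] at key
  have e : ∫ t, bx a t * bx b (-t) = (sinc' (Real.pi * (b - a)) : ℂ) := by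
    rw [← int_exp, intervalIntegral.integral_of_le (by norm_num), ← integral_indicator measurableSet_Ioc]
    apply integral_congr_ae
    have hne : ∀ᵐ t : ℝ, t ≠ 1/2 := Measure.ae_ne _ _
    filter_upwards [hne] with t h1
    unfold bx
    by_cases ht : t ∈ Set.Ioc (-(1/2) : ℝ) (1/2)
    · have ht' : -t ∈ Set.Ioc (-(1/2) : ℝ) (1/2) :=
        ⟨by have := lt_of_le_of_ne ht.2 h1; linarith, by linarith [ht.1]⟩
      rw [Set.indicator_of_mem ht, Set.indicator_of_mem ht', Set.indicator_of_mem ht, ← Complex.exp_add]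
      congr 1
      push_cast
      ring
    · rw [Set.indicator_of_notMem ht, Set.indicator_of_notMem ht, zero_mul]
  rw [e] at key
  exact_mod_cast key

lemma sinc_int (m : ℤ) : sinc' (Real.pi * m) = if m = 0 then 1 else 0 := by
  by_cases h : m = 0
  · simp [h, sinc']
  · simp [sinc', h, Real.pi_ne_zero, mul_comm Real.pi, Real.sin_int_mul_pi]

lemma one_d (N : ℝ) (hN : 0 < N) (n m : ℤ) :
    Integrable (fun x : ℝ => sinc' (Real.pi * (N * x - n)) * sinc' (Real.pi * (N * x - m))) ∧
    ∫ x : ℝ, sinc' (Real.pi * (N * x - n)) * sinc' (Real.pi * (N * x - m))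
    = if n = m then N⁻¹ else 0 := by
  constructor
  · exact (sinc_mul_int n m).comp_mul_left' hN.ne'
  · rw [Measure.integral_comp_mul_left (fun x => sinc' (Real.pi * (x - n)) * sinc' (Real.pi * (x - m))) N,
      sinc_orth, ← Int.cast_sub, sinc_int, abs_of_pos (inv_pos.2 hN)]
    by_cases h : n = m
    · simp [h]
    · simp [h, sub_eq_zero, Ne.symm h]

lemma fN_mul (d : ℕ) (N : ℝ) (hN : 0 < N) (n m : Fin d → ℤ) :
    Integrable (fun x => fN d N n x * fN d N m x) ∧
    ∫ x, fN d N n x * fN d N m x = if n = m then (N ^ d)⁻¹ else 0 := by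
  have hp := (PiLp.volume_preserving_toLp (Fin d))
  have hemb := (MeasurableEquiv.toLp 2 (Fin d → ℝ)).measurableEmbedding
  have e : ∀ y : Fin d → ℝ, fN d N n (WithLp.toLp 2 y) * fN d N m (WithLp.toLp 2 y)
    = ∏ j, (sinc' (Real.pi * (N * y j - n j)) * sinc' (Real.pi * (N * y j - m j))) := by
    intro y
    simp [fN, Finset.prod_mul_distrib]
  constructor
  · rw [← hp.integrable_comp_emb hemb]
    have := Integrable.fintype_prod (ι := Fin d) (μ := fun _ => (volume : Measure ℝ))
      (f := fun j (x : ℝ) => sinc' (Real.pi * (N * x - n j)) * sinc' (Real.pi * (N * x - m j)))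
      (fun j => (one_d N hN (n j) (m j)).1)
    exact this.congr (Filter.Eventually.of_forall fun y => (e y).symm)
  · rw [← hp.integral_comp hemb]
    simp_rw [e]
    rw [integral_fintype_prod_volume_eq_prod
      (fun j (x : ℝ) => sinc' (Real.pi * (N * x - n j)) * sinc' (Real.pi * (N * x - m j)))]
    simp_rw [(one_d N hN _ _).2]
    by_cases h : n = m
    · simp [h]
    · rw [if_neg h]
      obtain ⟨j, hj⟩ := Function.ne_iff.1 h
      exact Finset.prod_eq_zero (Finset.mem_univ j) (by simp [hj])

lemma fN_memLp (d : ℕ) (N : ℝ) (hN : 0 < N) (n : Fin d → ℤ) : MemLp (fN d N n) 2 := by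
  rw [memLp_two_iff_integrable_sq]
  · simpa [sq] using (fN_mul d N hN n n).1
  · refine Continuous.aestronglyMeasurable ?_
    unfold fN
    rw [sinc_eq]
    refine continuous_finset_prod _ fun j _ => Real.continuous_sinc.comp (by fun_prop)

/-- The feedback law `K_N : L²(ℝ^d) → ℓ²(ℤ^d)`, `(K_N g)_n = -⟨g, f_{N,n}⟩`, is a bounded
linear operator of operator norm exactly `N^{-d/2}`. -/
theorem statement17 (d : ℕ) (hd : 0 < d) (N : ℝ) (hN : 0 < N)
    (K : Lp ℝ 2 (volume : Measure (EuclideanSpace ℝ (Fin d))) →L[ℝ]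
          lp (fun _ : Fin d → ℤ => ℝ) 2)
    (hK : ∀ g : Lp ℝ 2 (volume : Measure (EuclideanSpace ℝ (Fin d))),
      ∀ n : Fin d → ℤ, K g n = -∫ x, g x * fN d N n x) :
    ‖K‖ = N ^ (-(d : ℝ) / 2) := by
  have hd' := hd
  set F : (Fin d → ℤ) → Lp ℝ 2 (volume : Measure (EuclideanSpace ℝ (Fin d))) :=
    fun n => (fN_memLp d N hN n).toLp _ with hF
  have hin : ∀ g n, inner ℝ (F n) g = ∫ x, g x * fN d N n x := by
    intro g n
    rw [L2.inner_def]
    apply integral_congr_ae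
    filter_upwards [(fN_memLp d N hN n).coeFn_toLp] with x hx
    simp only [hF, hx]
    simp
  have hFF : ∀ n m, inner ℝ (F n) (F m) = if n = m then (N ^ d)⁻¹ else 0 := by
    intro n m
    rw [hin, ← (fN_mul d N hN n m).2]
    apply integral_congr_ae
    filter_upwards [(fN_memLp d N hN m).coeFn_toLp] with x hx
    simp only [hF, hx]
    ring
  set c : ℝ := N ^ (-(d : ℝ) / 2) with hc
  have hc0 : 0 < c := Real.rpow_pos_of_pos hN _
  have hc2 : c ^ 2 = (N ^ d)⁻¹ := by
    rw [hc, ← Real.rpow_natCast, ← Real.rpow_mul hN.le, ← Real.rpow_natCast, ← Real.rpow_neg hN.le]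
    congr 1
    push_cast
    ring
  have horth : Orthonormal ℝ (fun n => c⁻¹ • F n) := by
    rw [orthonormal_iff_ite]
    intro n m
    rw [real_inner_smul_left, real_inner_smul_right, hFF, ← hc2]
    split_ifs
    · field_simp
    · simp
  have hKg : ∀ g n, K g n = -(c * inner ℝ (c⁻¹ • F n) g) := by
    intro g n
    rw [hK, ← hin, real_inner_smul_left]
    field_simp
  apply le_antisymm
  · refine K.opNorm_le_bound hc0.le fun g => ?_
    refine lp.norm_le_of_forall_sum_le (by norm_num) (by positivity) fun s => ?_
    have hb := horth.sum_inner_products_le g (s := s)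
    simp only [hKg, ENNReal.toReal_ofNat, Real.rpow_two, norm_neg, norm_mul, mul_pow, ← Finset.mul_sum]
    rw [Real.norm_of_nonneg hc0.le]
    gcongr
  · set g := c⁻¹ • F 0 with hg
    have hg1 : ‖g‖ = 1 := horth.1 0
    have h1 : ‖K g 0‖ = c := by
      rw [hKg, ← hg, real_inner_self_eq_norm_sq, hg1]
      simp [abs_of_pos hc0]
    calc c = ‖K g 0‖ := h1.symm
      _ ≤ ‖K g‖ := lp.norm_apply_le_norm (by norm_num) _ _
      _ ≤ ‖K‖ * ‖g‖ := K.le_opNorm g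
      _ = ‖K‖ := by rw [hg1, mul_one]
end
end
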